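/- arXiv:2201.12783 — 4 statements merged into one kernel-verified Lean document; each statement's English description precedes it below -/
import Mathlib

section
/- Let g ≥ 2 be a fixed integer. Then the number V_g(x) of integers n ≤ x representable as n = p + g^(m₁²) + g^(m₂²) with p prime and m₁, m₂ natural numbers satisfies V_g(x) ≥ c_g·x for some constant c_g > 0 (depending only on g) and all sufficiently large x. -/
/-!
The proof is Romanoff's second-moment argument. Let `s` be the set of primes up to `x / 2` and `t`
the set of values `g ^ m₁ ^ 2 + g ^ m₂ ^ 2` with `m₁ ≤ M / 2 < m₂ ≤ M`, where `M ≍ √(log x)` is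
chosen with `g ^ M ^ 2 ≤ x / 4`. Different pairs `(m₁, m₂)` give different values, so
`#s * #t ≍ (x / log x) * M ^ 2 ≍ x` by Chebyshev's bounds. Every element of `s + t` is represented
and at most `x`, and Cauchy–Schwarz in the form `#s ^ 2 * #t ^ 2 ≤ #(s + t) * E[s, t]` reduces the
theorem to a bound `E[s, t] ≪ x` for the additive energy (`addEnergy_primes_le`).

The diagonal contributes `#s * #t ≪ x`. Off the diagonal the energy counts prime pairs `n, n + h`
with `h` a difference of two values. An upper bound sieve (`sieve_bound`, `prime_pairs_asymp`) gives
`≪ (x / log ^ 2 x) * ∏_{p ∣ 2h} (1 + 1/p) ^ 2` such pairs up to `x`. The sieve is Selberg's, in a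
dual form: for a prime `p ∤ 2h` the function `psi h p` is `-1` on the residue classes
`n (n + h) ≡ 0` and `2 / (p - 2)` elsewhere, so it has mean zero, and products of such functions over
different sets of primes are orthogonal over a period. Their sum over all squarefree products up to
`D` is constant on the sifted set, and computing its mean square bounds that set.

It remains to see that the singular factor `∏_{p ∣ 2h} (1 + 1/p) ^ 2` is bounded on average over `h`.
It is `≪ 1 + ∑_{p ∣ h, p ≤ log x} p ^ (-35/36)` (`HH_sq_le`): large primes contribute a bounded
factor, and the primorial bound `∏_{p ≤ n} p ≤ 4 ^ n` supplies a weak Mertens estimate for the small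
ones. Exchanging sums, one needs the number of pairs of values congruent modulo `p`. Let `e` be the
order of `g` modulo `p`, and suppose `p ≤ e ^ 3`. Then `g ^ m ^ 2 ≡ c` fixes `m ^ 2` modulo `e`,
hence `m` up to sign modulo some divisor `a ≥ √e` of `e`; with the divisor bound `d(e) ≪ e ^ (1/3)`
this leaves `≪ M * p ^ (-1/18)` values `m ≤ M` (`card_pow_sq_le`), and
`∑ p ^ (-35/36 - 1/18) < ∞`. Primes with `p > e ^ 3` divide `g ^ e - 1`, so at most
`e * log₂ g` of them share an order `e`, and `∑ p ^ (-35/36)` over them converges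
(`sum_bad_le`).
-/

open scoped Classical

namespace Romanoff

open Filter

/-! ### Selberg's sieve in dual form -/

/-- The Chinese remainder theorem for averages of periodic functions. -/
lemma sum_range_mul_of_coprime {a b : ℕ} (ha : 0 < a) (hb : 0 < b) (hab : Nat.Coprime a b)
    {f k : ℕ → ℝ} (hf : Function.Periodic f a) (hk : Function.Periodic k b) :
    ∑ n ∈ Finset.range (a * b), f n * k n
      = (∑ n ∈ Finset.range a, f n) * ∑ n ∈ Finset.range b, k n := by
  rw [Finset.sum_mul_sum, ← Finset.sum_product']
  refine Finset.sum_bij (fun n _ => (n % a, n % b)) ?_ ?_ ?_ ?_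
  · intro n _
    simp [Nat.mod_lt _ ha, Nat.mod_lt _ hb]
  · intro n hn m hm h
    simp only [Prod.mk.injEq] at h
    have h1 : n ≡ m [MOD a * b] := (Nat.modEq_and_modEq_iff_modEq_mul hab).1 ⟨h.1, h.2⟩
    exact h1.eq_of_lt_of_lt (Finset.mem_range.1 hn) (Finset.mem_range.1 hm)
  · rintro ⟨u, v⟩ huv
    simp only [Finset.mem_product, Finset.mem_range] at huv
    refine ⟨Nat.chineseRemainder hab u v, ?_, ?_⟩
    · exact Finset.mem_range.2 (Nat.chineseRemainder_lt_mul hab u v ha.ne' hb.ne')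
    · have := (Nat.chineseRemainder hab u v).2
      ext
      · exact Eq.trans this.1 (Nat.mod_eq_of_lt huv.1)
      · exact Eq.trans this.2 (Nat.mod_eq_of_lt huv.2)
  · intro n _
    simp only [hf.map_mod_nat, hk.map_mod_nat]

lemma periodic_prod (U : Finset ℕ) (F : ℕ → ℕ → ℝ)
    (hF : ∀ p ∈ U, Function.Periodic (F p) p) :
    Function.Periodic (fun n => ∏ p ∈ U, F p n) (∏ p ∈ U, p) := by
  intro n
  refine Finset.prod_congr rfl fun p hp => ?_
  obtain ⟨c, hc⟩ := Finset.dvd_prod_of_mem (fun p : ℕ => p) hp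
  rw [hc, mul_comm]
  exact (hF p hp).nat_mul c n

lemma sum_range_prod (U : Finset ℕ) (hU : ∀ p ∈ U, p.Prime) (F : ℕ → ℕ → ℝ)
    (hF : ∀ p ∈ U, Function.Periodic (F p) p) :
    ∑ n ∈ Finset.range (∏ p ∈ U, p), ∏ p ∈ U, F p n
      = ∏ p ∈ U, ∑ n ∈ Finset.range p, F p n := by
  induction U using Finset.induction_on with
  | empty => simp
  | insert q U hq ih =>
    have hU' : ∀ p ∈ U, p.Prime := fun p hp => hU p (Finset.mem_insert_of_mem hp)
    have hF' : ∀ p ∈ U, Function.Periodic (F p) p := fun p hp => hF p (Finset.mem_insert_of_mem hp)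
    have hqp := hU q (Finset.mem_insert_self _ _)
    simp only [Finset.prod_insert hq]
    rw [← ih hU' hF']
    refine sum_range_mul_of_coprime hqp.pos (Finset.prod_pos fun p hp => (hU' p hp).pos) ?_
      (hF q (Finset.mem_insert_self _ _)) (periodic_prod U F hF')
    refine Nat.Coprime.prod_right fun p hp => (Nat.coprime_primes hqp (hU' p hp)).2 ?_
    rintro rfl
    exact hq hp

/-- The sum of a bounded periodic function over an initial segment that need not consist of full
periods; `S` is the mean. -/
lemma sum_range_le_of_periodic {q : ℕ} (hq : 0 < q) {f : ℕ → ℝ} (hf : Function.Periodic f q)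
    {B S : ℝ} (hB : ∀ n, |f n| ≤ B) (hS : ∑ n ∈ Finset.range q, f n = q * S) (hS0 : 0 ≤ S)
    (N : ℕ) : ∑ n ∈ Finset.range N, f n ≤ N * S + q * B := by
  induction N using Nat.strong_induction_on with
  | _ N ih =>
    have hB0 : 0 ≤ B := (abs_nonneg _).trans (hB 0)
    rcases lt_or_ge N q with h | h
    · calc ∑ n ∈ Finset.range N, f n ≤ ∑ n ∈ Finset.range N, B :=
            Finset.sum_le_sum fun n _ => (le_abs_self _).trans (hB n)
        _ = N * B := by simp
        _ ≤ q * B := by gcongr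
        _ ≤ _ := by nlinarith [show (0:ℝ) ≤ N from Nat.cast_nonneg N, mul_nonneg (Nat.cast_nonneg (α := ℝ) N) hS0]
    · obtain ⟨k, rfl⟩ := Nat.exists_eq_add_of_le h
      rw [Finset.sum_range_add, hS]
      have h1 : ∑ x ∈ Finset.range k, f (q + x) = ∑ x ∈ Finset.range k, f x :=
        Finset.sum_congr rfl fun x _ => by rw [add_comm]; exact hf x
      have := ih k (by omega)
      rw [h1]; push_cast; linarith

/-- The local sieve function attached to the prime `p` and the shift `h`. For `p ∤ 2h` the values are
balanced so that its mean over a period is zero. -/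
noncomputable def psi (h p n : ℕ) : ℝ := if p ∣ n * (n + h) then -1 else 2 / ((p : ℝ) - 2)

lemma psi_periodic (h p : ℕ) : Function.Periodic (psi h p) p := by
  intro n
  have : p ∣ (n + p) * (n + p + h) ↔ p ∣ n * (n + h) := by
    have e : (n + p) * (n + p + h) = n * (n + h) + p * (2 * n + p + h) := by ring
    rw [e]
    exact (Nat.dvd_add_iff_left (Dvd.intro _ rfl)).symm
  simp only [psi, this]

lemma card_filter_dvd {h p : ℕ} (hp : p.Prime) (hph : ¬ p ∣ h) :
    ((Finset.range p).filter (fun n => p ∣ n * (n + h))).card = 2 := by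
  have hlt : h % p < p := Nat.mod_lt _ hp.pos
  have hpos : 0 < h % p := Nat.pos_of_ne_zero fun e => hph (Nat.dvd_of_mod_eq_zero e)
  have : (Finset.range p).filter (fun n => p ∣ n * (n + h)) = {0, p - h % p} := by
    ext n
    simp only [Finset.mem_filter, Finset.mem_range, Finset.mem_insert, Finset.mem_singleton,
      hp.dvd_mul]
    have key : p ∣ n + h ↔ p ∣ n + h % p := by
      rw [Nat.dvd_iff_mod_eq_zero, Nat.dvd_iff_mod_eq_zero, Nat.add_mod_mod]
    constructor
    · rintro ⟨hn, h1 | h1⟩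
      · left; exact Nat.eq_zero_of_dvd_of_lt h1 hn
      · right
        rw [key] at h1
        obtain ⟨c, hc⟩ := h1
        have : c = 1 := by
          have c1 : c < 2 := by
            by_contra hcc
            have : p * 2 ≤ p * c := Nat.mul_le_mul_left _ (by omega)
            omega
          have c0 : c ≠ 0 := by rintro rfl; omega
          omega
        subst this; omega
    · rintro (rfl | rfl)
      · exact ⟨hp.pos, Or.inl (dvd_zero _)⟩
      · refine ⟨by omega, Or.inr ?_⟩
        rw [key, Nat.sub_add_cancel hlt.le]
  rw [this, Finset.card_pair (by omega)]

lemma sum_psi {h p : ℕ} (hp : p.Prime) (h2 : 3 ≤ p) (hph : ¬ p ∣ h) :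
    ∑ n ∈ Finset.range p, psi h p n = 0 ∧
      ∑ n ∈ Finset.range p, psi h p n * psi h p n = p * (2 / ((p : ℝ) - 2)) := by
  have hc := card_filter_dvd hp hph
  have hc' : (((Finset.range p).filter (fun n => ¬ p ∣ n * (n + h))).card : ℝ) = p - 2 := by
    have := Finset.card_filter_add_card_filter_not (s := Finset.range p) (fun n => p ∣ n * (n + h))
    rw [hc, Finset.card_range] at this
    have : (2 : ℝ) + (((Finset.range p).filter (fun n => ¬ p ∣ n * (n + h))).card : ℝ) = p := by
      exact_mod_cast this
    linarith
  have hp2 : (p : ℝ) - 2 ≠ 0 := by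
    have : (3 : ℝ) ≤ p := by exact_mod_cast h2
    linarith
  have e2 : ∀ n, psi h p n * psi h p n
      = if p ∣ n * (n + h) then 1 else (2 / ((p : ℝ) - 2)) ^ 2 := by
    intro n; simp only [psi]; split_ifs <;> ring
  constructor
  · simp only [psi, Finset.sum_ite, Finset.sum_const, nsmul_eq_mul, hc, hc']
    field_simp; push_cast; ring
  · simp only [e2, Finset.sum_ite, Finset.sum_const, nsmul_eq_mul, hc, hc']
    field_simp; push_cast; ring

lemma abs_psi_le {h p : ℕ} (h2 : 3 ≤ p) (n : ℕ) : |psi h p n| ≤ p := by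
  have : (3 : ℝ) ≤ p := by exact_mod_cast h2
  unfold psi
  split_ifs
  · rw [abs_neg, abs_one]; linarith
  · rw [abs_of_nonneg (div_nonneg (by norm_num) (by linarith))]
    rw [div_le_iff₀ (by linarith)]; nlinarith

/-- The squarefree numbers composed of primes from `P` and at most `D`, encoded as sets of primes. -/
noncomputable def sqf (P : Finset ℕ) (D : ℕ) : Finset (Finset ℕ) :=
  P.powerset.filter (fun T => ∏ p ∈ T, p ≤ D)

lemma mem_sqf {P : Finset ℕ} {D : ℕ} {T : Finset ℕ} :
    T ∈ sqf P D ↔ T ⊆ P ∧ ∏ p ∈ T, p ≤ D := by simp [sqf]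

lemma prod_injOn {P : Finset ℕ} (hP : ∀ p ∈ P, p.Prime) {T U : Finset ℕ} (hT : T ⊆ P)
    (hU : U ⊆ P) (h : ∏ p ∈ T, p = ∏ p ∈ U, p) : T = U := by
  rw [← Nat.primeFactors_prod (s := T) (fun p hp => hP p (hT hp)), h,
    Nat.primeFactors_prod (fun p hp => hP p (hU hp))]

lemma card_sqf_le {P : Finset ℕ} (hP : ∀ p ∈ P, p.Prime) (D : ℕ) : (sqf P D).card ≤ D := by
  have : (sqf P D).card ≤ (Finset.Icc 1 D).card := by
    refine Finset.card_le_card_of_injOn (fun T => ∏ p ∈ T, p) ?_ ?_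
    · intro T hT
      have := mem_sqf.1 hT
      simp only [Finset.coe_Icc, Set.mem_Icc]
      exact ⟨Finset.prod_pos fun p hp => (hP p (this.1 hp)).pos, this.2⟩
    · intro T hT U hU h
      exact prod_injOn hP (mem_sqf.1 hT).1 (mem_sqf.1 hU).1 h
  simpa using this

/-- Approximate orthogonality of the products of local sieve functions over different sets of primes. -/
lemma sum_pair_le {P : Finset ℕ} {h D : ℕ} (hP : ∀ p ∈ P, p.Prime ∧ 3 ≤ p ∧ ¬ p ∣ h)
    {T U : Finset ℕ} (hT : T ∈ sqf P D) (hU : U ∈ sqf P D) (N : ℕ) :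
    ∑ n ∈ Finset.range N, (∏ p ∈ T, psi h p n) * (∏ p ∈ U, psi h p n)
      ≤ N * (if T = U then ∏ p ∈ T, 2 / ((p : ℝ) - 2) else 0) + (D : ℝ) ^ 4 := by
  obtain ⟨hTP, hTD⟩ := mem_sqf.1 hT
  obtain ⟨hUP, hUD⟩ := mem_sqf.1 hU
  set W := T ∪ U
  have hWP : W ⊆ P := Finset.union_subset hTP hUP
  let F : ℕ → ℕ → ℝ := fun p n =>
    (if p ∈ T then psi h p n else 1) * (if p ∈ U then psi h p n else 1)
  have hF : ∀ p ∈ W, Function.Periodic (F p) p := by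
    intro p _ n
    simp only [F, psi_periodic h p n]
  have e : ∀ n, (∏ p ∈ T, psi h p n) * (∏ p ∈ U, psi h p n) = ∏ p ∈ W, F p n := by
    intro n
    simp only [F, Finset.prod_mul_distrib]
    congr 1
    · rw [Finset.prod_ite_mem, Finset.inter_eq_right.2 Finset.subset_union_left]
    · rw [Finset.prod_ite_mem, Finset.inter_eq_right.2 Finset.subset_union_right]
  have habs : ∀ V ∈ sqf P D, ∀ n, |∏ p ∈ V, psi h p n| ≤ D := by
    intro V hV n
    obtain ⟨hVP, hVD⟩ := mem_sqf.1 hV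
    rw [Finset.abs_prod]
    calc ∏ p ∈ V, |psi h p n| ≤ ∏ p ∈ V, (p : ℝ) :=
          Finset.prod_le_prod (fun _ _ => abs_nonneg _) fun p hp => abs_psi_le (hP p (hVP hp)).2.1 n
      _ ≤ D := by rw [← Nat.cast_prod]; exact Nat.cast_le.2 hVD
  have hq : 0 < ∏ p ∈ W, p := Finset.prod_pos fun p hp => (hP p (hWP hp)).1.pos
  have hqD : ∏ p ∈ W, p ≤ D * D := by
    calc ∏ p ∈ W, p ≤ (∏ p ∈ T, p) * ∏ p ∈ U, p := by
          rw [← Finset.prod_union_inter]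
          exact Nat.le_mul_of_pos_right _ (Finset.prod_pos fun p hp =>
            (hP p (hTP (Finset.mem_inter.1 hp).1)).1.pos)
      _ ≤ D * D := Nat.mul_le_mul hTD hUD
  have hg0 : ∀ p ∈ T, 0 ≤ 2 / ((p : ℝ) - 2) := fun p hp => by
    have : (3 : ℝ) ≤ p := by exact_mod_cast (hP p (hTP hp)).2.1
    exact div_nonneg (by norm_num) (by linarith)
  have main := sum_range_le_of_periodic hq (periodic_prod W F hF)
    (B := (D : ℝ) * D) (S := if T = U then ∏ p ∈ T, 2 / ((p : ℝ) - 2) else 0) ?_ ?_ ?_ N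
  · simp only [e]
    refine main.trans ?_
    have : ((∏ p ∈ W, p : ℕ) : ℝ) ≤ (D : ℝ) * D := by exact_mod_cast hqD
    have : ((∏ p ∈ W, p : ℕ) : ℝ) * ((D : ℝ) * D) ≤ ((D : ℝ) * D) * ((D : ℝ) * D) := by gcongr
    nlinarith
  · intro n
    rw [← e, abs_mul]
    exact mul_le_mul (habs T hT n) (habs U hU n) (abs_nonneg _) (Nat.cast_nonneg _)
  · rw [sum_range_prod W (fun p hp => (hP p (hWP hp)).1) F hF]
    split_ifs with hTU
    · subst hTU
      simp only [W, Finset.union_self] at *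
      push_cast
      rw [← Finset.prod_mul_distrib]
      refine Finset.prod_congr rfl fun p hp => ?_
      simp only [F, hp, if_true]
      exact (sum_psi (hP p (hTP hp)).1 (hP p (hTP hp)).2.1 (hP p (hTP hp)).2.2).2
    · rw [mul_zero]
      obtain ⟨p, hp⟩ : ∃ p, p ∈ W ∧ ¬ (p ∈ T ∧ p ∈ U) := by
        by_contra! hcon
        apply hTU
        ext p
        exact ⟨fun hp => (hcon p (Finset.mem_union_left _ hp)).2,
          fun hp => (hcon p (Finset.mem_union_right _ hp)).1⟩
      refine Finset.prod_eq_zero hp.1 ?_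
      have hs := (sum_psi (hP p (hWP hp.1)).1 (hP p (hWP hp.1)).2.1 (hP p (hWP hp.1)).2.2).1
      by_cases h1 : p ∈ T
      · have h2 : p ∉ U := fun h2 => hp.2 ⟨h1, h2⟩
        simpa only [F, h1, h2, if_true, if_false, mul_one] using hs
      · have h2 : p ∈ U := (Finset.mem_union.1 hp.1).resolve_left h1
        simpa only [F, h1, h2, if_true, if_false, one_mul] using hs
  · split_ifs
    · exact Finset.prod_nonneg hg0
    · exact le_rfl

/-- Upper bound sieve for `n (n + h)`. The function `n ↦ ∑ T, ∏ p ∈ T, psi h p n` equals the constant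
`G = ∑ T, ∏ p ∈ T, 2 / (p - 2)` on the sifted set, while by orthogonality its square has sum at most
`N * G + D ^ 6` over `n < N`. -/
lemma sieve_bound {P : Finset ℕ} {h D : ℕ} (hD : 1 ≤ D)
    (hP : ∀ p ∈ P, p.Prime ∧ 3 ≤ p ∧ ¬ p ∣ h) (N : ℕ) :
    (((Finset.range N).filter (fun n => ∀ p ∈ P, ¬ p ∣ n * (n + h))).card : ℝ)
      ≤ N / (∑ T ∈ sqf P D, ∏ p ∈ T, 2 / ((p : ℝ) - 2)) + (D : ℝ) ^ 6 := by
  set G : ℝ := ∑ T ∈ sqf P D, ∏ p ∈ T, 2 / ((p : ℝ) - 2) with hG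
  set S := (Finset.range N).filter (fun n => ∀ p ∈ P, ¬ p ∣ n * (n + h))
  have hG1 : 1 ≤ G := by
    have h0 : ∅ ∈ sqf P D := mem_sqf.2 ⟨by simp, by simpa using hD⟩
    have := Finset.single_le_sum (f := fun T : Finset ℕ => ∏ p ∈ T, 2 / ((p : ℝ) - 2))
      (fun T hT => Finset.prod_nonneg fun p hp => by
        have : (3 : ℝ) ≤ p := by exact_mod_cast (hP p ((mem_sqf.1 hT).1 hp)).2.1
        exact div_nonneg (by norm_num) (by linarith)) h0
    simpa only [Finset.prod_empty] using this
  let Fn : ℕ → ℝ := fun n => ∑ T ∈ sqf P D, ∏ p ∈ T, psi h p n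
  have hS : ∀ n ∈ S, Fn n = G := by
    intro n hn
    refine Finset.sum_congr rfl fun T hT => Finset.prod_congr rfl fun p hp => ?_
    have := (Finset.mem_filter.1 hn).2 p ((mem_sqf.1 hT).1 hp)
    simp [psi, this]
  have h1 : (S.card : ℝ) * G ^ 2 ≤ ∑ n ∈ Finset.range N, Fn n ^ 2 := by
    calc (S.card : ℝ) * G ^ 2 = ∑ n ∈ S, Fn n ^ 2 := by
          rw [Finset.sum_congr rfl fun n hn => by rw [hS n hn]]; simp
      _ ≤ _ := Finset.sum_le_sum_of_subset_of_nonneg (Finset.filter_subset _ _)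
          fun _ _ _ => sq_nonneg _
  have h2 : ∑ n ∈ Finset.range N, Fn n ^ 2 ≤ N * G + (D : ℝ) ^ 6 := by
    calc ∑ n ∈ Finset.range N, Fn n ^ 2
        = ∑ T ∈ sqf P D, ∑ U ∈ sqf P D, ∑ n ∈ Finset.range N,
            (∏ p ∈ T, psi h p n) * (∏ p ∈ U, psi h p n) := by
          simp only [Fn, sq, Finset.sum_mul_sum]
          rw [Finset.sum_comm]
          exact Finset.sum_congr rfl fun T _ => Finset.sum_comm
      _ ≤ ∑ T ∈ sqf P D, ∑ U ∈ sqf P D,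
            (N * (if T = U then ∏ p ∈ T, 2 / ((p : ℝ) - 2) else 0) + (D : ℝ) ^ 4) :=
          Finset.sum_le_sum fun T hT => Finset.sum_le_sum fun U hU => sum_pair_le hP hT hU N
      _ = N * G + ((sqf P D).card : ℝ) * (sqf P D).card * (D : ℝ) ^ 4 := by
          simp only [Finset.sum_add_distrib, ← Finset.mul_sum, Finset.sum_const, nsmul_eq_mul, hG]
          congr 1
          · congr 1
            refine Finset.sum_congr rfl fun T hT => ?_
            rw [Finset.sum_ite_eq, if_pos hT]
          · ring
      _ ≤ N * G + (D : ℝ) * D * (D : ℝ) ^ 4 := by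
          have : ((sqf P D).card : ℝ) ≤ D := by
            exact_mod_cast card_sqf_le (fun p hp => (hP p hp).1) D
          gcongr
      _ = _ := by ring
  have h3 := h1.trans h2
  have hG0 : 0 < G := by linarith
  have h4 : (S.card : ℝ) ≤ N / G + (D : ℝ) ^ 6 / G ^ 2 := by
    have e : (N : ℝ) / G + (D : ℝ) ^ 6 / G ^ 2 = (N * G + (D : ℝ) ^ 6) / G ^ 2 := by
      field_simp
    rw [e, le_div_iff₀ (by positivity)]
    exact h3
  refine h4.trans ?_
  gcongr
  exact div_le_self (by positivity) (one_le_pow₀ hG1)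

/-! ### An explicit upper bound for prime pairs -/

lemma sum_le_sum_of_inj {α β : Type*} {s : Finset α} {t : Finset β} {f : α → ℝ} {k : β → ℝ}
    (i : α → β) (hi : ∀ a ∈ s, i a ∈ t) (hinj : ∀ a ∈ s, ∀ b ∈ s, i a = i b → a = b)
    (hfk : ∀ a ∈ s, f a ≤ k (i a)) (hk : ∀ b ∈ t, 0 ≤ k b) :
    ∑ a ∈ s, f a ≤ ∑ b ∈ t, k b := by
  calc ∑ a ∈ s, f a ≤ ∑ a ∈ s, k (i a) := Finset.sum_le_sum hfk
    _ = ∑ b ∈ s.image i, k b := (Finset.sum_image (fun a ha b hb h => hinj a ha b hb h)).symm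
    _ ≤ ∑ b ∈ t, k b := Finset.sum_le_sum_of_subset_of_nonneg
        (Finset.image_subset_iff.2 hi) fun b hb _ => hk b hb

/-- The reciprocal of the squarefree number with set of prime factors `T`. -/
noncomputable def wt (T : Finset ℕ) : ℝ := ∏ p ∈ T, (p : ℝ)⁻¹

lemma wt_nonneg (T : Finset ℕ) : 0 ≤ wt T := Finset.prod_nonneg fun _ _ => by positivity

/-- The sieve denominator dominates a square. A pair `(T, U)` is encoded by `T ∪ U`, `T` and `T ∩ U`;
summing over pairs with union `W` gives `∏ p ∈ W, (2 / p + 1 / p ^ 2) ≤ ∏ p ∈ W, 2 / (p - 2)`. -/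
lemma sq_sum_wt_le {P : Finset ℕ} (hP : ∀ p ∈ P, 3 ≤ p) (z : ℕ) :
    (∑ T ∈ sqf P z, wt T) ^ 2 ≤ ∑ W ∈ sqf P (z ^ 2), ∏ p ∈ W, 2 / ((p : ℝ) - 2) := by
  have step : ∑ W ∈ sqf P (z ^ 2), ∑ T ∈ W.powerset, ∑ K ∈ T.powerset,
      wt T * wt K * wt (W \ T) ≤ ∑ W ∈ sqf P (z ^ 2), ∏ p ∈ W, 2 / ((p : ℝ) - 2) := by
    refine Finset.sum_le_sum fun W hW => ?_
    have hWP := (mem_sqf.1 hW).1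
    calc ∑ T ∈ W.powerset, ∑ K ∈ T.powerset, wt T * wt K * wt (W \ T)
        = ∑ T ∈ W.powerset, (∏ p ∈ T, ((p : ℝ)⁻¹ * (1 + (p : ℝ)⁻¹))) * wt (W \ T) := by
          refine Finset.sum_congr rfl fun T _ => ?_
          rw [Finset.prod_mul_distrib, Finset.prod_one_add, Finset.mul_sum, Finset.sum_mul]
          rfl
      _ = ∏ p ∈ W, ((p : ℝ)⁻¹ * (1 + (p : ℝ)⁻¹) + (p : ℝ)⁻¹) := by
          rw [Finset.prod_add]; rfl
      _ ≤ _ := by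
          refine Finset.prod_le_prod (fun p _ => by positivity) fun p hp => ?_
          have h3 : (3 : ℝ) ≤ p := by exact_mod_cast hP p (hWP hp)
          have : (p : ℝ)⁻¹ * (1 + (p : ℝ)⁻¹) + (p : ℝ)⁻¹ = (2 * p + 1) / (p : ℝ) ^ 2 := by
            field_simp; ring
          rw [this, div_le_div_iff₀ (by positivity) (by linarith)]
          nlinarith
  refine le_trans ?_ step
  rw [sq, Finset.sum_mul_sum, ← Finset.sum_product']
  simp only [Finset.sum_sigma']
  refine sum_le_sum_of_inj (fun x => ⟨x.1 ∪ x.2, ⟨x.1, x.1 ∩ x.2⟩⟩) ?_ ?_ ?_ ?_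
  · rintro ⟨T, U⟩ hx
    obtain ⟨hT, hU⟩ := Finset.mem_product.1 hx
    obtain ⟨hT, hTz⟩ := mem_sqf.1 hT
    obtain ⟨hU, hUz⟩ := mem_sqf.1 hU
    simp only at hT hU hTz hUz
    simp only [Finset.mem_sigma, Finset.mem_powerset, mem_sqf]
    refine ⟨⟨Finset.union_subset hT hU, ?_⟩, Finset.subset_union_left, Finset.inter_subset_left⟩
    calc ∏ p ∈ T ∪ U, p ≤ (∏ p ∈ T, p) * ∏ p ∈ U, p := by
          rw [← Finset.prod_union_inter]
          exact Nat.le_mul_of_pos_right _ (Finset.prod_pos fun p hp => by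
            have := hP p (hT (Finset.mem_inter.1 hp).1); omega)
      _ ≤ z ^ 2 := by rw [sq]; exact Nat.mul_le_mul hTz hUz
  · rintro ⟨T, U⟩ _ ⟨T', U'⟩ _ h
    simp only [Sigma.mk.injEq, heq_eq_eq] at h
    obtain ⟨h1, rfl, h2⟩ := h
    ext p
    · rfl
    · have a1 := Finset.ext_iff.1 h1 p
      have a2 := Finset.ext_iff.1 h2 p
      simp only [Finset.mem_union, Finset.mem_inter] at a1 a2
      simp only
      tauto
  · rintro ⟨T, U⟩ _
    simp only
    rw [mul_assoc]
    refine le_of_eq ?_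
    congr 1
    unfold wt
    rw [← Finset.prod_union, Finset.union_sdiff_left, Finset.union_comm, Finset.inter_comm,
      Finset.sdiff_union_inter]
    rw [Finset.union_sdiff_left]
    exact Finset.disjoint_left.2 fun p hp hp' =>
      (Finset.mem_sdiff.1 hp').2 (Finset.mem_inter.1 hp).1
  · rintro ⟨W, T, K⟩ _
    exact mul_nonneg (mul_nonneg (wt_nonneg _) (wt_nonneg _)) (wt_nonneg _)

/-- Removing a set `Q` of primes costs at most the factor `∏ p ∈ Q, (1 + 1/p)`. -/
lemma sum_wt_le_mul {P : Finset ℕ} (hP : ∀ p ∈ P, 0 < p) (Q : Finset ℕ) (z : ℕ) :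
    ∑ T ∈ sqf P z, wt T ≤ (∏ p ∈ Q, (1 + (p : ℝ)⁻¹)) * ∑ T ∈ sqf (P \ Q) z, wt T := by
  rw [Finset.prod_one_add, Finset.sum_mul_sum, ← Finset.sum_product']
  refine sum_le_sum_of_inj (fun T => (T ∩ Q, T \ Q)) ?_ ?_ ?_ ?_
  · intro T hT
    obtain ⟨hT, hTz⟩ := mem_sqf.1 hT
    simp only [Finset.mem_product, Finset.mem_powerset, mem_sqf]
    refine ⟨Finset.inter_subset_right, Finset.sdiff_subset_sdiff hT le_rfl, le_trans ?_ hTz⟩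
    exact Finset.prod_le_prod_of_subset_of_one_le' Finset.sdiff_subset
      fun p hp _ => hP p (hT hp)
  · intro T _ T' _ h
    simp only [Prod.mk.injEq] at h
    rw [← Finset.sdiff_union_inter T Q, ← Finset.sdiff_union_inter T' Q, h.1, h.2]
  · intro T _
    refine le_of_eq ?_
    exact (Finset.prod_inter_mul_prod_sdiff T Q _).symm
  · intro b _
    exact mul_nonneg (wt_nonneg _) (wt_nonneg _)

/-- The squarefree numbers carry a positive proportion of the harmonic sum: write `n = b ^ 2 * a` with
`a` squarefree and use `∑ 1 / b ^ 2 ≤ 2`. -/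
lemma log_le_two_mul_sum_wt (z : ℕ) :
    Real.log (z + 1) ≤ 2 * ∑ T ∈ sqf ((Finset.Icc 1 z).filter Nat.Prime) z, wt T := by
  have h1 : Real.log (z + 1) ≤ ∑ n ∈ Finset.Icc 1 z, (n : ℝ)⁻¹ := by
    have := log_add_one_le_harmonic z
    rw [harmonic_eq_sum_Icc] at this
    push_cast at this
    exact this
  refine h1.trans ?_
  have h2 : ∑ b ∈ Finset.Icc 1 z, ((b : ℝ) ^ 2)⁻¹ ≤ 2 := by
    have := sum_Ioo_inv_sq_le (α := ℝ) 0 (z + 1)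
    have e : Finset.Ioo 0 (z + 1) = Finset.Icc 1 z := by ext; simp; omega
    rw [e] at this
    simpa using this
  have hA : 0 ≤ ∑ T ∈ sqf ((Finset.Icc 1 z).filter Nat.Prime) z, wt T :=
    Finset.sum_nonneg fun T _ => wt_nonneg T
  refine le_trans ?_ (mul_le_mul_of_nonneg_right h2 hA)
  rw [Finset.sum_mul_sum, ← Finset.sum_product']
  choose a b hab using Nat.sq_mul_squarefree
  refine sum_le_sum_of_inj (fun n => (b n, (a n).primeFactors)) ?_ ?_ ?_ ?_
  · intro n hn
    have hn' := Finset.mem_Icc.1 hn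
    obtain ⟨h, hs⟩ := hab n
    have hb0 : 0 < b n := Nat.pos_of_ne_zero fun e => by rw [e] at h; simp at h; omega
    have ha0 : 0 < a n := Nat.pos_of_ne_zero hs.ne_zero
    have han : a n ≤ z := (Nat.le_mul_of_pos_left (a n) (by positivity : 0 < b n ^ 2)).trans (h.le.trans hn'.2)
    have hbn : b n ≤ z := by
      have : b n ^ 2 ≤ z := (Nat.le_mul_of_pos_right _ ha0).trans (h.le.trans hn'.2)
      nlinarith
    simp only [Finset.mem_product, Finset.mem_Icc, mem_sqf]
    refine ⟨⟨hb0, hbn⟩, ?_, ?_⟩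
    · intro p hp
      have hp' := Nat.prime_of_mem_primeFactors hp
      simp only [Finset.mem_filter, Finset.mem_Icc]
      exact ⟨⟨hp'.one_le, (Nat.le_of_mem_primeFactors hp).trans han⟩, hp'⟩
    · rw [Nat.prod_primeFactors_of_squarefree hs]; exact han
  · intro n _ m _ h
    simp only [Prod.mk.injEq] at h
    rw [← (hab n).1, ← (hab m).1, h.1, ← Nat.prod_primeFactors_of_squarefree (hab n).2, h.2,
      Nat.prod_primeFactors_of_squarefree (hab m).2]
  · intro n _
    simp only [wt]
    rw [Finset.prod_inv_distrib, ← Nat.cast_prod, Nat.prod_primeFactors_of_squarefree (hab n).2,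
      ← mul_inv]
    conv_lhs => rw [← (hab n).1]
    push_cast
    exact le_rfl
  · intro x _
    exact mul_nonneg (by positivity) (wt_nonneg _)

/-- The arithmetic factor `∏_{p ∣ h} (1 + 1/p)`. -/
noncomputable def HH (h : ℕ) : ℝ := ∏ p ∈ h.primeFactors, (1 + (p : ℝ)⁻¹)

lemma one_le_HH (h : ℕ) : 1 ≤ HH h := by
  unfold HH
  have := Finset.prod_le_prod (s := h.primeFactors) (f := fun _ => (1 : ℝ))
    (g := fun p : ℕ => 1 + (p : ℝ)⁻¹) (fun _ _ => zero_le_one) (fun p _ => by simp)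
  simpa using this

/-- Prime pairs with difference `h`, sifted by the primes up to `z` not dividing `2h`. The terms
`z ^ 12` and `z + 1` are the sieve error at level `D = z ^ 2` and the trivial count of `n ≤ z`. -/
lemma prime_pairs_le {h z : ℕ} (hh : 0 < h) (hz : 2 ≤ z) (N : ℕ) :
    (((Finset.range N).filter (fun n => n.Prime ∧ (n + h).Prime)).card : ℝ)
      ≤ 4 * N * HH (2 * h) ^ 2 / Real.log z ^ 2 + (z : ℝ) ^ 12 + (z + 1) := by
  set P0 := (Finset.Icc 1 z).filter Nat.Prime
  set P := P0 \ (2 * h).primeFactors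
  have hP : ∀ p ∈ P, p.Prime ∧ 3 ≤ p ∧ ¬ p ∣ h := by
    intro p hp
    obtain ⟨hp0, hp1⟩ := Finset.mem_sdiff.1 hp
    have hpp := (Finset.mem_filter.1 hp0).2
    have : ¬ p ∣ 2 * h := fun hd => hp1 (Nat.mem_primeFactors.2 ⟨hpp, hd, by omega⟩)
    refine ⟨hpp, ?_, fun hd => this (dvd_mul_of_dvd_right hd _)⟩
    have : p ≠ 2 := by rintro rfl; exact this (dvd_mul_right _ _)
    have := hpp.two_le
    omega
  have hlog : 0 < Real.log z := Real.log_pos (by exact_mod_cast hz)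
  set A := ∑ T ∈ sqf P z, wt T
  set G := ∑ W ∈ sqf P (z ^ 2), ∏ p ∈ W, 2 / ((p : ℝ) - 2)
  have h1 : Real.log z ≤ 2 * (HH (2 * h) * A) := by
    calc Real.log z ≤ Real.log (z + 1) := Real.log_le_log (by positivity) (by linarith)
      _ ≤ 2 * ∑ T ∈ sqf P0 z, wt T := log_le_two_mul_sum_wt z
      _ ≤ _ := by
        gcongr
        exact sum_wt_le_mul (fun p hp => (Finset.mem_filter.1 hp).2.pos) _ z
  have hG : A ^ 2 ≤ G := sq_sum_wt_le (fun p hp => (hP p hp).2.1) z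
  have hH := one_le_HH (2 * h)
  have h2 : Real.log z ^ 2 ≤ 4 * HH (2 * h) ^ 2 * G := by
    calc Real.log z ^ 2 ≤ (2 * (HH (2 * h) * A)) ^ 2 := by gcongr
      _ = 4 * HH (2 * h) ^ 2 * A ^ 2 := by ring
      _ ≤ _ := by gcongr
  have hG0 : 0 < G := by
    by_contra hcon
    have : 4 * HH (2 * h) ^ 2 * G ≤ 0 := mul_nonpos_of_nonneg_of_nonpos (by positivity) (by linarith)
    nlinarith
  have h3 := sieve_bound (D := z ^ 2) (by nlinarith) hP N
  have h4 : (N : ℝ) / G ≤ 4 * N * HH (2 * h) ^ 2 / Real.log z ^ 2 := by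
    rw [div_le_div_iff₀ hG0 (by positivity)]
    calc (N : ℝ) * Real.log z ^ 2 ≤ N * (4 * HH (2 * h) ^ 2 * G) := by gcongr
      _ = _ := by ring
  have hsub : (Finset.range N).filter (fun n => n.Prime ∧ (n + h).Prime) ⊆
      (Finset.range N).filter (fun n => ∀ p ∈ P, ¬ p ∣ n * (n + h)) ∪ Finset.range (z + 1) := by
    intro n hn
    simp only [Finset.mem_union, Finset.mem_filter, Finset.mem_range] at hn ⊢
    by_cases hnz : n < z + 1
    · exact Or.inr hnz
    · left
      refine ⟨hn.1, fun p hp hd => ?_⟩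
      have hpz : p ≤ z :=
        (Finset.mem_Icc.1 (Finset.mem_filter.1 (Finset.mem_sdiff.1 hp).1).1).2
      have hpp := (hP p hp).1
      rcases hpp.dvd_mul.1 hd with hd | hd
      · have := (Nat.prime_dvd_prime_iff_eq hpp hn.2.1).1 hd; omega
      · have := (Nat.prime_dvd_prime_iff_eq hpp hn.2.2).1 hd; omega
  have h5 := (Finset.card_le_card hsub).trans (Finset.card_union_le _ _)
  rw [Finset.card_range] at h5
  have h6 : (((Finset.range N).filter (fun n => n.Prime ∧ (n + h).Prime)).card : ℝ) ≤
      (((Finset.range N).filter (fun n => ∀ p ∈ P, ¬ p ∣ n * (n + h))).card : ℝ) + (z + 1) := by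
    exact_mod_cast h5
  have h7 : (((z ^ 2 : ℕ) : ℝ)) ^ 6 = (z : ℝ) ^ 12 := by push_cast; ring
  rw [h7] at h3
  linarith

/-! ### Asymptotic form and the singular factor -/

/-- The prime pair bound of the right order of magnitude, uniformly in the shift `h`; it is
`prime_pairs_le` with sieving level `z ≈ x ^ (1/24)`. -/
lemma prime_pairs_asymp : ∃ C : ℝ, 0 < C ∧ ∃ x₀ : ℕ, ∀ x : ℕ, x₀ ≤ x → ∀ h : ℕ, 0 < h →
    (((Finset.range x).filter (fun n => n.Prime ∧ (n + h).Prime)).card : ℝ)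
      ≤ C * (x / Real.log x ^ 2) * HH (2 * h) ^ 2 := by
  have h1 : ∀ᶠ x : ℝ in atTop, Real.log x ^ 2 ≤ x ^ (1 / 2 : ℝ) := by
    have := (isLittleO_log_rpow_rpow_atTop (r := 2) (s := 1 / 2) (by norm_num)).bound one_pos
    filter_upwards [this, eventually_ge_atTop 1] with x hx hx1
    rw [Real.norm_of_nonneg (Real.rpow_nonneg (Real.log_nonneg hx1) _),
      Real.norm_of_nonneg (by positivity), one_mul, Real.rpow_two] at hx
    exact hx
  have h2 : ∀ᶠ x : ℝ in atTop, (4 : ℝ) ≤ x ^ (1 / 48 : ℝ) :=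
    (tendsto_rpow_atTop (by norm_num : (0 : ℝ) < 1 / 48)).eventually_ge_atTop 4
  obtain ⟨x₀, hx₀⟩ := eventually_atTop.1 ((h1.and h2).and (eventually_ge_atTop 3))
  refine ⟨4 * 48 ^ 2 + 3, by norm_num, ⌈x₀⌉₊, fun x hx h hh => ?_⟩
  obtain ⟨⟨h1, h2⟩, h3⟩ := hx₀ x ((Nat.le_ceil _).trans (by exact_mod_cast hx))
  have hx0 : (0 : ℝ) < x := by linarith
  set y : ℝ := (x : ℝ) ^ (1 / 48 : ℝ) with hy
  have hy24 : (x : ℝ) ^ (1 / 24 : ℝ) = y ^ 2 := by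
    rw [hy, ← Real.rpow_natCast, ← Real.rpow_mul hx0.le]; norm_num
  have hy12 : (x : ℝ) ^ (1 / 2 : ℝ) = y ^ 24 := by
    rw [hy, ← Real.rpow_natCast, ← Real.rpow_mul hx0.le]; norm_num
  have hyx : (x : ℝ) = y ^ 48 := by
    rw [hy, ← Real.rpow_natCast, ← Real.rpow_mul hx0.le]; norm_num
  set z := ⌊y ^ 2⌋₊
  have hzle : (z : ℝ) ≤ y ^ 2 := Nat.floor_le (by positivity)
  have hzge : y ≤ z := by
    have := Nat.lt_floor_add_one (y ^ 2)
    nlinarith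
  have hz2 : 2 ≤ z := by
    have : (2 : ℝ) ≤ z := by linarith
    exact_mod_cast this
  have hlogy : Real.log x = 48 * Real.log y := by rw [hyx, Real.log_pow]; norm_num
  have hlogy0 : 0 < Real.log y := Real.log_pos (by linarith)
  have hlz : Real.log x / 48 ≤ Real.log z := by
    rw [hlogy, mul_div_cancel_left₀ _ (by norm_num)]
    exact Real.log_le_log (by linarith) hzge
  have hlx : 0 < Real.log x := by rw [hlogy]; positivity
  have main := prime_pairs_le hh hz2 x
  have hH := one_le_HH (2 * h)
  have e1 : 4 * (x : ℝ) * HH (2 * h) ^ 2 / Real.log z ^ 2 ≤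
      4 * x * HH (2 * h) ^ 2 / (Real.log x / 48) ^ 2 := by gcongr
  have e2 : (z : ℝ) ^ 12 + (z + 1) ≤ 3 * y ^ 24 := by
    have a1 : (z : ℝ) ^ 12 ≤ (y ^ 2) ^ 12 := by gcongr
    have a2 : y ^ 2 ≤ y ^ 24 := pow_le_pow_right₀ (by linarith) (by norm_num)
    have a3 : 1 ≤ y ^ 24 := one_le_pow₀ (by linarith)
    have a4 : (y ^ 2) ^ 12 = y ^ 24 := by ring
    linarith
  have e3 : y ^ 24 ≤ x / Real.log x ^ 2 := by
    rw [le_div_iff₀ (by positivity)]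
    rw [hy12] at h1
    calc y ^ 24 * Real.log x ^ 2 ≤ y ^ 24 * y ^ 24 := by gcongr
      _ = (x : ℝ) := by rw [hyx]; ring
  have e4 : x / Real.log x ^ 2 ≤ x / Real.log x ^ 2 * HH (2 * h) ^ 2 :=
    le_mul_of_one_le_right (by positivity) (one_le_pow₀ hH)
  have e5 : 4 * x * HH (2 * h) ^ 2 / (Real.log x / 48) ^ 2
      = 4 * 48 ^ 2 * (x / Real.log x ^ 2 * HH (2 * h) ^ 2) := by
    field_simp
  calc _ ≤ _ := main
    _ ≤ 4 * 48 ^ 2 * (x / Real.log x ^ 2 * HH (2 * h) ^ 2)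
        + 3 * (x / Real.log x ^ 2 * HH (2 * h) ^ 2) := by linarith
    _ = _ := by ring

/-- The primes in `[2 ^ k, 2 ^ (k + 1))` have product at most `4 ^ 2 ^ (k + 1)`, by the primorial bound. -/
lemma dyadic_prime_count (k : ℕ) :
    k * ((Finset.Ico (2 ^ k) (2 ^ (k + 1))).filter Nat.Prime).card ≤ 2 ^ (k + 2) := by
  have h1 : (2 ^ k) ^ ((Finset.Ico (2 ^ k) (2 ^ (k + 1))).filter Nat.Prime).card
      ≤ ∏ p ∈ (Finset.Ico (2 ^ k) (2 ^ (k + 1))).filter Nat.Prime, p := by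
    refine Finset.pow_card_le_prod _ _ _ fun p hp => ?_
    exact (Finset.mem_Ico.1 (Finset.mem_filter.1 hp).1).1
  have h2 : ∏ p ∈ (Finset.Ico (2 ^ k) (2 ^ (k + 1))).filter Nat.Prime, p
      ≤ primorial (2 ^ (k + 1)) := by
    unfold primorial
    refine Finset.prod_le_prod_of_subset_of_one_le' ?_ ?_
    · intro p hp
      simp only [Finset.mem_filter, Finset.mem_Ico, Finset.mem_range] at hp ⊢
      exact ⟨by omega, hp.2⟩
    · intro p hp _
      exact (Finset.mem_filter.1 hp).2.one_le
  have h3 := (h1.trans h2).trans (primorial_le_four_pow _)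
  rw [show (4 : ℕ) = 2 ^ 2 by norm_num, ← pow_mul, ← pow_mul] at h3
  have := (Nat.pow_le_pow_iff_right (by norm_num : 1 < 2)).1 h3
  rw [pow_succ 2 (k + 1)]
  omega

lemma sum_inv_primes_two_pow (K : ℕ) :
    ∑ p ∈ (Finset.range (2 ^ K)).filter Nat.Prime, (p : ℝ)⁻¹
      ≤ ∑ k ∈ Finset.range K, 4 * ((k : ℝ))⁻¹ := by
  induction K with
  | zero => simp [Finset.sum_filter]
  | succ k ih =>
    rw [Finset.sum_range_succ]
    have e : (Finset.range (2 ^ (k + 1))).filter Nat.Prime =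
        (Finset.range (2 ^ k)).filter Nat.Prime ∪
          (Finset.Ico (2 ^ k) (2 ^ (k + 1))).filter Nat.Prime := by
      have : 2 ^ k ≤ 2 ^ (k + 1) := Nat.pow_le_pow_right (by norm_num) (by omega)
      rw [← Finset.filter_union]
      congr 1
      ext n; simp only [Finset.mem_range, Finset.mem_union, Finset.mem_Ico]; omega
    rw [e, Finset.sum_union (Finset.disjoint_filter_filter (by
      rw [Finset.range_eq_Ico]; exact Finset.Ico_disjoint_Ico_consecutive _ _ _))]
    refine add_le_add ih ?_
    rcases Nat.eq_zero_or_pos k with rfl | hk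
    · simp [Finset.sum_filter, Nat.not_prime_one]
    have hc := dyadic_prime_count k
    have hc' : (k : ℝ) * (((Finset.Ico (2 ^ k) (2 ^ (k + 1))).filter Nat.Prime).card : ℝ)
        ≤ 2 ^ k * 4 := by
      have : (2 ^ (k + 2) : ℝ) = 2 ^ k * 4 := by rw [pow_add]; norm_num
      rw [← this]; exact_mod_cast hc
    have hk' : (0 : ℝ) < k := by exact_mod_cast hk
    calc ∑ p ∈ (Finset.Ico (2 ^ k) (2 ^ (k + 1))).filter Nat.Prime, (p : ℝ)⁻¹
        ≤ ∑ p ∈ (Finset.Ico (2 ^ k) (2 ^ (k + 1))).filter Nat.Prime, ((2 : ℝ) ^ k)⁻¹ := by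
          refine Finset.sum_le_sum fun p hp => ?_
          have : 2 ^ k ≤ p := (Finset.mem_Ico.1 (Finset.mem_filter.1 hp).1).1
          have : (2 : ℝ) ^ k ≤ p := by exact_mod_cast this
          gcongr
      _ ≤ 4 * (k : ℝ)⁻¹ := by
          rw [Finset.sum_const, nsmul_eq_mul, ← div_eq_mul_inv, ← div_eq_mul_inv,
            div_le_div_iff₀ (by positivity) hk']
          linarith

/-- A weak form of Mertens' theorem: the dyadic bound gives `∑_{p ≤ y} 1/p ≪ log log y`, of which
only `o(log y)` is kept. -/
lemma sum_inv_primes_le {ε : ℝ} (hε : 0 < ε) : ∃ C : ℝ, ∀ y : ℝ, 1 ≤ y →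
    ∑ p ∈ (Finset.range (⌊y⌋₊ + 1)).filter Nat.Prime, (p : ℝ)⁻¹ ≤ ε * Real.log y + C := by
  -- `log K ≤ δ K + log (1/δ)` turns the bound `4 log K`, with `K ≈ log₂ y`, into the claim.
  set δ := ε * Real.log 2 / 4 with hδ
  have hl2 : 0 < Real.log 2 := Real.log_pos (by norm_num)
  have hδ0 : 0 < δ := by positivity
  refine ⟨4 * (1 + δ - Real.log δ), fun y hy => ?_⟩
  set n := ⌊y⌋₊
  have hn : n ≠ 0 := (Nat.floor_pos.2 hy).ne'
  set K := Nat.log 2 n + 1 with hK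
  have hnK : n < 2 ^ K := Nat.lt_pow_succ_log_self (by norm_num) n
  have h1 : ∑ p ∈ (Finset.range (n + 1)).filter Nat.Prime, (p : ℝ)⁻¹ ≤
      ∑ p ∈ (Finset.range (2 ^ K)).filter Nat.Prime, (p : ℝ)⁻¹ := by
    refine Finset.sum_le_sum_of_subset_of_nonneg ?_ fun _ _ _ => by positivity
    refine Finset.filter_subset_filter _ ?_
    intro i; simp only [Finset.mem_range]; omega
  have h2 : ∑ k ∈ Finset.range K, 4 * ((k : ℝ))⁻¹ ≤ 4 * (1 + Real.log K) := by
    rw [← Finset.mul_sum]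
    have := harmonic_le_one_add_log K
    rw [harmonic_eq_sum_Icc] at this
    push_cast at this
    refine mul_le_mul_of_nonneg_left (le_trans ?_ this) (by norm_num)
    calc ∑ k ∈ Finset.range K, ((k : ℝ))⁻¹ = ∑ k ∈ (Finset.range K).filter (· ≠ 0), ((k : ℝ))⁻¹ := by
          rw [Finset.sum_filter_of_ne]
          intro k _ hk h0; simp [h0] at hk
      _ ≤ _ := by
          refine Finset.sum_le_sum_of_subset_of_nonneg ?_ fun _ _ _ => by positivity
          intro k; simp only [Finset.mem_filter, Finset.mem_range, Finset.mem_Icc]; omega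
  have hK0 : (0 : ℝ) < K := by rw [hK]; positivity
  have h3 : Real.log K ≤ δ * K - Real.log δ := by
    have := Real.log_le_sub_one_of_pos (mul_pos hδ0 hK0)
    rw [Real.log_mul hδ0.ne' hK0.ne'] at this
    linarith
  have h4 : (K : ℝ) ≤ Real.log y / Real.log 2 + 1 := by
    have : (Nat.log 2 n : ℝ) ≤ Real.log y / Real.log 2 := by
      rw [le_div_iff₀ hl2, ← Real.log_pow]
      refine Real.log_le_log (by positivity) ?_
      calc (2 : ℝ) ^ Nat.log 2 n ≤ n := by exact_mod_cast Nat.pow_log_le_self 2 hn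
        _ ≤ y := Nat.floor_le (by linarith)
    rw [hK]; push_cast; linarith
  have h5 : δ * K ≤ δ * (Real.log y / Real.log 2 + 1) := by gcongr
  have h6 : δ * (Real.log y / Real.log 2 + 1) = ε / 4 * Real.log y + δ := by
    rw [hδ]; field_simp
  have := sum_inv_primes_two_pow K
  linarith

/-- With `T = ∑ p ^ (-35/36)`, the primes beyond `(1 + T) ^ 36` contribute at most `1` to `∑ 1/p`, and
those below it at most `(1/2) * log (1 + T) + O(1)` by `sum_inv_primes_le`. -/
lemma exp_sum_inv_le : ∃ C : ℝ, 0 < C ∧ ∀ Q : Finset ℕ, (∀ p ∈ Q, p.Prime) →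
    Real.exp (2 * ∑ p ∈ Q, (p : ℝ)⁻¹) ≤ C * (1 + ∑ p ∈ Q, (p : ℝ) ^ (-(35 / 36) : ℝ)) := by
  obtain ⟨C, hC⟩ := sum_inv_primes_le (ε := 1 / 72) (by norm_num)
  refine ⟨Real.exp (2 * C + 2), Real.exp_pos _, fun Q hQ => ?_⟩
  set T := ∑ p ∈ Q, (p : ℝ) ^ (-(35 / 36) : ℝ)
  have hT : 0 ≤ T := Finset.sum_nonneg fun _ _ => by positivity
  set y := (1 + T) ^ (36 : ℕ)
  have hy : 1 ≤ y := one_le_pow₀ (by linarith)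
  have h1 : ∑ p ∈ Q with p ≤ ⌊y⌋₊, (p : ℝ)⁻¹ ≤ 1 / 2 * Real.log (1 + T) + C := by
    have := hC y hy
    rw [Real.log_pow] at this
    refine le_trans (Finset.sum_le_sum_of_subset_of_nonneg ?_ fun _ _ _ => by positivity)
      (this.trans (by push_cast; linarith))
    intro p hp
    simp only [Finset.mem_filter, Finset.mem_range] at hp ⊢
    exact ⟨by omega, hQ p hp.1⟩
  have h2 : ∑ p ∈ Q with ¬ p ≤ ⌊y⌋₊, (p : ℝ)⁻¹ ≤ 1 := by
    have : ∀ p ∈ Q.filter (fun p => ¬ p ≤ ⌊y⌋₊),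
        (p : ℝ)⁻¹ ≤ (p : ℝ) ^ (-(35 / 36) : ℝ) * (1 + T)⁻¹ := by
      intro p hp
      have hp' := (Finset.mem_filter.1 hp)
      have hyp : y < p := (Nat.floor_lt (by linarith)).1 (not_le.1 hp'.2)
      have hp0 : (0 : ℝ) < p := by linarith
      have e : (p : ℝ)⁻¹ = (p : ℝ) ^ (-(35 / 36) : ℝ) * (p : ℝ) ^ (-(1 / 36) : ℝ) := by
        rw [← Real.rpow_add hp0, ← Real.rpow_neg_one]; norm_num
      rw [e]
      refine mul_le_mul_of_nonneg_left ?_ (by positivity)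
      rw [Real.rpow_neg hp0.le]
      refine inv_anti₀ (by linarith) ?_
      calc 1 + T = y ^ (1 / 36 : ℝ) := by
            simp only [y]
            rw [← Real.rpow_natCast, ← Real.rpow_mul (by linarith)]; norm_num
        _ ≤ _ := by gcongr
    calc _ ≤ ∑ p ∈ Q with ¬ p ≤ ⌊y⌋₊, (p : ℝ) ^ (-(35 / 36) : ℝ) * (1 + T)⁻¹ :=
          Finset.sum_le_sum this
      _ ≤ ∑ p ∈ Q, (p : ℝ) ^ (-(35 / 36) : ℝ) * (1 + T)⁻¹ :=
          Finset.sum_le_sum_of_subset_of_nonneg (Finset.filter_subset _ _)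
            fun _ _ _ => by positivity
      _ = T / (1 + T) := by rw [← Finset.sum_mul]; rfl
      _ ≤ 1 := by rw [div_le_one (by linarith)]; linarith
  have h3 := Finset.sum_filter_add_sum_filter_not Q (fun p => p ≤ ⌊y⌋₊) (fun p => (p : ℝ)⁻¹)
  calc Real.exp (2 * ∑ p ∈ Q, (p : ℝ)⁻¹) ≤ Real.exp (2 * C + 2 + Real.log (1 + T)) := by
        rw [Real.exp_le_exp]; linarith
    _ = _ := by rw [Real.exp_add, Real.exp_log (by linarith)]

/-- The singular factor is controlled by the prime factors of `h` up to `L ≥ log h`: there are at most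
`L / log 2` prime factors in all, so those exceeding `L` contribute `O(1)` to `∑ 1/p`. -/
lemma HH_sq_le : ∃ C : ℝ, 0 < C ∧ ∀ (h : ℕ) (L : ℝ), 0 < h → 0 < L → Real.log h ≤ L →
    HH (2 * h) ^ 2 ≤
      C * (1 + ∑ p ∈ h.primeFactors with (p : ℕ) ≤ L, (p : ℝ) ^ (-(35 / 36) : ℝ)) := by
  obtain ⟨C, hC0, hC⟩ := exp_sum_inv_le
  have hl2 : 0 < Real.log 2 := Real.log_pos (by norm_num)
  refine ⟨Real.exp (1 + 2 / Real.log 2) * C, by positivity, fun h L hh hL hhL => ?_⟩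
  have h1 : HH (2 * h) ≤ Real.exp (∑ p ∈ (2 * h).primeFactors, (p : ℝ)⁻¹) := by
    unfold HH
    rw [Real.exp_sum]
    refine Finset.prod_le_prod (fun p _ => by positivity) fun p _ => ?_
    rw [add_comm]; exact Real.add_one_le_exp _
  have h2 : ∑ p ∈ (2 * h).primeFactors, (p : ℝ)⁻¹ ≤ 1 / 2 + ∑ p ∈ h.primeFactors, (p : ℝ)⁻¹ := by
    rw [Nat.primeFactors_mul (by norm_num) hh.ne', Nat.prime_two.primeFactors]
    have := Finset.sum_union_inter (s₁ := {2}) (s₂ := h.primeFactors) (f := fun p : ℕ => (p : ℝ)⁻¹)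
    have h0 : 0 ≤ ∑ p ∈ {2} ∩ h.primeFactors, (p : ℝ)⁻¹ :=
      Finset.sum_nonneg fun _ _ => by positivity
    rw [Finset.sum_singleton] at this
    push_cast at this
    linarith
  have h3 : ∑ p ∈ h.primeFactors with ¬ (p : ℕ) ≤ L, (p : ℝ)⁻¹ ≤ 1 / Real.log 2 := by
    have hcard : (h.primeFactors.card : ℝ) * Real.log 2 ≤ L := by
      refine le_trans ?_ hhL
      rw [← Real.log_pow]
      refine Real.log_le_log (by positivity) ?_
      have : 2 ^ h.primeFactors.card ≤ h :=
        (Finset.pow_card_le_prod _ _ _ fun p hp =>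
          (Nat.prime_of_mem_primeFactors hp).two_le).trans
          (Nat.le_of_dvd hh (Nat.prod_primeFactors_dvd h))
      exact_mod_cast this
    calc _ ≤ ∑ p ∈ h.primeFactors with ¬ (p : ℕ) ≤ L, L⁻¹ := by
          refine Finset.sum_le_sum fun p hp => ?_
          have := not_le.1 (Finset.mem_filter.1 hp).2
          gcongr
      _ ≤ ∑ p ∈ h.primeFactors, L⁻¹ := Finset.sum_le_sum_of_subset_of_nonneg
          (Finset.filter_subset _ _) fun _ _ _ => by positivity
      _ = h.primeFactors.card / L := by rw [Finset.sum_const, nsmul_eq_mul, div_eq_mul_inv]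
      _ ≤ _ := by rw [div_le_div_iff₀ hL hl2]; linarith
  have h4 := Finset.sum_filter_add_sum_filter_not h.primeFactors (fun p : ℕ => (p : ℝ) ≤ L)
    (fun p => (p : ℝ)⁻¹)
  have h5 := hC (h.primeFactors.filter fun p : ℕ => (p : ℝ) ≤ L)
    (fun p hp => Nat.prime_of_mem_primeFactors (Finset.mem_filter.1 hp).1)
  have h6 : (0 : ℝ) ≤ HH (2 * h) := by linarith [one_le_HH (2 * h)]
  calc HH (2 * h) ^ 2 ≤ Real.exp (∑ p ∈ (2 * h).primeFactors, (p : ℝ)⁻¹) ^ 2 := by gcongr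
    _ = Real.exp (2 * ∑ p ∈ (2 * h).primeFactors, (p : ℝ)⁻¹) := by
        rw [← Real.exp_nat_mul]; norm_num
    _ ≤ Real.exp ((1 + 2 / Real.log 2) +
          2 * ∑ p ∈ h.primeFactors with (p : ℕ) ≤ L, (p : ℝ)⁻¹) := by
        rw [Real.exp_le_exp]
        have : 2 / Real.log 2 = 2 * (1 / Real.log 2) := by ring
        linarith
    _ ≤ _ := by
        rw [Real.exp_add, mul_assoc]
        gcongr

/-! ### Solutions of `g ^ m ^ 2 = c` modulo a prime -/

lemma succ_cube_le (a : ℕ) : (a + 1) ^ 3 ≤ 64 * 2 ^ a := by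
  rcases lt_or_ge a 3 with h | h
  · interval_cases a <;> norm_num
  · induction a, h using Nat.le_induction with
    | base => norm_num
    | succ n hn ih =>
      rw [pow_succ 2 n]
      nlinarith [sq_nonneg n, Nat.mul_le_mul hn hn, Nat.mul_le_mul (Nat.mul_le_mul hn hn) hn]

/-- A weak form of the divisor bound, `d(n) ≪ n^(1/3)`. -/
lemma card_divisors_cube_le {n : ℕ} (hn : n ≠ 0) : n.divisors.card ^ 3 ≤ 64 ^ 8 * n := by
  have h1 : ∀ p ∈ n.primeFactors, (n.factorization p + 1) ^ 3 ≤
      (if p < 8 then 64 else 1) * p ^ n.factorization p := by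
    intro p hp
    have hp2 := (Nat.prime_of_mem_primeFactors hp).two_le
    set a := n.factorization p
    split_ifs with h8
    · exact (succ_cube_le a).trans (Nat.mul_le_mul_left _ (Nat.pow_le_pow_left hp2 a))
    · rw [one_mul]
      calc (a + 1) ^ 3 ≤ (2 ^ a) ^ 3 := Nat.pow_le_pow_left (Nat.lt_two_pow_self) 3
        _ = 8 ^ a := by rw [← pow_mul, mul_comm, pow_mul]; norm_num
        _ ≤ p ^ a := Nat.pow_le_pow_left (by omega) a
  rw [Nat.card_divisors hn, ← Finset.prod_pow]
  refine (Finset.prod_le_prod' h1).trans ?_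
  rw [Finset.prod_mul_distrib]
  refine Nat.mul_le_mul ?_ ?_
  · rw [← Finset.prod_filter, Finset.prod_const]
    refine Nat.pow_le_pow_right (by norm_num) ?_
    calc _ ≤ (Finset.range 8).card := Finset.card_le_card (by
          intro p hp; simpa using (Finset.mem_filter.1 hp).2)
      _ = 8 := by simp
  · have := Nat.prod_factorization_pow_eq_self hn
    rw [Finsupp.prod, Nat.support_factorization] at this
    exact this.le

lemma card_le_of_modEq {s : Finset ℕ} {M a : ℕ} (hs : s ⊆ Finset.Icc 1 M)
    (h : ∀ m ∈ s, ∀ n ∈ s, m ≡ n [MOD a]) : s.card ≤ M / a + 1 := by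
  rw [← Finset.card_range (M / a + 1)]
  refine Finset.card_le_card_of_injOn (fun m => m / a) ?_ ?_
  · intro m hm
    have := (Finset.mem_Icc.1 (hs hm)).2
    simp only [Finset.coe_range, Set.mem_Iio]
    exact Nat.lt_succ_of_le (Nat.div_le_div_right this)
  · intro m hm n hn hmn
    simp only at hmn
    rw [← Nat.div_add_mod m a, ← Nat.div_add_mod n a, hmn, h m hm n hn]

/-- Square roots modulo `e`: if `m₀` is one solution, then `e ∣ (m - m₀) (m + m₀)` for every other
solution `m`, so one of the two factors shares with `e` a divisor `a` with `a ^ 2 ≥ e`. -/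
lemma card_sq_modEq_le {e : ℕ} (he : 0 < e) (M c : ℕ) :
    ((Finset.Icc 1 M).filter (fun m => m ^ 2 ≡ c [MOD e])).card
      ≤ ∑ a ∈ e.divisors.filter (fun a => e ≤ a ^ 2), 2 * (M / a + 1) := by
  set s := (Finset.Icc 1 M).filter (fun m => m ^ 2 ≡ c [MOD e])
  rcases s.eq_empty_or_nonempty with h0 | ⟨m₀, hm₀⟩
  · rw [h0]; simp
  have hsub : s ⊆ (e.divisors.filter (fun a => e ≤ a ^ 2)).biUnion (fun a =>
      (Finset.Icc 1 M).filter (fun m => (a : ℤ) ∣ m - m₀) ∪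
      (Finset.Icc 1 M).filter (fun m => (a : ℤ) ∣ m + m₀)) := by
    intro m hm
    obtain ⟨hmM, hmc⟩ := Finset.mem_filter.1 hm
    have hmod : m₀ ^ 2 ≡ m ^ 2 [MOD e] := (Finset.mem_filter.1 hm₀).2.trans hmc.symm
    have hd : (e : ℤ) ∣ (m - m₀) * (m + m₀) := by
      have := (Nat.modEq_iff_dvd.1 hmod)
      push_cast at this
      have e1 : ((m : ℤ) - m₀) * (m + m₀) = m ^ 2 - m₀ ^ 2 := by ring
      rwa [e1]
    set u := Int.gcd e (m - m₀)
    set v := Int.gcd e (m + m₀)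
    have huv : e ∣ u * v := by
      have h1 : Int.gcd e ((m - m₀) * (m + m₀)) = e :=
        Nat.gcd_eq_left (Int.natCast_dvd.1 hd)
      rw [← h1]
      exact Int.gcd_mul_right_dvd_mul_gcd _ _ _
    have hu : u ∣ e := Int.natCast_dvd_natCast.1 (Int.gcd_dvd_left (e : ℤ) (m - m₀))
    have hv : v ∣ e := Int.natCast_dvd_natCast.1 (Int.gcd_dvd_left (e : ℤ) (m + m₀))
    have hle : e ≤ u * v :=
      Nat.le_of_dvd (Nat.mul_pos (Nat.pos_of_dvd_of_pos hu he) (Nat.pos_of_dvd_of_pos hv he)) huv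
    simp only [Finset.mem_biUnion, Finset.mem_filter, Finset.mem_union, Nat.mem_divisors]
    rcases le_total u v with h | h
    · exact ⟨v, ⟨⟨hv, he.ne'⟩, by nlinarith⟩, Or.inr ⟨hmM, Int.gcd_dvd_right _ _⟩⟩
    · exact ⟨u, ⟨⟨hu, he.ne'⟩, by nlinarith⟩, Or.inl ⟨hmM, Int.gcd_dvd_right _ _⟩⟩
  refine (Finset.card_le_card hsub).trans (Finset.card_biUnion_le.trans ?_)
  refine Finset.sum_le_sum fun a _ => (Finset.card_union_le _ _).trans ?_
  rw [two_mul]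
  refine add_le_add ?_ ?_
  · refine card_le_of_modEq (Finset.filter_subset _ _) fun m hm n hn => ?_
    have h1 := (Finset.mem_filter.1 hm).2
    have h2 := (Finset.mem_filter.1 hn).2
    rw [Nat.modEq_iff_dvd]
    have := dvd_sub h2 h1
    ring_nf at this ⊢; exact this
  · refine card_le_of_modEq (Finset.filter_subset _ _) fun m hm n hn => ?_
    have h1 := (Finset.mem_filter.1 hm).2
    have h2 := (Finset.mem_filter.1 hn).2
    rw [Nat.modEq_iff_dvd]
    have := dvd_sub h2 h1
    ring_nf at this ⊢; exact this

/-- `card_sq_modEq_le` combined with the divisor bound: a power of `e` is saved over the trivial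
bound `M`. -/
lemma card_sq_modEq_le_rpow {κ : ℝ} (hκ : 0 < κ) {e M : ℕ} (he : 0 < e)
    (heM : (e : ℝ) ≤ κ * (M : ℝ) ^ 2) (c : ℕ) :
    (((Finset.Icc 1 M).filter (fun m => m ^ 2 ≡ c [MOD e])).card : ℝ)
      ≤ 2 * 64 ^ 3 * (1 + √κ) * M * (e : ℝ) ^ (-(1 / 6) : ℝ) := by
  have he' : (0 : ℝ) < e := by exact_mod_cast he
  have hs : 0 < √(e : ℝ) := Real.sqrt_pos.2 he'
  have h1 : (((Finset.Icc 1 M).filter (fun m => m ^ 2 ≡ c [MOD e])).card : ℝ)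
      ≤ ∑ a ∈ e.divisors.filter (fun a => e ≤ a ^ 2), 2 * ((M : ℝ) / a + 1) := by
    refine (Nat.cast_le.2 (card_sq_modEq_le he M c)).trans ?_
    push_cast
    gcongr
    exact Nat.cast_div_le
  have hsM : √(e : ℝ) ≤ √κ * M := by
    calc √(e : ℝ) ≤ √(κ * (M : ℝ) ^ 2) := Real.sqrt_le_sqrt heM
      _ = √κ * M := by rw [Real.sqrt_mul hκ.le, Real.sqrt_sq (Nat.cast_nonneg _)]
  have h2 : ∀ a ∈ e.divisors.filter (fun a => e ≤ a ^ 2),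
      2 * ((M : ℝ) / a + 1) ≤ 2 * ((1 + √κ) * M / √e) := by
    intro a ha
    have ha2 : e ≤ a ^ 2 := (Finset.mem_filter.1 ha).2
    have : √(e : ℝ) ≤ a := Real.sqrt_le_iff.2 ⟨by positivity, by exact_mod_cast ha2⟩
    have h3 : (M : ℝ) / a ≤ M / √e := by gcongr
    have h4 : 1 ≤ √κ * M / √e := by rw [le_div_iff₀ hs]; linarith
    have h5 : (1 + √κ) * M / √e = M / √e + √κ * M / √e := by ring
    rw [h5]; linarith
  have h3 : (e.divisors.card : ℝ) ≤ 64 ^ 3 * (e : ℝ) ^ (1 / 3 : ℝ) := by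
    have := card_divisors_cube_le he.ne'
    have h' : (e.divisors.card : ℝ) ^ 3 ≤ (64 ^ 3 * (e : ℝ) ^ (1 / 3 : ℝ)) ^ 3 := by
      calc (e.divisors.card : ℝ) ^ 3 ≤ 64 ^ 8 * (e : ℝ) := by exact_mod_cast this
        _ ≤ 64 ^ 9 * (e : ℝ) := by gcongr <;> norm_num
        _ = _ := by
          rw [mul_pow, ← Real.rpow_natCast ((e : ℝ) ^ (1 / 3 : ℝ)), ← Real.rpow_mul he'.le]
          norm_num
    exact le_of_pow_le_pow_left₀ (by norm_num) (by positivity) h'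
  have h4 : (e : ℝ) ^ (1 / 3 : ℝ) * (√(e : ℝ))⁻¹ = (e : ℝ) ^ (-(1 / 6) : ℝ) := by
    rw [Real.sqrt_eq_rpow, ← Real.rpow_neg he'.le, ← Real.rpow_add he']; norm_num
  calc _ ≤ _ := h1
    _ ≤ ∑ a ∈ e.divisors.filter (fun a => e ≤ a ^ 2), 2 * ((1 + √κ) * M / √e) :=
        Finset.sum_le_sum h2
    _ ≤ ∑ a ∈ e.divisors, 2 * ((1 + √κ) * M / √e) :=
        Finset.sum_le_sum_of_subset_of_nonneg (Finset.filter_subset _ _)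
          fun _ _ _ => by positivity
    _ = e.divisors.card * (2 * ((1 + √κ) * M / √e)) := by rw [Finset.sum_const, nsmul_eq_mul]
    _ ≤ (64 ^ 3 * (e : ℝ) ^ (1 / 3 : ℝ)) * (2 * ((1 + √κ) * M / √e)) := by gcongr
    _ = 2 * 64 ^ 3 * (1 + √κ) * M * ((e : ℝ) ^ (1 / 3 : ℝ) * (√(e : ℝ))⁻¹) := by ring
    _ = _ := by rw [h4]

/-- The condition on a prime `p` that `p ∤ g` and that `g` has order at least `p ^ (1/3)` modulo `p`. -/
def Good (g p : ℕ) : Prop := ¬ p ∣ g ∧ p ≤ orderOf (g : ZMod p) ^ 3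

/-- For a good prime `p`, the powers `g ^ m ^ 2` are well distributed modulo `p`: a fixed power of `p` is
saved over the trivial bound `M`. -/
lemma card_pow_sq_le {κ : ℝ} (hκ : 0 < κ) {g p M : ℕ} (hp : p.Prime) (hgood : Good g p)
    (hpM : (p : ℝ) ≤ κ * (M : ℝ) ^ 2) (c : ZMod p) :
    (((Finset.Icc 1 M).filter (fun m => (g : ZMod p) ^ (m ^ 2) = c)).card : ℝ)
      ≤ 2 * 64 ^ 3 * (1 + √κ) * M * (p : ℝ) ^ (-(1 / 18) : ℝ) := by
  have := Fact.mk hp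
  set s := (Finset.Icc 1 M).filter (fun m => (g : ZMod p) ^ (m ^ 2) = c) with hs
  rcases s.eq_empty_or_nonempty with h0 | ⟨m₀, hm₀⟩
  · rw [h0]; simp only [Finset.card_empty, Nat.cast_zero]; positivity
  have hg0 : (g : ZMod p) ≠ 0 := fun h => hgood.1 ((ZMod.natCast_eq_zero_iff g p).1 h)
  have hfin : IsOfFinOrder (g : ZMod p) := isOfFinOrder_iff_pow_eq_one.2
    ⟨p - 1, by have := hp.two_le; omega, ZMod.pow_card_sub_one_eq_one hg0⟩
  set e := orderOf (g : ZMod p) with he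
  have he0 : 0 < e := hfin.orderOf_pos
  have hep : e ≤ p := by
    have : e ∣ p - 1 := orderOf_dvd_of_pow_eq_one (ZMod.pow_card_sub_one_eq_one hg0)
    have := Nat.le_of_dvd (by have := hp.two_le; omega) this
    omega
  have hep' : (e : ℝ) ≤ κ * (M : ℝ) ^ 2 := le_trans (by exact_mod_cast hep) hpM
  have hsub : s ⊆ (Finset.Icc 1 M).filter (fun m => m ^ 2 ≡ m₀ ^ 2 [MOD e]) := by
    intro m hm
    obtain ⟨h1, h2⟩ := Finset.mem_filter.1 hm
    refine Finset.mem_filter.2 ⟨h1, ?_⟩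
    have h3 : (g : ZMod p) ^ (m ^ 2) = (g : ZMod p) ^ (m₀ ^ 2) :=
      h2.trans (Finset.mem_filter.1 hm₀).2.symm
    have hu : (Units.mk0 (g : ZMod p) hg0) ^ (m ^ 2) = (Units.mk0 (g : ZMod p) hg0) ^ (m₀ ^ 2) := by
      ext; simpa using h3
    have := pow_eq_pow_iff_modEq.1 hu
    rwa [← orderOf_units, Units.val_mk0] at this
  have h1 : (s.card : ℝ) ≤ _ :=
    (Nat.cast_le.2 (Finset.card_le_card hsub)).trans (card_sq_modEq_le_rpow hκ he0 hep' (m₀ ^ 2))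
  refine h1.trans ?_
  have h2 : (e : ℝ) ^ (-(1 / 6) : ℝ) ≤ (p : ℝ) ^ (-(1 / 18) : ℝ) := by
    have hp0 : (0 : ℝ) < p := by exact_mod_cast hp.pos
    have hpe : (p : ℝ) ≤ (e : ℝ) ^ 3 := by exact_mod_cast hgood.2
    calc (e : ℝ) ^ (-(1 / 6) : ℝ) = ((e : ℝ) ^ 3) ^ (-(1 / 18) : ℝ) := by
          rw [← Real.rpow_natCast, ← Real.rpow_mul (Nat.cast_nonneg e)]; norm_num
      _ ≤ _ := Real.rpow_le_rpow_of_nonpos hp0 hpe (by norm_num)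
  gcongr

/-- The sum of `p ^ (-35/36)` over the primes that are not good is bounded. Those not dividing `g` are
grouped by the order `e` of `g`: they divide `g ^ e - 1`, so there are `≪ e` of them, and each
exceeds `e ^ 3`. -/
lemma sum_bad_le {g : ℕ} (hg : 2 ≤ g) : ∃ C : ℝ, 0 ≤ C ∧ ∀ Q : Finset ℕ, (∀ p ∈ Q, p.Prime) →
    (∀ p ∈ Q, ¬ Good g p) → ∑ p ∈ Q, (p : ℝ) ^ (-(35 / 36) : ℝ) ≤ C := by
  have hsum : Summable (fun e : ℕ => (e : ℝ) ^ (-(3 / 2) : ℝ)) :=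
    Real.summable_nat_rpow.2 (by norm_num)
  have hg1 : (1 : ℝ) < g := by exact_mod_cast hg
  have hlg : 0 < Real.log g := Real.log_pos hg1
  have hl2 : 0 < Real.log 2 := Real.log_pos (by norm_num)
  set c := Real.log g / Real.log 2
  refine ⟨g.primeFactors.card + c * ∑' e : ℕ, (e : ℝ) ^ (-(3 / 2) : ℝ), by
    have : 0 ≤ ∑' e : ℕ, (e : ℝ) ^ (-(3 / 2) : ℝ) := tsum_nonneg fun e => by positivity
    positivity, fun Q hQ hbad => ?_⟩
  rw [← Finset.sum_filter_add_sum_filter_not Q (fun p => p ∣ g)]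
  refine add_le_add ?_ ?_
  · calc ∑ p ∈ Q with p ∣ g, (p : ℝ) ^ (-(35 / 36) : ℝ) ≤ ∑ p ∈ Q with p ∣ g, (1 : ℝ) := by
          refine Finset.sum_le_sum fun p hp => ?_
          exact Real.rpow_le_one_of_one_le_of_nonpos
            (by exact_mod_cast (hQ p (Finset.mem_filter.1 hp).1).one_le) (by norm_num)
      _ = ((Q.filter (fun p => p ∣ g)).card : ℝ) := by simp
      _ ≤ _ := by
          refine Nat.cast_le.2 (Finset.card_le_card fun p hp => ?_)
          exact Nat.mem_primeFactors.2 ⟨hQ p (Finset.mem_filter.1 hp).1,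
            (Finset.mem_filter.1 hp).2, by omega⟩
  · set Q' := Q.filter (fun p => ¬ p ∣ g)
    have hQ' : ∀ p ∈ Q', p.Prime ∧ (g : ZMod p) ≠ 0 ∧ orderOf (g : ZMod p) ^ 3 < p ∧
        0 < orderOf (g : ZMod p) := by
      intro p hp
      obtain ⟨h1, h2⟩ := Finset.mem_filter.1 hp
      have hpp := hQ p h1
      have := Fact.mk hpp
      have hg0 : (g : ZMod p) ≠ 0 := fun h => h2 ((ZMod.natCast_eq_zero_iff g p).1 h)
      refine ⟨hpp, hg0, not_le.1 fun h => hbad p h1 ⟨h2, h⟩, ?_⟩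
      exact (isOfFinOrder_iff_pow_eq_one.2
        ⟨p - 1, by have := hpp.two_le; omega, ZMod.pow_card_sub_one_eq_one hg0⟩).orderOf_pos
    set E := Q'.image (fun p => orderOf (g : ZMod p))
    rw [← Finset.sum_fiberwise_of_maps_to (t := E) (g := fun p => orderOf (g : ZMod p))
      (fun p hp => Finset.mem_image_of_mem _ hp)]
    rw [← tsum_mul_left]
    refine le_trans ?_ ((hsum.mul_left c).sum_le_tsum E fun e _ => by positivity)
    refine Finset.sum_le_sum fun e heE => ?_
    obtain ⟨q, hq, hqe⟩ := Finset.mem_image.1 heE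
    have he0 : 0 < e := hqe ▸ (hQ' q hq).2.2.2
    have he' : (0 : ℝ) < e := by exact_mod_cast he0
    set R := Q'.filter (fun p => orderOf (g : ZMod p) = e)
    have hcard : (R.card : ℝ) ≤ c * e := by
      have hge : 1 < g ^ e := Nat.one_lt_pow he0.ne' hg
      have hdvd : ∏ p ∈ R, p ∣ g ^ e - 1 := by
        refine Finset.prod_primes_dvd _ (fun p hp => (hQ' p (Finset.mem_filter.1 hp).1).1.prime) ?_
        intro p hp
        obtain ⟨h1, h2⟩ := Finset.mem_filter.1 hp
        have h3 : (g : ZMod p) ^ e = 1 := by rw [← h2]; exact pow_orderOf_eq_one _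
        rw [← ZMod.natCast_eq_zero_iff, Nat.cast_sub hge.le]
        push_cast
        rw [h3, sub_self]
      have h2 : 2 ^ R.card ≤ g ^ e :=
        ((Finset.pow_card_le_prod _ _ _ fun p hp =>
          (hQ' p (Finset.mem_filter.1 hp).1).1.two_le).trans
          (Nat.le_of_dvd (by omega) hdvd)).trans (Nat.sub_le _ _)
      have h3 : (R.card : ℝ) * Real.log 2 ≤ e * Real.log g := by
        rw [← Real.log_pow, ← Real.log_pow]
        exact Real.log_le_log (by positivity) (by exact_mod_cast h2)
      have : c * e = e * Real.log g / Real.log 2 := by simp only [c]; ring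
      rw [this, le_div_iff₀ hl2]; exact h3
    calc ∑ p ∈ R, (p : ℝ) ^ (-(35 / 36) : ℝ) ≤ ∑ p ∈ R, (e : ℝ) ^ (-(5 / 2) : ℝ) := by
          refine Finset.sum_le_sum fun p hp => ?_
          obtain ⟨h1, h2⟩ := Finset.mem_filter.1 hp
          have h3 : e ^ 3 < p := h2 ▸ (hQ' p h1).2.2.1
          have h3' : (e : ℝ) ^ 3 ≤ p := by exact_mod_cast h3.le
          calc (p : ℝ) ^ (-(35 / 36) : ℝ) ≤ ((e : ℝ) ^ 3) ^ (-(35 / 36) : ℝ) :=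
                Real.rpow_le_rpow_of_nonpos (by positivity) h3' (by norm_num)
            _ = (e : ℝ) ^ (-(35 / 12) : ℝ) := by
                rw [← Real.rpow_natCast, ← Real.rpow_mul he'.le]; norm_num
            _ ≤ _ := Real.rpow_le_rpow_of_exponent_le (by exact_mod_cast he0) (by norm_num)
      _ = R.card * (e : ℝ) ^ (-(5 / 2) : ℝ) := by rw [Finset.sum_const, nsmul_eq_mul]
      _ ≤ c * e * (e : ℝ) ^ (-(5 / 2) : ℝ) := by gcongr
      _ = c * ((e : ℝ) ^ (1 : ℝ) * (e : ℝ) ^ (-(5 / 2) : ℝ)) := by rw [Real.rpow_one]; ring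
      _ = c * (e : ℝ) ^ (-(3 / 2) : ℝ) := by rw [← Real.rpow_add he']; norm_num

/-! ### Averaging over differences of values -/

/-- The pairs of exponents `(m₁, m₂)` with `1 ≤ m₁ ≤ M / 2 < m₂ ≤ M`. Keeping `m₁ < m₂` makes the
value determine the pair. -/
def pairs (M : ℕ) : Finset (ℕ × ℕ) := Finset.Icc 1 (M / 2) ×ˢ Finset.Ioc (M / 2) M

/-- The value `g ^ m₁ ^ 2 + g ^ m₂ ^ 2` at `x = (m₁, m₂)`. -/
def val (g : ℕ) (x : ℕ × ℕ) : ℕ := g ^ (x.1 ^ 2) + g ^ (x.2 ^ 2)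

lemma mem_pairs {M : ℕ} {x : ℕ × ℕ} (hx : x ∈ pairs M) :
    x.1 ∈ Finset.Icc 1 M ∧ x.2 ∈ Finset.Icc 1 M ∧ x.1 < x.2 := by
  simp only [pairs, Finset.mem_product, Finset.mem_Icc, Finset.mem_Ioc] at hx ⊢
  omega

/-- The larger exponent dominates the value. -/
lemma val_lt {g : ℕ} (hg : 2 ≤ g) {x y : ℕ × ℕ} (hx : x.1 < x.2) (h : x.2 < y.2) :
    val g x < val g y := by
  have h1 : g ^ (x.1 ^ 2) < g ^ (x.2 ^ 2) := Nat.pow_lt_pow_right hg (Nat.pow_lt_pow_left hx (by norm_num))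
  have h2 : g ^ (x.2 ^ 2 + 1) ≤ g ^ (y.2 ^ 2) :=
    Nat.pow_le_pow_right (by omega) (Nat.pow_lt_pow_left h (by norm_num))
  have h3 : g ^ (x.2 ^ 2) * 2 ≤ g ^ (x.2 ^ 2 + 1) := by
    rw [pow_succ]; exact Nat.mul_le_mul_left _ hg
  have h4 : 0 < g ^ (y.1 ^ 2) := Nat.pow_pos (by omega)
  unfold val
  omega

lemma val_injOn {g : ℕ} (hg : 2 ≤ g) (M : ℕ) : Set.InjOn (val g) (pairs M) := by
  intro x hx y hy h
  have hx' := (mem_pairs hx).2.2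
  have hy' := (mem_pairs hy).2.2
  have h2 : x.2 = y.2 := by
    rcases lt_trichotomy x.2 y.2 with h1 | h1 | h1
    · exact absurd h (val_lt hg hx' h1).ne
    · exact h1
    · exact absurd h (val_lt hg hy' h1).ne'
  have h3 : g ^ (x.1 ^ 2) = g ^ (y.1 ^ 2) := by
    unfold val at h; rw [h2] at h; omega
  have h4 : x.1 ^ 2 = y.1 ^ 2 := Nat.pow_right_injective hg h3
  exact Prod.ext (Nat.pow_left_injective (by norm_num : 2 ≠ 0) h4) h2

/-- The pairs of exponent pairs whose values are congruent modulo `p`. -/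
noncomputable def congPairs (g M p : ℕ) : Finset ((ℕ × ℕ) × (ℕ × ℕ)) :=
  (pairs M ×ˢ pairs M).filter (fun u => (val g u.1 : ZMod p) = (val g u.2 : ZMod p))

lemma card_congPairs_le (g M p : ℕ) : ((congPairs g M p).card : ℝ) ≤ (M : ℝ) ^ 4 := by
  have hsub : congPairs g M p ⊆ (Finset.Icc 1 M ×ˢ Finset.Icc 1 M) ×ˢ
      (Finset.Icc 1 M ×ˢ Finset.Icc 1 M) := by
    intro u hu
    have hu := Finset.mem_product.1 (Finset.mem_filter.1 hu).1
    have h1 := mem_pairs hu.1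
    have h2 := mem_pairs hu.2
    simp only [Finset.mem_product]
    exact ⟨⟨h1.1, h1.2.1⟩, h2.1, h2.2.1⟩
  have := Finset.card_le_card hsub
  simp only [Finset.card_product, Nat.card_Icc, Nat.add_sub_cancel] at this
  calc ((congPairs g M p).card : ℝ) ≤ ((M * M * (M * M) : ℕ) : ℝ) := Nat.cast_le.2 this
    _ = _ := by push_cast; ring

/-- Three of the four exponents are free; the congruence restricts the remaining one by
`card_pow_sq_le`. -/
lemma card_congPairs_le_of_good {κ : ℝ} (hκ : 0 < κ) {g p M : ℕ} (hp : p.Prime) (hgood : Good g p)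
    (hpM : (p : ℝ) ≤ κ * (M : ℝ) ^ 2) :
    ((congPairs g M p).card : ℝ)
      ≤ 2 * 64 ^ 3 * (1 + √κ) * (M : ℝ) ^ 4 * (p : ℝ) ^ (-(1 / 18) : ℝ) := by
  set B : ℝ := 2 * 64 ^ 3 * (1 + √κ) * M * (p : ℝ) ^ (-(1 / 18) : ℝ) with hB
  have hB0 : 0 ≤ B := by positivity
  set I := Finset.Icc 1 M
  have h1 : (congPairs g M p).card ≤ ⌊B⌋₊ * (I ×ˢ (I ×ˢ I)).card := by
    refine Finset.card_le_mul_card_image_of_maps_to (f := fun u => (u.1.2, u.2)) ?_ _ ?_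
    · intro u hu
      have hu := Finset.mem_product.1 (Finset.mem_filter.1 hu).1
      have h1 := mem_pairs hu.1
      have h2 := mem_pairs hu.2
      simp only [Finset.mem_product]
      exact ⟨h1.2.1, h2.1, h2.2.1⟩
    · rintro ⟨b, y⟩ _
      refine Nat.le_floor (le_trans (Nat.cast_le.2 ?_) (card_pow_sq_le hκ hp hgood hpM
        ((val g y : ZMod p) - (g : ZMod p) ^ (b ^ 2))))
      refine Finset.card_le_card_of_injOn (fun u => u.1.1) ?_ ?_
      · intro u hu
        simp only [Finset.coe_filter, Set.mem_ofPred_eq, congPairs, Finset.mem_filter,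
          Finset.mem_product] at hu ⊢
        obtain ⟨⟨hu1, hu2⟩, hu3⟩ := hu
        simp only [Prod.mk.injEq] at hu3
        refine ⟨(mem_pairs hu1.1).1, ?_⟩
        rw [← hu3.2, ← hu2, ← hu3.1]
        simp [val]
      · intro u hu v hv huv
        simp only [Finset.coe_filter, Set.mem_ofPred_eq, Prod.mk.injEq] at hu hv huv
        exact Prod.ext (Prod.ext huv (hu.2.1.trans hv.2.1.symm)) (hu.2.2.trans hv.2.2.symm)
  have h2 : (I ×ˢ (I ×ˢ I)).card = M ^ 3 := by
    simp only [I, Finset.card_product, Nat.card_Icc, Nat.add_sub_cancel]; ring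
  rw [h2] at h1
  calc ((congPairs g M p).card : ℝ) ≤ (⌊B⌋₊ : ℝ) * (M : ℝ) ^ 3 := by exact_mod_cast h1
    _ ≤ B * (M : ℝ) ^ 3 := by gcongr; exact Nat.floor_le hB0
    _ = _ := by rw [hB]; ring

/-- The absolute difference `|a - b|`; one of the two truncated differences vanishes. -/
def adiff (a b : ℕ) : ℕ := (a - b) + (b - a)

/-- The sum bounding the singular factor in `HH_sq_le` is bounded on average over differences of
values. After exchanging sums, good primes are handled by `card_congPairs_le_of_good` and the others
trivially by `sum_bad_le`. -/
lemma average_le {g : ℕ} (hg : 2 ≤ g) {κ : ℝ} (hκ : 0 < κ) : ∃ C : ℝ, 0 ≤ C ∧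
    ∀ (M : ℕ) (L : ℝ), L ≤ κ * (M : ℝ) ^ 2 →
    ∑ u ∈ (pairs M ×ˢ pairs M).filter (fun u => val g u.1 ≠ val g u.2),
      ∑ p ∈ (adiff (val g u.1) (val g u.2)).primeFactors with (p : ℕ) ≤ L,
        (p : ℝ) ^ (-(35 / 36) : ℝ) ≤ C * (M : ℝ) ^ 4 := by
  obtain ⟨C₁, hC₁, hbad⟩ := sum_bad_le hg
  have hsum : Summable (fun n : ℕ => (n : ℝ) ^ (-(37 / 36) : ℝ)) :=
    Real.summable_nat_rpow.2 (by norm_num)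
  set Z := ∑' n : ℕ, (n : ℝ) ^ (-(37 / 36) : ℝ)
  have hZ : 0 ≤ Z := tsum_nonneg fun n => by positivity
  set A : ℝ := 2 * 64 ^ 3 * (1 + √κ)
  have hA : 0 ≤ A := by positivity
  refine ⟨A * Z + C₁, by positivity, fun M L hL => ?_⟩
  set Q := (Finset.range (⌊L⌋₊ + 1)).filter (fun p : ℕ => p.Prime ∧ (p : ℝ) ≤ L)
  set U := (pairs M ×ˢ pairs M).filter (fun u => val g u.1 ≠ val g u.2)
  have h1 : ∑ u ∈ U, ∑ p ∈ (adiff (val g u.1) (val g u.2)).primeFactors with (p : ℕ) ≤ L,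
        (p : ℝ) ^ (-(35 / 36) : ℝ) ≤
      ∑ u ∈ U, ∑ p ∈ Q, if u ∈ congPairs g M p then (p : ℝ) ^ (-(35 / 36) : ℝ) else 0 := by
    refine Finset.sum_le_sum fun u hu => ?_
    rw [← Finset.sum_filter]
    refine Finset.sum_le_sum_of_subset_of_nonneg ?_ fun _ _ _ => by positivity
    intro p hp
    obtain ⟨hp1, hp2⟩ := Finset.mem_filter.1 hp
    have hpp := Nat.prime_of_mem_primeFactors hp1
    have hd := Nat.dvd_of_mem_primeFactors hp1
    simp only [Q, congPairs, Finset.mem_filter, Finset.mem_range]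
    refine ⟨⟨Nat.lt_succ_of_le (Nat.le_floor hp2), hpp, hp2⟩, (Finset.mem_filter.1 hu).1, ?_⟩
    unfold adiff at hd
    rcases le_total (val g u.1) (val g u.2) with h | h
    · rw [Nat.sub_eq_zero_of_le h, zero_add] at hd
      exact (ZMod.natCast_eq_natCast_iff _ _ _).2 ((Nat.modEq_iff_dvd' h).2 hd)
    · rw [Nat.sub_eq_zero_of_le h, add_zero] at hd
      exact ((ZMod.natCast_eq_natCast_iff _ _ _).2 ((Nat.modEq_iff_dvd' h).2 hd)).symm
  have h2 : ∀ p ∈ Q, (∑ u ∈ U, if u ∈ congPairs g M p then (p : ℝ) ^ (-(35 / 36) : ℝ) else 0)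
      ≤ (congPairs g M p).card * (p : ℝ) ^ (-(35 / 36) : ℝ) := by
    intro p _
    rw [← Finset.sum_filter, Finset.sum_const, nsmul_eq_mul]
    gcongr
    intro u hu
    exact (Finset.mem_filter.1 hu).2
  refine h1.trans ?_
  rw [Finset.sum_comm]
  refine (Finset.sum_le_sum h2).trans ?_
  rw [← Finset.sum_filter_add_sum_filter_not Q (fun p => Good g p), add_mul]
  refine add_le_add ?_ ?_
  · calc _ ≤ ∑ p ∈ Q with Good g p, A * (M : ℝ) ^ 4 * (p : ℝ) ^ (-(37 / 36) : ℝ) := by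
          refine Finset.sum_le_sum fun p hp => ?_
          obtain ⟨hpQ, hgood⟩ := Finset.mem_filter.1 hp
          obtain ⟨-, hpp, hpL⟩ := Finset.mem_filter.1 hpQ
          have hp0 : (0 : ℝ) < p := by exact_mod_cast hpp.pos
          have := card_congPairs_le_of_good hκ hpp hgood (hpL.trans hL)
          calc _ ≤ A * (M : ℝ) ^ 4 * (p : ℝ) ^ (-(1 / 18) : ℝ) * (p : ℝ) ^ (-(35 / 36) : ℝ) := by
                gcongr
            _ = _ := by rw [mul_assoc, ← Real.rpow_add hp0]; norm_num
      _ = A * (M : ℝ) ^ 4 * ∑ p ∈ Q with Good g p, (p : ℝ) ^ (-(37 / 36) : ℝ) := by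
          rw [Finset.mul_sum]
      _ ≤ A * (M : ℝ) ^ 4 * Z := by
          gcongr
          exact hsum.sum_le_tsum _ fun n _ => by positivity
      _ = _ := by ring
  · calc _ ≤ ∑ p ∈ Q with ¬ Good g p, (M : ℝ) ^ 4 * (p : ℝ) ^ (-(35 / 36) : ℝ) := by
          refine Finset.sum_le_sum fun p _ => ?_
          have := card_congPairs_le g M p
          gcongr
      _ = (M : ℝ) ^ 4 * ∑ p ∈ Q with ¬ Good g p, (p : ℝ) ^ (-(35 / 36) : ℝ) := by
          rw [Finset.mul_sum]
      _ ≤ (M : ℝ) ^ 4 * C₁ := by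
          gcongr
          exact hbad _ (fun p hp => (Finset.mem_filter.1 (Finset.mem_filter.1 hp).1).2.1)
            (fun p hp => (Finset.mem_filter.1 hp).2)
      _ = _ := by ring

/-! ### The second moment -/

open scoped Pointwise Combinatorics.Additive

lemma card_pairs (M : ℕ) : (pairs M).card = (M / 2) * (M - M / 2) := by
  simp [pairs]

lemma card_pairs_le (M : ℕ) : (pairs M).card ≤ M ^ 2 := by
  rw [card_pairs, sq]
  exact Nat.mul_le_mul (Nat.div_le_self _ _) (Nat.sub_le _ _)

lemma le_card_pairs {M : ℕ} (hM : 2 ≤ M) : M ^ 2 ≤ 8 * (pairs M).card := by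
  rw [card_pairs]
  have h1 : M ≤ 4 * (M / 2) := by omega
  have h2 : M ≤ 2 * (M - M / 2) := by omega
  calc M ^ 2 = M * M := sq M
    _ ≤ (4 * (M / 2)) * (2 * (M - M / 2)) := Nat.mul_le_mul h1 h2
    _ = _ := by ring

/-- The additive energy of a set of primes and an arbitrary set `t`, split into its diagonal part
and the prime pairs whose difference is a nonzero difference of elements of `t`. -/
lemma addEnergy_le {s t : Finset ℕ} {x : ℕ} (hs : ∀ p ∈ s, p.Prime ∧ p < x) :
    Finset.addEnergy s t ≤ s.card * t.card + ∑ u ∈ (t ×ˢ t).filter (fun u => u.1 ≠ u.2),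
      ((Finset.range x).filter (fun n => n.Prime ∧ (n + adiff u.1 u.2).Prime)).card := by
  unfold Finset.addEnergy
  rw [Finset.card_eq_sum_card_fiberwise (f := Prod.snd) (t := t ×ˢ t) (by
    intro v hv
    have hv' := (Finset.mem_filter.1 hv).1
    exact (Finset.mem_product.1 hv').2)]
  rw [← Finset.sum_filter_add_sum_filter_not (t ×ˢ t) (fun u => u.1 = u.2)]
  refine Nat.add_le_add ?_ (Finset.sum_le_sum ?_)
  · refine (Finset.sum_le_card_nsmul _ _ s.card ?_).trans ?_
    · intro u hu
      obtain ⟨-, hu⟩ := Finset.mem_filter.1 hu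
      refine Finset.card_le_card_of_injOn (fun v => v.1.1) ?_ ?_
      · intro v hv
        simp only [Finset.coe_filter, Finset.mem_filter, Finset.mem_product, Set.mem_ofPred_eq] at hv
        exact hv.1.1.1.1
      · rintro ⟨⟨a, b⟩, c, d⟩ hv ⟨⟨a', b'⟩, c', d'⟩ hw h
        simp only [Finset.coe_filter, Finset.mem_filter, Finset.mem_product,
          Set.mem_ofPred_eq] at hv hw h
        obtain ⟨⟨-, hv1⟩, rfl⟩ := hv
        obtain ⟨⟨-, hw1⟩, hw2⟩ := hw
        simp only [Prod.mk.injEq] at hw2 ⊢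
        simp only at hu
        omega
    · rw [smul_eq_mul, mul_comm]
      refine Nat.mul_le_mul_left _ (Finset.card_le_card_of_injOn Prod.fst ?_ ?_)
      · intro u hu
        simp only [Finset.coe_filter, Finset.mem_product, Set.mem_ofPred_eq] at hu
        exact hu.1.1
      · rintro ⟨a, b⟩ hu ⟨c, d⟩ hv h
        simp only [Finset.coe_filter, Finset.mem_product, Set.mem_ofPred_eq] at hu hv h
        simp only [Prod.mk.injEq]
        omega
  · intro u hu
    refine Finset.card_le_card_of_injOn (fun v => min v.1.1 v.1.2) ?_ ?_
    · rintro ⟨⟨a, b⟩, c, d⟩ hv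
      simp only [Finset.coe_filter, Finset.mem_filter, Finset.mem_product,
        Set.mem_ofPred_eq, Finset.mem_range] at hv ⊢
      obtain ⟨⟨⟨⟨ha, hb⟩, -⟩, hv1⟩, rfl⟩ := hv
      obtain ⟨ha1, ha2⟩ := hs a ha
      obtain ⟨hb1, hb2⟩ := hs b hb
      simp only [adiff]
      rcases le_total a b with hab | hab
      · rw [min_eq_left hab]
        refine ⟨ha2, ha1, ?_⟩
        rwa [show a + (c - d + (d - c)) = b by omega]
      · rw [min_eq_right hab]
        refine ⟨hb2, hb1, ?_⟩
        rwa [show b + (c - d + (d - c)) = a by omega]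
    · rintro ⟨⟨a, b⟩, c, d⟩ hv ⟨⟨a', b'⟩, c', d'⟩ hw h
      simp only [Finset.coe_filter, Finset.mem_filter, Finset.mem_product,
        Set.mem_ofPred_eq] at hv hw h
      obtain ⟨⟨-, hv1⟩, rfl⟩ := hv
      obtain ⟨⟨-, hw1⟩, hw2⟩ := hw
      simp only [Prod.mk.injEq] at hw2 ⊢
      omega

/-- The choice of the range `M ≍ √(log x)` for the exponents. -/
lemma exists_range {g : ℕ} (hg : 2 ≤ g) : ∃ κ : ℝ, 0 < κ ∧ ∃ x₀ : ℕ, ∀ x : ℕ, x₀ ≤ x →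
    ∃ M : ℕ, 2 ≤ M ∧ g ^ (M ^ 2) ≤ x / 4 ∧ Real.log x ≤ κ * (M : ℝ) ^ 2 ∧
      (M : ℝ) ^ 2 ≤ 2 * Real.log x := by
  have hg1 : (1 : ℝ) < g := by exact_mod_cast hg
  have hlg : 0 < Real.log g := Real.log_pos hg1
  refine ⟨2 + 4 * Real.log g, by positivity, 4 * g ^ 4, fun x hx => ?_⟩
  have hx4 : g ^ 4 ≤ x / 4 := by omega
  have hgp : 0 < g ^ 4 := Nat.pow_pos (by omega)
  have hk : 4 ≤ Nat.log g (x / 4) := Nat.le_log_of_pow_le hg hx4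
  set k := Nat.log g (x / 4) with hkdef
  have hM2 : 2 ≤ Nat.sqrt k := Nat.le_sqrt.2 (by omega)
  set M := Nat.sqrt k with hMdef
  have hMk : M ^ 2 ≤ k := Nat.sqrt_le' k
  have hkM : k + 1 ≤ (M + 1) ^ 2 := Nat.lt_succ_sqrt' k
  have hpow : g ^ (M ^ 2) ≤ x / 4 :=
    (Nat.pow_le_pow_right (by omega) hMk).trans (Nat.pow_log_le_self g (by omega))
  have hx0 : 0 < x := by omega
  have hx0' : (0 : ℝ) < x := by exact_mod_cast hx0
  refine ⟨M, hM2, hpow, ?_, ?_⟩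
  · have h1 : x / 4 < g ^ ((M + 1) ^ 2) :=
      (Nat.lt_pow_succ_log_self hg (x / 4)).trans_le (Nat.pow_le_pow_right (by omega) hkM)
    have h2 : x ≤ 4 * g ^ ((M + 1) ^ 2) := by omega
    have h3 : (x : ℝ) ≤ 4 * (g : ℝ) ^ ((M + 1) ^ 2) := by exact_mod_cast h2
    have h4 := Real.log_le_log hx0' h3
    rw [Real.log_mul (by norm_num) (by positivity), Real.log_pow] at h4
    push_cast at h4
    have h5 : Real.log 4 ≤ 2 := by
      rw [show (4 : ℝ) = 2 ^ 2 by norm_num, Real.log_pow]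
      have := Real.log_two_lt_d9
      push_cast; linarith
    have hM1 : (1 : ℝ) ≤ M := by exact_mod_cast (by omega : 1 ≤ M)
    have h6 : ((M : ℝ) + 1) ^ 2 * Real.log g ≤ (4 * (M : ℝ) ^ 2) * Real.log g := by
      apply mul_le_mul_of_nonneg_right _ hlg.le
      nlinarith
    nlinarith
  · have h1 : (2 : ℕ) ^ (M ^ 2) ≤ x :=
      (Nat.pow_le_pow_left hg _).trans (hpow.trans (Nat.div_le_self _ _))
    have h2 : (2 : ℝ) ^ (M ^ 2) ≤ x := by exact_mod_cast h1
    have h3 := Real.log_le_log (by positivity) h2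
    rw [Real.log_pow] at h3
    push_cast at h3
    have := Real.log_two_gt_d9
    nlinarith [sq_nonneg (M : ℝ)]

lemma le_primeCounting_half : ∃ x₀ : ℕ, ∀ x : ℕ, x₀ ≤ x →
    (x : ℝ) / (12 * Real.log x) ≤ Nat.primeCounting (x / 2) := by
  have h1 : ∀ᶠ y : ℝ in atTop, Real.log y ≤ (1 / 20) * y := by
    have := Real.isLittleO_log_id_atTop.bound (by norm_num : (0 : ℝ) < 1 / 20)
    filter_upwards [this, eventually_ge_atTop 0] with y hy hy0
    simp only [id, Real.norm_eq_abs, abs_of_nonneg hy0] at hy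
    exact (le_abs_self _).trans hy
  obtain ⟨A, hA⟩ := eventually_atTop.1 h1
  refine ⟨2 * ⌈A⌉₊ + 100, fun x hx => ?_⟩
  set n := x / 2 with hn
  have hn1 : 50 ≤ n := by omega
  have hnA : ⌈A⌉₊ ≤ n := by omega
  have hn1' : (50 : ℝ) ≤ n := by exact_mod_cast hn1
  have hA' : A ≤ (n : ℝ) + 1 := (Nat.le_ceil A).trans (by
    have : (⌈A⌉₊ : ℝ) ≤ n := by exact_mod_cast hnA
    linarith)
  have hlog := hA _ hA'
  have hxn : (x : ℝ) ≤ 3 * n := by exact_mod_cast (by omega : x ≤ 3 * n)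
  have hnx : (n : ℝ) ≤ x := by exact_mod_cast (by omega : n ≤ x)
  have hln : 0 < Real.log n := Real.log_pos (by linarith)
  have hlnx : Real.log n ≤ Real.log x := Real.log_le_log (by linarith) hnx
  refine le_trans ?_ (Chebyshev.pi_ge n)
  have h2 := Real.log_two_gt_d9
  have h3 : (n : ℝ) / 4 ≤ n * Real.log 2 - Real.log (n + 1) := by nlinarith
  calc (x : ℝ) / (12 * Real.log x) ≤ (3 * n) / (12 * Real.log n) := by gcongr
    _ = (n / 4) / Real.log n := by field_simp; norm_num
    _ ≤ _ := by gcongr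

lemma primeCounting_half_le : ∃ x₀ : ℕ, ∀ x : ℕ, x₀ ≤ x →
    (Nat.primeCounting (x / 2) : ℝ) ≤ 2 * (x / Real.log x) := by
  obtain ⟨A, hA⟩ := eventually_atTop.1
    (Chebyshev.eventually_primeCounting_le (by norm_num : (0 : ℝ) < 1 / 2))
  refine ⟨⌈A⌉₊ + 2, fun x hx => ?_⟩
  have hx' : A ≤ (x : ℝ) := (Nat.le_ceil A).trans (by exact_mod_cast (by omega : ⌈A⌉₊ ≤ x))
  have h := hA x hx'
  rw [Nat.floor_natCast] at h
  have hmono : (Nat.primeCounting (x / 2) : ℝ) ≤ Nat.primeCounting x := by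
    exact_mod_cast Nat.monotone_primeCounting (Nat.div_le_self _ _)
  have hx2 : (2 : ℝ) ≤ x := by exact_mod_cast (by omega : 2 ≤ x)
  have hlx : 0 < Real.log x := Real.log_pos (by linarith)
  have h4 : Real.log 4 ≤ 3 / 2 := by
    rw [show (4 : ℝ) = 2 ^ 2 by norm_num, Real.log_pow]
    have := Real.log_two_lt_d9
    push_cast; linarith
  refine (hmono.trans h).trans ?_
  rw [mul_div_assoc]
  gcongr
  linarith

/-- The second moment is of the expected order of magnitude: a linear upper bound for the additive
energy of the primes up to `x / 2` and the values `g ^ m₁ ^ 2 + g ^ m₂ ^ 2`. -/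
lemma addEnergy_primes_le {g : ℕ} (hg : 2 ≤ g) {κ : ℝ} (hκ : 0 < κ) :
    ∃ C : ℝ, 0 < C ∧ ∃ x₀ : ℕ, ∀ x : ℕ, x₀ ≤ x → ∀ M : ℕ, g ^ (M ^ 2) ≤ x / 4 →
      Real.log x ≤ κ * (M : ℝ) ^ 2 → (M : ℝ) ^ 2 ≤ 2 * Real.log x →
      (Finset.addEnergy ((Finset.range (x / 2 + 1)).filter Nat.Prime) ((pairs M).image (val g)) : ℝ)
        ≤ C * x := by
  obtain ⟨C₁, hC₁, x₁, h₁⟩ := prime_pairs_asymp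
  obtain ⟨C₂, hC₂, h₂⟩ := HH_sq_le
  obtain ⟨C₃, hC₃, h₃⟩ := average_le hg hκ
  obtain ⟨x₂, h₄⟩ := primeCounting_half_le
  refine ⟨4 + C₁ * C₂ * (1 + C₃) * 4, by positivity, x₁ + x₂ + 3, fun x hx M hpow hL hML => ?_⟩
  set s := (Finset.range (x / 2 + 1)).filter Nat.Prime with hs
  set t := (pairs M).image (val g) with ht
  have hx3 : (3 : ℝ) ≤ x := by exact_mod_cast (by omega : 3 ≤ x)
  have hlx : 0 < Real.log x := Real.log_pos (by linarith)
  have hscard : (s.card : ℝ) ≤ 2 * (x / Real.log x) := by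
    refine le_trans (le_of_eq ?_) (h₄ x (by omega))
    rw [Nat.primeCounting, Nat.primeCounting', Nat.count_eq_card_filter_range]
  have htcard : (t.card : ℝ) ≤ (M : ℝ) ^ 2 := by
    exact_mod_cast Finset.card_image_le.trans (card_pairs_le M)
  have hval : ∀ u ∈ pairs M, val g u ≤ x := by
    intro u hu
    obtain ⟨hu1, hu2, -⟩ := mem_pairs hu
    have e1 : g ^ (u.1 ^ 2) ≤ g ^ (M ^ 2) :=
      Nat.pow_le_pow_right (by omega) (Nat.pow_le_pow_left (Finset.mem_Icc.1 hu1).2 2)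
    have e2 : g ^ (u.2 ^ 2) ≤ g ^ (M ^ 2) :=
      Nat.pow_le_pow_right (by omega) (Nat.pow_le_pow_left (Finset.mem_Icc.1 hu2).2 2)
    unfold val
    omega
  have hE := addEnergy_le (s := s) (t := t) (x := x) (by
    intro p hp
    rw [hs, Finset.mem_filter, Finset.mem_range] at hp
    exact ⟨hp.2, by omega⟩)
  -- The off-diagonal sum over values is a sum over pairs of pairs of exponents.
  have hre : ∑ u ∈ (t ×ˢ t).filter (fun u => u.1 ≠ u.2),
        ((Finset.range x).filter (fun n => n.Prime ∧ (n + adiff u.1 u.2).Prime)).card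
      = ∑ u ∈ (pairs M ×ˢ pairs M).filter (fun u => val g u.1 ≠ val g u.2),
        ((Finset.range x).filter
          (fun n => n.Prime ∧ (n + adiff (val g u.1) (val g u.2)).Prime)).card := by
    have himg : (t ×ˢ t).filter (fun u => u.1 ≠ u.2)
        = ((pairs M ×ˢ pairs M).filter (fun u => val g u.1 ≠ val g u.2)).image
            (Prod.map (val g) (val g)) := by
      ext ⟨a, b⟩
      simp only [ht, Finset.mem_filter, Finset.mem_product, Finset.mem_image, Prod.exists,
        Prod.map_apply, Prod.mk.injEq, ne_eq]
      constructor
      · rintro ⟨⟨⟨a1, a2, ha, rfl⟩, ⟨b1, b2, hb, rfl⟩⟩, hab⟩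
        exact ⟨a1, a2, b1, b2, ⟨⟨ha, hb⟩, hab⟩, rfl, rfl⟩
      · rintro ⟨a1, a2, b1, b2, ⟨⟨ha, hb⟩, hab⟩, rfl, rfl⟩
        exact ⟨⟨⟨a1, a2, ha, rfl⟩, ⟨b1, b2, hb, rfl⟩⟩, hab⟩
    rw [himg, Finset.sum_image]
    · rfl
    · rintro ⟨a, b⟩ hu ⟨c, d⟩ hv h
      simp only [Finset.coe_filter, Finset.mem_product, Set.mem_ofPred_eq, Prod.map_apply,
        Prod.mk.injEq] at hu hv h
      rw [val_injOn hg M hu.1.1 hv.1.1 h.1, val_injOn hg M hu.1.2 hv.1.2 h.2]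
  rw [hre] at hE
  set U := (pairs M ×ˢ pairs M).filter (fun u => val g u.1 ≠ val g u.2) with hU
  have hUcard : (U.card : ℝ) ≤ (M : ℝ) ^ 4 := by
    have : U.card ≤ M ^ 2 * M ^ 2 := (Finset.card_filter_le _ _).trans (by
      rw [Finset.card_product]
      exact Nat.mul_le_mul (card_pairs_le M) (card_pairs_le M))
    calc (U.card : ℝ) ≤ ((M ^ 2 * M ^ 2 : ℕ) : ℝ) := by exact_mod_cast this
      _ = (M : ℝ) ^ 4 := by push_cast; ring
  have hoff : ∀ u ∈ U, (((Finset.range x).filter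
      (fun n => n.Prime ∧ (n + adiff (val g u.1) (val g u.2)).Prime)).card : ℝ)
      ≤ C₁ * (x / Real.log x ^ 2) * (C₂ * (1 + ∑ p ∈ (adiff (val g u.1) (val g u.2)).primeFactors
          with (p : ℕ) ≤ Real.log x, (p : ℝ) ^ (-(35 / 36) : ℝ))) := by
    intro u hu
    rw [hU, Finset.mem_filter, Finset.mem_product] at hu
    have hv1 := hval _ hu.1.1
    have hv2 := hval _ hu.1.2
    have hne := hu.2
    have hpos : 0 < adiff (val g u.1) (val g u.2) := by unfold adiff; omega
    have hle : adiff (val g u.1) (val g u.2) ≤ x := by unfold adiff; omega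
    refine (h₁ x (by omega) _ hpos).trans ?_
    refine mul_le_mul_of_nonneg_left (h₂ _ _ hpos hlx ?_) (by positivity)
    exact Real.log_le_log (by exact_mod_cast hpos) (by exact_mod_cast hle)
  have hE' : (Finset.addEnergy s t : ℝ) ≤ s.card * t.card + ∑ u ∈ U,
      (((Finset.range x).filter
        (fun n => n.Prime ∧ (n + adiff (val g u.1) (val g u.2)).Prime)).card : ℝ) := by
    exact_mod_cast hE
  refine hE'.trans ?_
  have hM4 : (M : ℝ) ^ 4 ≤ 4 * Real.log x ^ 2 := by
    calc (M : ℝ) ^ 4 = ((M : ℝ) ^ 2) ^ 2 := by ring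
      _ ≤ (2 * Real.log x) ^ 2 := by gcongr
      _ = _ := by ring
  have hdiag : (s.card : ℝ) * t.card ≤ 4 * x := by
    calc (s.card : ℝ) * t.card ≤ (2 * (x / Real.log x)) * (2 * Real.log x) := by
          gcongr
          exact htcard.trans hML
      _ = 4 * x := by field_simp; norm_num
  have hav := h₃ M (Real.log x) hL
  have hsum := Finset.sum_le_sum hoff
  rw [← Finset.mul_sum, ← Finset.mul_sum, Finset.sum_add_distrib, Finset.sum_const,
    nsmul_eq_mul, mul_one] at hsum
  have hoff2 : C₁ * (x / Real.log x ^ 2) * (C₂ * ((U.card : ℝ) + ∑ u ∈ U,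
      ∑ p ∈ (adiff (val g u.1) (val g u.2)).primeFactors
          with (p : ℕ) ≤ Real.log x, (p : ℝ) ^ (-(35 / 36) : ℝ)))
      ≤ C₁ * C₂ * (1 + C₃) * 4 * x := by
    calc _ ≤ C₁ * (x / Real.log x ^ 2) * (C₂ * ((M : ℝ) ^ 4 + C₃ * (M : ℝ) ^ 4)) := by
          gcongr
      _ = C₁ * C₂ * (1 + C₃) * (x / Real.log x ^ 2) * (M : ℝ) ^ 4 := by ring
      _ ≤ C₁ * C₂ * (1 + C₃) * (x / Real.log x ^ 2) * (4 * Real.log x ^ 2) := by gcongr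
      _ = _ := by field_simp
  have := hsum.trans hoff2
  linarith

end Romanoff

/-- For each fixed integer `g ≥ 2`, the set of natural numbers representable as
`p + g^(m₁²) + g^(m₂²)` with `p` prime and `m₁, m₂` natural numbers has positive lower
asymptotic density. -/
theorem romanoff_type_positive_lower_density_general (g : ℕ) (hg : 2 ≤ g) :
    ∃ c : ℝ, 0 < c ∧ ∃ x₀ : ℕ, ∀ x : ℕ, x₀ ≤ x →
      c * x ≤ ((Finset.Icc 1 x).filter
        (fun n => ∃ p m₁ m₂ : ℕ, p.Prime ∧ n = p + g ^ (m₁ ^ 2) + g ^ (m₂ ^ 2))).card := by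
  open Romanoff Pointwise in
  obtain ⟨κ, hκ, x₁, h₁⟩ := exists_range hg
  obtain ⟨C, hC, x₂, h₂⟩ := addEnergy_primes_le hg hκ
  obtain ⟨x₃, h₃⟩ := le_primeCounting_half
  refine ⟨1 / ((96 * κ) ^ 2 * C), by positivity, x₁ + x₂ + x₃ + 3, fun x hx => ?_⟩
  obtain ⟨M, hM, hpow, hL, hML⟩ := h₁ x (by omega)
  have hE := h₂ x (by omega) M hpow hL hML
  have hπ := h₃ x (by omega)
  set s := (Finset.range (x / 2 + 1)).filter Nat.Prime with hs
  set t := (pairs M).image (val g) with ht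
  set V := (Finset.Icc 1 x).filter
    (fun n => ∃ p m₁ m₂ : ℕ, p.Prime ∧ n = p + g ^ (m₁ ^ 2) + g ^ (m₂ ^ 2)) with hV
  have hx3 : (3 : ℝ) ≤ x := by exact_mod_cast (by omega : 3 ≤ x)
  have hlx : 0 < Real.log x := Real.log_pos (by linarith)
  have hsub : s + t ⊆ V := by
    intro n hn
    obtain ⟨p, hp, v, hv, rfl⟩ := Finset.mem_add.1 hn
    obtain ⟨u, hu, rfl⟩ := Finset.mem_image.1 hv
    rw [hs, Finset.mem_filter, Finset.mem_range] at hp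
    obtain ⟨hu1, hu2, -⟩ := mem_pairs hu
    have e1 : g ^ (u.1 ^ 2) ≤ g ^ (M ^ 2) :=
      Nat.pow_le_pow_right (by omega) (Nat.pow_le_pow_left (Finset.mem_Icc.1 hu1).2 2)
    have e2 : g ^ (u.2 ^ 2) ≤ g ^ (M ^ 2) :=
      Nat.pow_le_pow_right (by omega) (Nat.pow_le_pow_left (Finset.mem_Icc.1 hu2).2 2)
    have hp2 := hp.2.two_le
    rw [hV, Finset.mem_filter, Finset.mem_Icc]
    refine ⟨?_, p, u.1, u.2, hp.2, ?_⟩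
    · unfold val; omega
    · unfold val; omega
  have hscard : (x : ℝ) / (12 * Real.log x) ≤ s.card := by
    refine hπ.trans (le_of_eq ?_)
    rw [Nat.primeCounting, Nat.primeCounting', Nat.count_eq_card_filter_range]
  have htcard : Real.log x / (8 * κ) ≤ t.card := by
    have e1 : t.card = (pairs M).card := Finset.card_image_of_injOn (val_injOn hg M)
    have e2 : (M : ℝ) ^ 2 ≤ 8 * t.card := by
      rw [e1]; exact_mod_cast le_card_pairs hM
    rw [div_le_iff₀ (by positivity)]
    calc Real.log x ≤ κ * (M : ℝ) ^ 2 := hL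
      _ ≤ κ * (8 * t.card) := by gcongr
      _ = _ := by ring
  -- Cauchy–Schwarz: `#s ^ 2 * #t ^ 2 ≤ #(s + t) * E[s, t]`.
  have hCS : (s.card : ℝ) ^ 2 * (t.card : ℝ) ^ 2 ≤ V.card * (C * x) := by
    have e1 : (s.card : ℝ) ^ 2 * (t.card : ℝ) ^ 2
        ≤ ((s + t).card : ℝ) * (Finset.addEnergy s t : ℝ) := by
      exact_mod_cast Finset.le_card_add_mul_addEnergy s t
    refine e1.trans ?_
    gcongr
  have hst : (x : ℝ) / (96 * κ) ≤ s.card * t.card := by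
    calc (x : ℝ) / (96 * κ) = (x / (12 * Real.log x)) * (Real.log x / (8 * κ)) := by
          field_simp; norm_num
      _ ≤ _ := by gcongr
  have hfin : ((x : ℝ) / (96 * κ)) ^ 2 ≤ V.card * (C * x) := by
    calc ((x : ℝ) / (96 * κ)) ^ 2 ≤ (s.card * t.card : ℝ) ^ 2 := by gcongr
      _ = (s.card : ℝ) ^ 2 * (t.card : ℝ) ^ 2 := by ring
      _ ≤ _ := hCS
  have hxp : (0 : ℝ) < C * x := by positivity
  refine le_of_mul_le_mul_right ?_ hxp
  refine le_trans (le_of_eq ?_) hfin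
  field_simp
end

section
/- There exists a positive integer s such that every sufficiently large integer n can be represented in the form n = p₁ + ⋯ + p_s + 2^(m₁²) + ⋯ + 2^(m_{2s}²), where p₁, …, p_s are primes and m₁, …, m_{2s} are natural numbers. -/
/-!
The powers of two are not needed as variables: all of them are taken equal to `2 ^ (1 ^ 2) = 2`, and
the theorem reduces to Shnirel'man's theorem that, for a suitable `s`, every large integer is a sum
of exactly `s` primes.

**From density to a basis.** Let `A` consist of `0`, `1` and all sums of two primes. By
Shnirel'man's inequality `1 - σ(A + B) ≤ (1 - σ A) (1 - σ B)`, a set containing `0` with positive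
Schnirelmann density satisfies `k • A = ℕ` for some `k` (`exists_nsmul_eq_univ`). Hence every integer
is a sum of at most `2 k` primes and at most `k` ones; a reserved constant, together with the ones,
is rewritten as a sum of primes `2` and `3` in such a way that the number of primes is exactly `s`.

**Positive density of the sums of two primes.** Let `r(N)` be the number of representations of `N` as
a sum of two primes. Chebyshev's bound gives `∑_{N ≤ x} r(N) ≥ π(x / 2) ^ 2 ≫ x ^ 2 / log ^ 2 x`. The
sieve gives `r(N) ≪ (x / log ^ 2 x) K(2 N) ^ 2` for `N ≤ x`, where `K(M) = ∏_{p ∣ M} (1 - 1 / p)⁻¹`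
(`card_primePairs_le_div_log`). Since the fourth power of `K` is bounded on average
(`exists_sum_totientRatio_le`), the Cauchy-Schwarz inequality shows that `≫ x` integers `N ≤ x` have
`r(N) > 0` (`exists_density_prime_add_prime`).

**The sieve.** Selberg's upper bound sieve is used in its dual form. For a prime `p ≥ 3` with `p ∤ N`
put `h(p) = 2 / (p - 2)`, and let `χ_p(n)` be `-1` if `n ≡ 0` or `n ≡ N` modulo `p`, and `h(p)`
otherwise. Then `χ_p` has mean `0` and mean square `h(p)`, so by the Chinese remainder theorem the
products `χ_T = ∏_{p ∈ T} χ_p` over finite sets `T` of primes are orthogonal on long intervals. The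
function `∑_T χ_T`, over the sets `T` with `∏ T ≤ D`, equals `G = ∑_T h(T)` at each unsifted `n`.
Summing its square over `n < X` bounds the number of unsifted `n` by `X / G + O(D ^ 6)`
(`selberg_sieve`). Finally, `G` is bounded from below by a sum of `2 ^ Ω(n) / n`, and therefore by the
square of a harmonic sum over integers coprime to `2 N` (`log_sq_le_sieveMass`).
-/

open Finset
open scoped Pointwise

/-! ### Shnirel'man's inequality -/

open scoped Classical in
/-- Counting form of Shnirel'man's inequality. Each gap of `A` following an element `a ∈ A` contains
the translates `a + b` with `b ∈ B`, and the gaps up to `n` have total length `n - A(n)`. The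
induction removes the last element of `A` together with the gap after it. -/
theorem card_add_ge {A B : Set ℕ} (hA : 0 ∈ A) (hB : 0 ∈ B) (n : ℕ) :
    (#{a ∈ Ioc 0 n | a ∈ A} : ℝ) +
      schnirelmannDensity B * (n - #{a ∈ Ioc 0 n | a ∈ A}) ≤ #{a ∈ Ioc 0 n | a ∈ A + B} := by
  induction n using Nat.strong_induction_on with
  | _ n ih =>
    -- `a` is the largest element of `A` up to `n`
    obtain ⟨a, haA, han, hmax⟩ : ∃ a ∈ A, a ≤ n ∧ ∀ b ∈ A, b ≤ n → b ≤ a := by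
      refine ⟨Nat.findGreatest (· ∈ A) n, Nat.findGreatest_spec (P := (· ∈ A)) (Nat.zero_le n) hA,
        Nat.findGreatest_le n, fun b hb hbn => Nat.le_findGreatest hbn hb⟩
    have hshift : #{b ∈ Ioc 0 (n - a) | b ∈ B} ≤ #{c ∈ Ioc a n | c ∈ A + B} := by
      refine card_le_card_of_injOn (a + ·) ?_ (fun x _ y _ h => by simpa using h)
      intro b hb
      simp only [coe_filter, mem_Ioc, Set.mem_ofPred_eq] at hb ⊢
      exact ⟨by omega, Set.add_mem_add haA hb.2⟩
    have hdens := schnirelmannDensity_mul_le_card_filter (A := B) (n := n - a)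
    have hshift' : (#{b ∈ Ioc 0 (n - a) | b ∈ B} : ℝ) ≤ #{c ∈ Ioc a n | c ∈ A + B} := by
      exact_mod_cast hshift
    rw [Nat.cast_sub han] at hdens
    rcases Nat.eq_zero_or_pos a with rfl | ha
    · have : #{x ∈ Ioc 0 n | x ∈ A} = 0 := by
        rw [card_eq_zero, filter_eq_empty_iff]
        intro x hx hxA
        simp only [mem_Ioc] at hx
        have := hmax x hxA hx.2
        omega
      rw [this]
      simp only [Nat.cast_zero, zero_add, sub_zero] at hdens ⊢
      linarith
    · have h1 : #{x ∈ Ioc 0 n | x ∈ A} = #{x ∈ Ioc 0 (a - 1) | x ∈ A} + 1 := by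
        rw [← card_insert_of_notMem (a := a) (by simp)]
        congr 1
        ext x
        simp only [mem_filter, mem_Ioc, mem_insert]
        constructor
        · rintro ⟨hx, hxA⟩
          have := hmax x hxA hx.2
          by_cases h : x = a
          · exact Or.inl h
          · exact Or.inr ⟨by omega, hxA⟩
        · rintro (rfl | ⟨hx, hxA⟩)
          · exact ⟨by omega, haA⟩
          · exact ⟨by omega, hxA⟩
      have h2 : #{x ∈ Ioc 0 (a - 1) | x ∈ A + B} + 1 + #{c ∈ Ioc a n | c ∈ A + B}
          ≤ #{x ∈ Ioc 0 n | x ∈ A + B} := by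
        rw [← card_insert_of_notMem (a := a) (by simp), ← card_union_of_disjoint]
        · refine card_le_card fun x => ?_
          simp only [mem_filter, mem_Ioc, mem_insert, mem_union]
          rintro ((rfl | h) | h)
          · exact ⟨by omega, by simpa using Set.add_mem_add haA hB⟩
          · exact ⟨by omega, h.2⟩
          · exact ⟨by omega, h.2⟩
        · rw [disjoint_left]
          intro x
          simp only [mem_filter, mem_Ioc, mem_insert]
          rintro (rfl | h) h' <;> omega
      have h3 := ih (a - 1) (by omega)
      rw [Nat.cast_sub (by omega : 1 ≤ a)] at h3
      have h2' : (#{x ∈ Ioc 0 (a - 1) | x ∈ A + B} : ℝ) + 1 + #{c ∈ Ioc a n | c ∈ A + B}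
          ≤ #{x ∈ Ioc 0 n | x ∈ A + B} := by exact_mod_cast h2
      rw [h1]
      push_cast at h3 ⊢
      linarith

open scoped Classical in
/-- Shnirel'man's inequality for the density of a sumset. -/
theorem one_sub_schnirelmannDensity_add_le {A B : Set ℕ} (hA : 0 ∈ A) (hB : 0 ∈ B) :
    1 - schnirelmannDensity (A + B) ≤
      (1 - schnirelmannDensity A) * (1 - schnirelmannDensity B) := by
  have : schnirelmannDensity A + schnirelmannDensity B
      - schnirelmannDensity A * schnirelmannDensity B ≤ schnirelmannDensity (A + B) := by
    rw [le_schnirelmannDensity_iff]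
    intro n hn
    have hn' : (0 : ℝ) < n := by exact_mod_cast hn
    rw [le_div_iff₀ hn']
    have h1 := card_add_ge hA hB n
    have h2 := schnirelmannDensity_mul_le_card_filter (A := A) (n := n)
    have h3 := schnirelmannDensity_le_one (A := B)
    nlinarith
  linarith

open scoped Classical in
/-- A set containing `0` with positive Schnirelmann density is an additive basis of the natural
numbers. -/
theorem exists_nsmul_eq_univ {A : Set ℕ} (hA : 0 ∈ A) (hpos : 0 < schnirelmannDensity A) :
    ∃ k : ℕ, k • A = Set.univ := by
  have h0 : ∀ k : ℕ, 0 ∈ k • A := fun k => by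
    induction k with
    | zero => simp
    | succ k ih => rw [succ_nsmul]; simpa using Set.add_mem_add ih hA
  have hle : ∀ k : ℕ, 1 - schnirelmannDensity (k • A) ≤ (1 - schnirelmannDensity A) ^ k := by
    intro k
    induction k with
    | zero => simpa using schnirelmannDensity_nonneg
    | succ k ih =>
      have h := one_sub_schnirelmannDensity_add_le (h0 k) hA
      have h1 := schnirelmannDensity_le_one (A := A)
      rw [pow_succ]
      simp only [succ_nsmul]
      exact h.trans (by gcongr)
  obtain ⟨k, hk⟩ := exists_pow_lt_of_lt_one (show (0 : ℝ) < 1 / 2 by norm_num)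
    (show 1 - schnirelmannDensity A < 1 by linarith)
  refine ⟨k + k, ?_⟩
  rw [add_nsmul]
  exact add_eq_univ_of_one_le_schirelmannDensity_add_schnirelmannDensity (h0 k) (h0 k)
    (by linarith [hle k])

/-! ### Sums of periodic functions -/

/-- The Chinese remainder theorem: functions with coprime periods are independent over a full
period. -/
theorem sum_range_mul_periodic {p m : ℕ} (hpm : p.Coprime m) (hp : 0 < p) (hm : 0 < m)
    {f g : ℕ → ℝ} (hf : Function.Periodic f p) (hg : Function.Periodic g m) :
    ∑ n ∈ range (p * m), f n * g n = (∑ n ∈ range p, f n) * ∑ n ∈ range m, g n := by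
  rw [sum_mul_sum, ← sum_product']
  refine sum_nbij' (fun n => (n % p, n % m))
    (fun x => (Nat.chineseRemainder hpm x.1 x.2 : ℕ)) ?_ ?_ ?_ ?_ ?_
  · intro n _
    simp [Nat.mod_lt _ hp, Nat.mod_lt _ hm]
  · intro x _
    simpa using Nat.chineseRemainder_lt_mul hpm x.1 x.2 hp.ne' hm.ne'
  · intro n hn
    have hn' : n < p * m := by simpa using hn
    have h := Nat.chineseRemainder_modEq_unique hpm (a := n % p) (b := n % m) (z := n)
      (Nat.mod_modEq n p).symm (Nat.mod_modEq n m).symm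
    have h2 := Nat.chineseRemainder_lt_mul hpm (n % p) (n % m) hp.ne' hm.ne'
    exact (h.eq_of_lt_of_lt hn' h2).symm
  · intro x hx
    simp only [mem_product, mem_range] at hx
    have h := (Nat.chineseRemainder hpm x.1 x.2).2
    ext
    · exact Eq.trans h.1 (Nat.mod_eq_of_lt hx.1)
    · exact Eq.trans h.2 (Nat.mod_eq_of_lt hx.2)
  · intro n _
    simp only [hf.map_mod_nat, hg.map_mod_nat]

theorem periodic_prod {V : Finset ℕ} {f : ℕ → ℕ → ℝ}
    (hf : ∀ p ∈ V, Function.Periodic (f p) p) :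
    Function.Periodic (fun n => ∏ p ∈ V, f p n) (∏ p ∈ V, p) := by
  intro n
  refine prod_congr rfl fun p hp => ?_
  obtain ⟨k, hk⟩ := dvd_prod_of_mem (fun p : ℕ => p) hp
  rw [hk, mul_comm]
  exact (hf p hp).nat_mul k n

theorem sum_prod_periodic (V : Finset ℕ) (hV : ∀ p ∈ V, p.Prime) (f : ℕ → ℕ → ℝ)
    (hf : ∀ p ∈ V, Function.Periodic (f p) p) :
    ∑ n ∈ range (∏ p ∈ V, p), ∏ p ∈ V, f p n = ∏ p ∈ V, ∑ n ∈ range p, f p n := by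
  induction V using Finset.induction_on with
  | empty => simp
  | insert q V hq ih =>
    simp only [mem_insert, forall_eq_or_imp] at hV hf
    simp only [prod_insert hq]
    rw [← ih hV.2 hf.2]
    refine sum_range_mul_periodic ?_ hV.1.pos (prod_pos fun p hp => (hV.2 p hp).pos) hf.1
      (periodic_prod hf.2)
    refine Nat.Coprime.prod_right fun p hp => (Nat.coprime_primes hV.1 (hV.2 p hp)).2 ?_
    rintro rfl; exact hq hp

/-- The sum of a `q`-periodic function over `X` consecutive integers is `X` times its mean, up to a
bounded error. -/
theorem abs_sum_range_sub_le {q : ℕ} (hq : 0 < q) {F : ℕ → ℝ} (hF : Function.Periodic F q)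
    {B : ℝ} (hB : ∀ n, |F n| ≤ B) (X : ℕ) :
    |∑ n ∈ range X, F n - X / q * ∑ n ∈ range q, F n| ≤ 2 * q * B := by
  have hq' : (0 : ℝ) < q := by exact_mod_cast hq
  have hB0 : 0 ≤ B := (abs_nonneg _).trans (hB 0)
  have hsum : ∀ Y, |∑ n ∈ range Y, F n| ≤ Y * B := fun Y =>
    (abs_sum_le_sum_abs _ _).trans ((sum_le_sum fun n _ => hB n).trans (by simp))
  induction X using Nat.strong_induction_on with
  | _ X ih =>
    rcases lt_or_ge X q with h | h
    · have hX : (X : ℝ) ≤ q := by exact_mod_cast h.le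
      calc _ ≤ |∑ n ∈ range X, F n| + |X / q * ∑ n ∈ range q, F n| := abs_sub _ _
        _ ≤ q * B + 1 * (q * B) := by
          rw [abs_mul]
          gcongr
          · exact (hsum X).trans (by gcongr)
          · rw [abs_of_nonneg (by positivity)]
            exact (div_le_one hq').2 hX
          · exact hsum q
        _ = _ := by ring
    · obtain ⟨Y, rfl⟩ := Nat.exists_eq_add_of_le h
      have := ih Y (by omega)
      rw [sum_range_add]
      convert this using 2
      have : ∀ n, F (q + n) = F n := fun n => by rw [add_comm]; exact hF n
      simp only [this]
      push_cast
      field_simp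
      ring

/-! ### Selberg's sieve for two residue classes -/

/-- Selberg's `h(p) = ρ(p) / (p - ρ(p))` with `ρ(p) = 2` excluded residue classes; meaningful for
`p ≥ 3`. -/
noncomputable def sieveWeight (p : ℕ) : ℝ := 2 / ((p : ℝ) - 2)

/-- The function `χ_p` on residues modulo `p` that is `-1` on the two excluded classes `0` and `N`,
and `h(p)` elsewhere. -/
noncomputable def sieveChar (N p n : ℕ) : ℝ :=
  if n % p = 0 ∨ n % p = N % p then -1 else sieveWeight p

theorem sieveWeight_pos {p : ℕ} (hp : 3 ≤ p) : 0 < sieveWeight p := by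
  have : (3 : ℝ) ≤ p := by exact_mod_cast hp
  exact div_pos two_pos (by linarith)

theorem periodic_sieveChar (N p : ℕ) : Function.Periodic (sieveChar N p) p := by
  intro n
  simp [sieveChar]

theorem abs_sieveChar_le {p : ℕ} (hp : 3 ≤ p) (N n : ℕ) : |sieveChar N p n| ≤ p := by
  have h3 : (3 : ℝ) ≤ p := by exact_mod_cast hp
  unfold sieveChar
  split_ifs
  · rw [abs_neg, abs_one]; linarith
  · rw [abs_of_pos (sieveWeight_pos hp), sieveWeight, div_le_iff₀ (by linarith)]
    nlinarith

theorem sum_two_classes {N p : ℕ} (hp : 0 < p) (hN : ¬ p ∣ N) (u v : ℝ) :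
    ∑ n ∈ range p, (if n % p = 0 ∨ n % p = N % p then u else v) = 2 * u + (p - 2) * v := by
  have hN' : N % p ≠ 0 := fun h => hN (Nat.dvd_of_mod_eq_zero h)
  have : ∀ n ∈ range p, (if n % p = 0 ∨ n % p = N % p then u else v) =
      v + ((if n = 0 then u - v else 0) + if n = N % p then u - v else 0) := by
    intro n hn
    rw [Nat.mod_eq_of_lt (mem_range.1 hn)]
    by_cases h0 : n = 0
    · subst h0
      simp [hN'.symm]
    · by_cases h1 : n = N % p
      · simp only [h1, hN']; simp
      · simp [h0, h1]
  rw [sum_congr rfl this]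
  simp only [sum_add_distrib, sum_ite_eq', mem_range, hp, Nat.mod_lt N hp, if_true]
  simp
  ring

theorem sum_sieveChar {N p : ℕ} (hp : 3 ≤ p) (hN : ¬ p ∣ N) :
    ∑ n ∈ range p, sieveChar N p n = 0 := by
  have h3 : (3 : ℝ) ≤ p := by exact_mod_cast hp
  have h2 : (p : ℝ) - 2 ≠ 0 := by linarith
  simp only [sieveChar]
  rw [sum_two_classes (by omega) hN, sieveWeight]
  field_simp
  ring

theorem sum_sieveChar_sq {N p : ℕ} (hp : 3 ≤ p) (hN : ¬ p ∣ N) :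
    ∑ n ∈ range p, sieveChar N p n * sieveChar N p n = p * sieveWeight p := by
  have h3 : (3 : ℝ) ≤ p := by exact_mod_cast hp
  have h2 : (p : ℝ) - 2 ≠ 0 := by linarith
  have : ∀ n, sieveChar N p n * sieveChar N p n =
      if n % p = 0 ∨ n % p = N % p then 1 else sieveWeight p * sieveWeight p := by
    intro n
    simp only [sieveChar]
    split_ifs <;> simp
  simp only [this]
  rw [sum_two_classes (by omega) hN, sieveWeight]
  field_simp
  ring

/-- The sets of primes in `P` with product at most `D`. They stand for the squarefree integers up to
`D` composed of primes in `P`. -/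
def sieveSupport (P : Finset ℕ) (D : ℕ) : Finset (Finset ℕ) :=
  {T ∈ P.powerset | ∏ p ∈ T, p ≤ D}

/-- The quantity `G = ∑ h(d)` over squarefree `d ≤ D` composed of primes in `P`; the sieve bound is
`X / G`. -/
noncomputable def sieveMass (P : Finset ℕ) (D : ℕ) : ℝ :=
  ∑ T ∈ sieveSupport P D, ∏ p ∈ T, sieveWeight p

theorem card_sieveSupport_le {P : Finset ℕ} (hP : ∀ p ∈ P, p.Prime) (D : ℕ) :
    #(sieveSupport P D) ≤ D := by
  have hsub : ∀ T ∈ sieveSupport P D, ∀ p ∈ T, p.Prime := fun T hT p hp =>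
    hP p (mem_powerset.1 (mem_filter.1 hT).1 hp)
  calc #(sieveSupport P D) ≤ #(Icc 1 D) := by
        refine card_le_card_of_injOn (fun T => ∏ p ∈ T, p) ?_ ?_
        · intro T hT
          simp only [coe_Icc, Set.mem_Icc]
          exact ⟨prod_pos fun p hp => (hsub T hT p hp).pos, (mem_filter.1 hT).2⟩
        · intro T hT U hU h
          have h' : ∏ p ∈ T, p = ∏ p ∈ U, p := h
          rw [← Nat.primeFactors_prod (hsub T hT), h', Nat.primeFactors_prod (hsub U hU)]
    _ = D := by simp

/-- Approximate orthogonality of the products `χ_T`. The integrand factors over the primes of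
`T ∪ U`, so its mean is a product of local means; one of these vanishes unless `T = U`. -/
theorem sieve_correlation {N D : ℕ} {P : Finset ℕ} (hP : ∀ p ∈ P, p.Prime ∧ 3 ≤ p ∧ ¬ p ∣ N)
    {T U : Finset ℕ} (hT : T ∈ sieveSupport P D) (hU : U ∈ sieveSupport P D) (X : ℕ) :
    ∑ n ∈ range X, (∏ p ∈ T, sieveChar N p n) * ∏ p ∈ U, sieveChar N p n ≤
      (if T = U then X * ∏ p ∈ T, sieveWeight p else 0) + 2 * (D : ℝ) ^ 4 := by
  classical
  obtain ⟨hTP, hTD⟩ := mem_filter.1 hT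
  obtain ⟨hUP, hUD⟩ := mem_filter.1 hU
  rw [mem_powerset] at hTP hUP
  have hTU : ∀ p ∈ T ∪ U, p.Prime ∧ 3 ≤ p ∧ ¬ p ∣ N := fun p hp =>
    hP p (union_subset hTP hUP hp)
  -- the local factor at `p`: `χ_p`, or `χ_p ^ 2` if `p` lies in both `T` and `U`
  set f : ℕ → ℕ → ℝ := fun p n =>
    (if p ∈ T then sieveChar N p n else 1) * (if p ∈ U then sieveChar N p n else 1) with hf
  have hprod : ∀ n, (∏ p ∈ T, sieveChar N p n) * ∏ p ∈ U, sieveChar N p n =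
      ∏ p ∈ T ∪ U, f p n := by
    intro n
    rw [hf, prod_mul_distrib]
    simp only [prod_ite_mem]
    rw [inter_eq_right.2 subset_union_left, inter_eq_right.2 subset_union_right]
  have hper : ∀ p ∈ T ∪ U, Function.Periodic (f p) p := by
    intro p _ n
    simp only [hf, periodic_sieveChar N p n]
  set q : ℕ := ∏ p ∈ T ∪ U, p with hq
  have hq0 : 0 < q := prod_pos fun p hp => (hTU p hp).1.pos
  have hqD : q ≤ D ^ 2 := by
    have h1 : q ∣ (∏ p ∈ T, p) * ∏ p ∈ U, p := by
      rw [← prod_union_inter]; exact dvd_mul_right _ _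
    have h2 : 0 < (∏ p ∈ T, p) * ∏ p ∈ U, p :=
      Nat.mul_pos (prod_pos fun p hp => (hTU p (mem_union_left _ hp)).1.pos)
        (prod_pos fun p hp => (hTU p (mem_union_right _ hp)).1.pos)
    calc q ≤ _ := Nat.le_of_dvd h2 h1
      _ ≤ D * D := Nat.mul_le_mul hTD hUD
      _ = D ^ 2 := by ring
  have habs : ∀ V : Finset ℕ, V ⊆ P → ∏ p ∈ V, p ≤ D → ∀ n,
      |∏ p ∈ V, sieveChar N p n| ≤ D := by
    intro V hV hVD n
    rw [abs_prod]
    calc _ ≤ ∏ p ∈ V, (p : ℝ) := prod_le_prod (fun _ _ => abs_nonneg _)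
          fun p hp => abs_sieveChar_le (hP p (hV hp)).2.1 N n
      _ ≤ D := by rw [← Nat.cast_prod]; exact Nat.cast_le.2 hVD
  have hB : ∀ n, |∏ p ∈ T ∪ U, f p n| ≤ (D : ℝ) ^ 2 := by
    intro n
    rw [← hprod, abs_mul, sq]
    exact mul_le_mul (habs T hTP hTD n) (habs U hUP hUD n) (abs_nonneg _) (by positivity)
  have hmain := abs_sum_range_sub_le hq0 (periodic_prod hper) hB X
  rw [sum_prod_periodic _ (fun p hp => (hTU p hp).1) f hper] at hmain
  simp only [hprod]
  have hmean : (X : ℝ) / q * ∏ p ∈ T ∪ U, ∑ n ∈ range p, f p n =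
      if T = U then X * ∏ p ∈ T, sieveWeight p else 0 := by
    split_ifs with h
    · subst h
      have : ∀ p ∈ T ∪ T, ∑ n ∈ range p, f p n = p * sieveWeight p := by
        intro p hp
        have hpT : p ∈ T := by simpa using hp
        simp only [hf, hpT, if_true]
        exact sum_sieveChar_sq (hTU p hp).2.1 (hTU p hp).2.2
      have hq1 : (∏ p ∈ T ∪ T, (p : ℝ)) = q := by rw [hq]; push_cast; rfl
      rw [prod_congr rfl this, prod_mul_distrib, hq1, union_self]
      have : (q : ℝ) ≠ 0 := by exact_mod_cast hq0.ne'
      field_simp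
    · obtain ⟨p, hp, hp0⟩ : ∃ p ∈ T ∪ U, ∑ n ∈ range p, f p n = 0 := by
        by_contra! hne
        apply h
        ext p
        by_contra hp
        have hpTU : p ∈ T ∪ U := by rw [mem_union]; tauto
        apply hne p hpTU
        have hs := sum_sieveChar (hTU p hpTU).2.1 (hTU p hpTU).2.2
        by_cases hpT : p ∈ T <;> by_cases hpU : p ∈ U <;> simp_all
      rw [prod_eq_zero hp hp0, mul_zero]
  rw [hmean] at hmain
  have hqD' : (q : ℝ) ≤ (D : ℝ) ^ 2 := by exact_mod_cast hqD
  have : 2 * (q : ℝ) * (D : ℝ) ^ 2 ≤ 2 * (D : ℝ) ^ 4 := by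
    nlinarith [sq_nonneg (D : ℝ)]
  linarith [(abs_le.1 hmain).2]

theorem one_le_sieveMass {P : Finset ℕ} (hP : ∀ p ∈ P, 3 ≤ p) {D : ℕ} (hD : 1 ≤ D) :
    1 ≤ sieveMass P D := by
  have h : ∅ ∈ sieveSupport P D := by simp [sieveSupport, hD]
  calc (1 : ℝ) = ∏ p ∈ (∅ : Finset ℕ), sieveWeight p := by simp
    _ ≤ _ := single_le_sum (f := fun T => ∏ p ∈ T, sieveWeight p)
      (fun T hT => prod_nonneg fun p hp => (sieveWeight_pos (hP p
        (mem_powerset.1 (mem_filter.1 hT).1 hp))).le) h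

/-- Selberg's upper bound for the number of `n < X` with `n ≢ 0, N` modulo every prime of `P`. -/
theorem selberg_sieve {N D : ℕ} {P : Finset ℕ} (hP : ∀ p ∈ P, p.Prime ∧ 3 ≤ p ∧ ¬ p ∣ N)
    (hD : 1 ≤ D) (X : ℕ) :
    (#{n ∈ range X | ∀ p ∈ P, ¬ (n % p = 0 ∨ n % p = N % p)} : ℝ) ≤
      X / sieveMass P D + 2 * (D : ℝ) ^ 6 := by
  set S := {n ∈ range X | ∀ p ∈ P, ¬ (n % p = 0 ∨ n % p = N % p)} with hS
  set G := sieveMass P D with hG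
  have hG1 : 1 ≤ G := one_le_sieveMass (fun p hp => (hP p hp).2.1) hD
  have hcard : (#(sieveSupport P D) : ℝ) ≤ D := by
    exact_mod_cast card_sieveSupport_le (fun p hp => (hP p hp).1) D
  have key : (#S : ℝ) * G ^ 2 ≤ X * G + 2 * (D : ℝ) ^ 6 := by
    calc (#S : ℝ) * G ^ 2
        = ∑ n ∈ S, (∑ T ∈ sieveSupport P D, ∏ p ∈ T, sieveChar N p n) ^ 2 := by
          rw [← nsmul_eq_mul, ← sum_const]
          refine sum_congr rfl fun n hn => ?_
          rw [hG, sieveMass]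
          congr 1
          refine sum_congr rfl fun T hT => prod_congr rfl fun p hp => ?_
          rw [sieveChar, if_neg ((mem_filter.1 hn).2 p
            (mem_powerset.1 (mem_filter.1 hT).1 hp))]
      _ ≤ ∑ n ∈ range X, (∑ T ∈ sieveSupport P D, ∏ p ∈ T, sieveChar N p n) ^ 2 :=
          sum_le_sum_of_subset_of_nonneg (filter_subset _ _) fun _ _ _ => sq_nonneg _
      _ = ∑ T ∈ sieveSupport P D, ∑ U ∈ sieveSupport P D, ∑ n ∈ range X,
            (∏ p ∈ T, sieveChar N p n) * ∏ p ∈ U, sieveChar N p n := by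
          simp only [sq, sum_mul_sum]
          rw [sum_comm]
          exact sum_congr rfl fun T _ => sum_comm
      _ ≤ ∑ T ∈ sieveSupport P D, ∑ U ∈ sieveSupport P D,
            ((if T = U then X * ∏ p ∈ T, sieveWeight p else 0) + 2 * (D : ℝ) ^ 4) :=
          sum_le_sum fun T hT => sum_le_sum fun U hU => sieve_correlation hP hT hU X
      _ = X * G + #(sieveSupport P D) * (#(sieveSupport P D) * (2 * (D : ℝ) ^ 4)) := by
          simp only [sum_add_distrib, sum_ite_eq, sum_const, nsmul_eq_mul]
          rw [hG, sieveMass, mul_sum]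
          congr 1
          exact sum_congr rfl fun T hT => by rw [if_pos hT]
      _ ≤ X * G + D * (D * (2 * (D : ℝ) ^ 4)) := by gcongr
      _ = _ := by ring
  have hG0 : 0 < G := by linarith
  have h1 : (#S : ℝ) ≤ (X * G + 2 * (D : ℝ) ^ 6) / G ^ 2 := by
    rw [le_div_iff₀ (by positivity)]; exact key
  refine h1.trans ?_
  rw [add_div]
  refine add_le_add (le_of_eq (by field_simp)) (div_le_self (by positivity) ?_)
  nlinarith

/-! ### Lower bound for the sieve mass -/

/-- The function `2 ^ Ω(n) / n`, completely multiplicative on the positive integers. -/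
noncomputable def omegaWeight (n : ℕ) : ℝ := 2 ^ (ArithmeticFunction.cardFactors n) / n

theorem omegaWeight_nonneg (n : ℕ) : 0 ≤ omegaWeight n := by
  unfold omegaWeight; positivity

theorem omegaWeight_prime_mul {p n : ℕ} (hp : p.Prime) (hn : n ≠ 0) :
    omegaWeight (p * n) = 2 / p * omegaWeight n := by
  unfold omegaWeight
  rw [ArithmeticFunction.cardFactors_mul hp.ne_zero hn,
    ArithmeticFunction.cardFactors_apply_prime hp, pow_add]
  push_cast
  ring

/-- The sum of `2 ^ Ω(n) / n` over the integers `1 ≤ n ≤ z` all of whose prime factors lie in `P`. -/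
noncomputable def smoothSum (P : Finset ℕ) (z : ℕ) : ℝ :=
  ∑ n ∈ Icc 1 z with n.primeFactors ⊆ P, omegaWeight n

theorem smoothSum_nonneg (P : Finset ℕ) (z : ℕ) : 0 ≤ smoothSum P z :=
  sum_nonneg fun n _ => omegaWeight_nonneg n

theorem smoothSum_mono (P : Finset ℕ) {y z : ℕ} (h : y ≤ z) : smoothSum P y ≤ smoothSum P z :=
  sum_le_sum_of_subset_of_nonneg
    (filter_subset_filter _ (Icc_subset_Icc_right h)) fun n _ _ => omegaWeight_nonneg n

theorem sum_multiples {p z : ℕ} (hp : 0 < p) (s : ℕ → Prop) [DecidablePred s] (f : ℕ → ℝ) :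
    ∑ n ∈ Icc 1 z with (p ∣ n ∧ s n), f n =
      ∑ m ∈ Icc 1 (z / p) with s (p * m), f (p * m) := by
  symm
  refine sum_nbij (p * ·) ?_ ?_ ?_ (fun _ _ => rfl)
  · intro m hm
    simp only [mem_filter, mem_Icc] at hm ⊢
    refine ⟨⟨Nat.mul_pos hp hm.1.1, ?_⟩, dvd_mul_right _ _, hm.2⟩
    rw [mul_comm]; exact (Nat.le_div_iff_mul_le hp).1 hm.1.2
  · intro a _ b _ h
    exact Nat.eq_of_mul_eq_mul_left hp h
  · intro n hn
    simp only [coe_filter, mem_Icc, Set.mem_ofPred_eq] at hn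
    obtain ⟨⟨h1, h2⟩, ⟨m, rfl⟩, h3⟩ := hn
    refine ⟨m, ?_, rfl⟩
    simp only [coe_filter, mem_Icc, Set.mem_ofPred_eq]
    refine ⟨⟨Nat.pos_of_mul_pos_left h1, ?_⟩, h3⟩
    rw [Nat.le_div_iff_mul_le hp, mul_comm]; exact h2

/-- Splitting off the multiples of the prime `q`. -/
theorem smoothSum_insert {P : Finset ℕ} {q : ℕ} (hq : q.Prime) (hqP : q ∉ P) (z : ℕ) :
    smoothSum (insert q P) z = smoothSum P z + 2 / q * smoothSum (insert q P) (z / q) := by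
  have hsplit := sum_filter_add_sum_filter_not
    {n ∈ Icc 1 z | n.primeFactors ⊆ insert q P} (fun n => q ∣ n) omegaWeight
  unfold smoothSum
  rw [← hsplit, add_comm, filter_filter, filter_filter]
  congr 1
  · refine sum_congr (filter_congr fun n hn => ?_) fun _ _ => rfl
    have hn0 : n ≠ 0 := by have := (mem_Icc.1 hn).1; omega
    constructor
    · rintro ⟨h1, h2⟩ p hp
      rcases mem_insert.1 (h1 hp) with rfl | h
      · exact absurd (Nat.dvd_of_mem_primeFactors hp) h2
      · exact h
    · intro h
      refine ⟨h.trans (subset_insert _ _), fun hqn => hqP (h ?_)⟩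
      exact Nat.mem_primeFactors.2 ⟨hq, hqn, hn0⟩
  · rw [mul_sum]
    have := sum_multiples (z := z) hq.pos (fun n => n.primeFactors ⊆ insert q P) omegaWeight
    simp only [and_comm (a := q ∣ _)] at this
    rw [this]
    refine sum_congr (filter_congr fun n hn => ?_) fun n hn => ?_
    · have hn0 : n ≠ 0 := by have := (mem_Icc.1 hn).1; omega
      rw [Nat.primeFactors_mul hq.ne_zero hn0, hq.primeFactors, union_subset_iff]
      simp
    · have hn0 : n ≠ 0 := by have := (mem_Icc.1 (mem_filter.1 hn).1).1; omega
      exact omegaWeight_prime_mul hq hn0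

theorem sieveMass_insert {P : Finset ℕ} {q : ℕ} (hq : 0 < q) (hqP : q ∉ P) (z : ℕ) :
    sieveMass (insert q P) z = sieveMass P z + sieveWeight q * sieveMass P (z / q) := by
  simp only [sieveMass, sieveSupport, sum_filter]
  rw [sum_powerset_insert hqP, mul_sum]
  congr 1
  refine sum_congr rfl fun T hT => ?_
  have hqT : q ∉ T := fun h => hqP (mem_powerset.1 hT h)
  rw [prod_insert hqT, prod_insert hqT]
  have : q * ∏ p ∈ T, p ≤ z ↔ ∏ p ∈ T, p ≤ z / q := by
    rw [Nat.le_div_iff_mul_le hq, mul_comm]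
  simp only [this, mul_ite, mul_zero]

/-- Since `h(p) = ∑_{k ≥ 1} (2 / p) ^ k`, the mass `G` dominates the sum of `2 ^ Ω(n) / n`. The
induction adds one prime `q` at a time: with `W'` the sum for `P ∪ {q}` and `W` the sum for `P`, the
recursion gives `W'(z / q) (1 - 2 / q) ≤ W(z / q)`, hence `W'(z) ≤ W(z) + h(q) W(z / q)`. -/
theorem smoothSum_le_sieveMass {P : Finset ℕ} (hP : ∀ p ∈ P, p.Prime ∧ 3 ≤ p) (z : ℕ) :
    smoothSum P z ≤ sieveMass P z := by
  induction P using Finset.induction_on generalizing z with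
  | empty =>
    rcases Nat.eq_zero_or_pos z with rfl | hz
    · have h : smoothSum ∅ 0 = 0 := by simp [smoothSum]
      rw [h]
      exact sum_nonneg fun T hT => by
        have : T = ∅ := by simpa using (mem_filter.1 hT).1
        simp [this]
    · have : {n ∈ Icc 1 z | n.primeFactors ⊆ ∅} = {1} := by
        ext n
        simp only [mem_filter, mem_Icc, subset_empty, Nat.primeFactors_eq_empty, mem_singleton]
        omega
      rw [smoothSum, this]
      simp [sieveMass, sieveSupport, omegaWeight, filter_singleton, Nat.one_le_iff_ne_zero, hz.ne']
  | insert q P hqP ih =>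
    simp only [mem_insert, forall_eq_or_imp] at hP
    obtain ⟨⟨hq, hq3⟩, hP⟩ := hP
    have h3 : (3 : ℝ) ≤ q := by exact_mod_cast hq3
    rw [sieveMass_insert hq.pos hqP, smoothSum_insert hq hqP]
    have h1 := smoothSum_insert hq hqP (z / q)
    have h2 := smoothSum_mono (insert q P) (Nat.div_le_self (z / q) q)
    have h4 : 2 / q * smoothSum (insert q P) (z / q) ≤
        sieveWeight q * smoothSum P (z / q) := by
      have h5 : smoothSum (insert q P) (z / q) * (1 - 2 / q) ≤ smoothSum P (z / q) := by
        have : (0 : ℝ) ≤ 2 / q := by positivity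
        nlinarith
      have h6 : (2 : ℝ) / q = sieveWeight q * (1 - 2 / q) := by
        have : (q : ℝ) - 2 ≠ 0 := by linarith
        have : (q : ℝ) ≠ 0 := by linarith
        rw [sieveWeight]; field_simp
      calc 2 / q * smoothSum (insert q P) (z / q)
          = sieveWeight q * (smoothSum (insert q P) (z / q) * (1 - 2 / q)) := by
            rw [mul_left_comm, ← h6, mul_comm]
        _ ≤ _ := mul_le_mul_of_nonneg_left h5 (sieveWeight_pos hq3).le
    have h7 := mul_le_mul_of_nonneg_left (ih hP (z / q)) (sieveWeight_pos hq3).le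
    linarith [ih hP z]

/-- Imposing coprimality to one further prime `q` costs the harmonic sum at most a factor
`1 - 1 / q`, because the multiples of `q` contribute at most `1 / q` of the whole. -/
theorem prod_mul_harmonic_le {Q : Finset ℕ} (hQ : ∀ p ∈ Q, p.Prime) (z : ℕ) :
    (∏ p ∈ Q, (1 - 1 / (p : ℝ))) * ∑ n ∈ Icc 1 z, 1 / (n : ℝ) ≤
      ∑ n ∈ Icc 1 z with ∀ p ∈ Q, ¬ p ∣ n, 1 / (n : ℝ) := by
  induction Q using Finset.induction_on with
  | empty => simp
  | insert q Q hqQ ih =>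
    simp only [mem_insert, forall_eq_or_imp] at hQ
    obtain ⟨hq, hQ⟩ := hQ
    have hq1 : (1 : ℝ) ≤ q := by exact_mod_cast hq.one_le
    have hq' : 0 ≤ 1 - 1 / (q : ℝ) := by
      rw [sub_nonneg, div_le_one (by linarith)]; exact hq1
    rw [prod_insert hqQ, mul_assoc]
    refine (mul_le_mul_of_nonneg_left (ih hQ) hq').trans ?_
    have hsplit := sum_filter_add_sum_filter_not
      {n ∈ Icc 1 z | ∀ p ∈ Q, ¬ p ∣ n} (fun n => q ∣ n) (fun n => 1 / (n : ℝ))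
    rw [filter_filter, filter_filter] at hsplit
    have hm := sum_multiples (z := z) hq.pos (fun n => ∀ p ∈ Q, ¬ p ∣ n) (fun n => 1 / (n : ℝ))
    have hle : ∑ m ∈ Icc 1 (z / q) with ∀ p ∈ Q, ¬ p ∣ q * m, 1 / ((q * m : ℕ) : ℝ) ≤
        1 / q * ∑ n ∈ Icc 1 z with ∀ p ∈ Q, ¬ p ∣ n, 1 / (n : ℝ) := by
      rw [mul_sum]
      calc _ = ∑ m ∈ Icc 1 (z / q) with ∀ p ∈ Q, ¬ p ∣ q * m, 1 / (q : ℝ) * (1 / m) := by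
            refine sum_congr rfl fun m _ => ?_
            push_cast; rw [one_div_mul_one_div]
        _ ≤ _ := by
            refine sum_le_sum_of_subset_of_nonneg ?_ fun _ _ _ => by positivity
            intro m hm
            simp only [mem_filter, mem_Icc] at hm ⊢
            exact ⟨⟨hm.1.1, hm.1.2.trans (Nat.div_le_self _ _)⟩,
              fun p hp h => hm.2 p hp (h.mul_left q)⟩
    simp only [and_comm (a := q ∣ _)] at hm
    have hset : ∑ n ∈ Icc 1 z with ∀ p ∈ insert q Q, ¬ p ∣ n, 1 / (n : ℝ) =
        ∑ n ∈ Icc 1 z with (∀ p ∈ Q, ¬ p ∣ n) ∧ ¬ q ∣ n, 1 / (n : ℝ) := by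
      refine sum_congr (filter_congr fun n _ => ?_) fun _ _ => rfl
      simp only [mem_insert, forall_eq_or_imp]
      tauto
    rw [hset]
    linarith

theorem card_divisors_le_two_pow {n : ℕ} (hn : n ≠ 0) :
    #n.divisors ≤ 2 ^ ArithmeticFunction.cardFactors n := by
  rw [Nat.card_divisors hn, ArithmeticFunction.cardFactors_eq_sum_factorization,
    Finsupp.sum, ← prod_pow_eq_pow_sum, Nat.support_factorization]
  exact prod_le_prod' fun p _ => Nat.lt_two_pow_self

/-- Expanding the square, each `n ≤ A ^ 2` coprime to `M` arises at most `d(n) ≤ 2 ^ Ω(n)` times as a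
product of two integers up to `A`. -/
theorem sq_sum_le_smoothSum {M A : ℕ} (hM : M ≠ 0) :
    (∑ n ∈ Icc 1 A with ∀ p ∈ M.primeFactors, ¬ p ∣ n, 1 / (n : ℝ)) ^ 2 ≤
      smoothSum {p ∈ Icc 1 (A ^ 2) | p.Prime ∧ ¬ p ∣ M} (A ^ 2) := by
  set C := {n ∈ Icc 1 A | ∀ p ∈ M.primeFactors, ¬ p ∣ n} with hC
  rw [sq, sum_mul_sum, ← sum_product', smoothSum]
  have hmaps : ∀ x ∈ C ×ˢ C, x.1 * x.2 ∈ {n ∈ Icc 1 (A ^ 2) |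
      n.primeFactors ⊆ {p ∈ Icc 1 (A ^ 2) | p.Prime ∧ ¬ p ∣ M}} := by
    intro x hx
    simp only [hC, mem_product, mem_filter, mem_Icc] at hx ⊢
    obtain ⟨⟨⟨ha1, ha2⟩, ha3⟩, ⟨hb1, hb2⟩, hb3⟩ := hx
    have hle : x.1 * x.2 ≤ A ^ 2 := by rw [sq]; exact Nat.mul_le_mul ha2 hb2
    have hpos : 0 < x.1 * x.2 := Nat.mul_pos ha1 hb1
    refine ⟨⟨hpos, hle⟩, fun p hp => ?_⟩
    obtain ⟨hpp, hpd, -⟩ := Nat.mem_primeFactors.1 hp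
    simp only [mem_filter, mem_Icc]
    refine ⟨⟨hpp.one_le, (Nat.le_of_dvd hpos hpd).trans hle⟩, hpp, fun hpM => ?_⟩
    have hpM' : p ∈ M.primeFactors := Nat.mem_primeFactors.2 ⟨hpp, hpM, hM⟩
    rcases hpp.dvd_mul.1 hpd with h | h
    · exact ha3 p hpM' h
    · exact hb3 p hpM' h
  rw [← sum_fiberwise_of_maps_to hmaps]
  refine sum_le_sum fun n hn => ?_
  have hn0 : n ≠ 0 := by have := (mem_Icc.1 (mem_filter.1 hn).1).1; omega
  have hcard : #{x ∈ C ×ˢ C | x.1 * x.2 = n} ≤ #n.divisors := by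
    refine card_le_card_of_injOn Prod.fst ?_ ?_
    · intro x hx
      simp only [coe_filter, Set.mem_ofPred_eq] at hx
      simp only [mem_coe, Nat.mem_divisors]
      exact ⟨hx.2 ▸ dvd_mul_right _ _, hn0⟩
    · intro x hx y hy h
      simp only [coe_filter, Set.mem_ofPred_eq] at hx hy
      have hx1 : 0 < x.1 := by
        rcases Nat.eq_zero_or_pos x.1 with h0 | h0
        · rw [h0, zero_mul] at hx; exact absurd hx.2.symm hn0
        · exact h0
      refine Prod.ext h (Nat.eq_of_mul_eq_mul_left hx1 ?_)
      rw [hx.2, h, hy.2]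
  calc ∑ x ∈ C ×ˢ C with x.1 * x.2 = n, 1 / (x.1 : ℝ) * (1 / (x.2 : ℝ))
      = ∑ x ∈ C ×ˢ C with x.1 * x.2 = n, 1 / (n : ℝ) := by
        refine sum_congr rfl fun x hx => ?_
        rw [← (mem_filter.1 hx).2, one_div_mul_one_div]; push_cast; rfl
    _ = #{x ∈ C ×ˢ C | x.1 * x.2 = n} * (1 / (n : ℝ)) := by rw [sum_const, nsmul_eq_mul]
    _ ≤ 2 ^ ArithmeticFunction.cardFactors n * (1 / (n : ℝ)) := by
        gcongr
        exact_mod_cast hcard.trans (card_divisors_le_two_pow hn0)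
    _ = omegaWeight n := by rw [omegaWeight, mul_one_div]

/-- The ratio `M / φ(M)`, as a product over the primes dividing `M`. -/
noncomputable def totientRatio (M : ℕ) : ℝ := ∏ p ∈ M.primeFactors, (1 - 1 / (p : ℝ))⁻¹

theorem one_le_totientRatio (M : ℕ) : 1 ≤ totientRatio M := by
  unfold totientRatio
  refine (prod_const_one (s := M.primeFactors)).symm.trans_le
    (prod_le_prod (fun _ _ => zero_le_one) fun p hp => ?_)
  have : (1 : ℝ) < p := by exact_mod_cast (Nat.prime_of_mem_primeFactors hp).one_lt
  refine (one_le_inv₀ ?_).2 ?_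
  · rw [sub_pos, div_lt_one (by linarith)]; exact this
  · have : 0 ≤ 1 / (p : ℝ) := by positivity
    linarith

theorem log_sq_le_sieveMass {M A : ℕ} (hM : M ≠ 0) (h2 : 2 ∣ M) :
    Real.log A ^ 2 ≤
      totientRatio M ^ 2 * sieveMass {p ∈ Icc 1 (A ^ 2) | p.Prime ∧ ¬ p ∣ M} (A ^ 2) := by
  have hK := one_le_totientRatio M
  have hinv : ∏ p ∈ M.primeFactors, (1 - 1 / (p : ℝ)) = (totientRatio M)⁻¹ := by
    rw [totientRatio, prod_inv_distrib, inv_inv]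
  have h3 : ∀ p ∈ {p ∈ Icc 1 (A ^ 2) | p.Prime ∧ ¬ p ∣ M}, p.Prime ∧ 3 ≤ p := by
    intro p hp
    obtain ⟨-, hp, hpM⟩ := mem_filter.1 hp
    refine ⟨hp, ?_⟩
    have := hp.two_le
    by_contra h
    have : p = 2 := by omega
    subst this; exact hpM h2
  have hlog : Real.log A ≤ ∑ n ∈ Icc 1 A, 1 / (n : ℝ) := by
    have h := log_add_one_le_harmonic A
    rw [harmonic_eq_sum_Icc] at h
    push_cast at h
    simp only [one_div]
    refine le_trans ?_ h
    rcases Nat.eq_zero_or_pos A with rfl | hA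
    · simp
    · have : (0 : ℝ) < A := by exact_mod_cast hA
      exact Real.log_le_log this (by linarith)
  have hprod := prod_mul_harmonic_le (Q := M.primeFactors)
    (fun p hp => Nat.prime_of_mem_primeFactors hp) A
  rw [hinv] at hprod
  have hsq := (sq_sum_le_smoothSum (A := A) hM).trans (smoothSum_le_sieveMass h3 (A ^ 2))
  have h4 : Real.log A ≤ totientRatio M *
      ∑ n ∈ Icc 1 A with ∀ p ∈ M.primeFactors, ¬ p ∣ n, 1 / (n : ℝ) := by
    rw [inv_mul_le_iff₀ (by linarith)] at hprod
    linarith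
  calc Real.log A ^ 2 ≤ _ := pow_le_pow_left₀ (Real.log_natCast_nonneg A) h4 2
    _ ≤ _ := by rw [mul_pow]; gcongr

/-! ### Fourth moment of `M / φ(M)` -/

theorem totientRatio_pow_four_le (M : ℕ) :
    totientRatio M ^ 4 ≤ ∏ p ∈ M.primeFactors, (1 + 30 / (p : ℝ)) := by
  rw [totientRatio, ← prod_pow]
  refine prod_le_prod (fun p _ => by positivity) fun p hp => ?_
  have h2 : (2 : ℝ) ≤ p := by exact_mod_cast (Nat.prime_of_mem_primeFactors hp).two_le
  set t : ℝ := 1 / p with ht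
  have ht0 : 0 ≤ t := by positivity
  have ht2 : t ≤ 1 / 2 := one_div_le_one_div_of_le two_pos h2
  have h1 : (1 - t)⁻¹ ≤ 1 + 2 * t := by
    rw [inv_le_iff_one_le_mul₀ (by linarith)]
    nlinarith
  have h3 : (1 + 2 * t) ^ 4 ≤ 1 + 30 * t := by
    have h4 : t ^ 2 ≤ t / 2 := by nlinarith
    have h5 : t ^ 3 ≤ t / 4 := by nlinarith
    have h6 : t ^ 4 ≤ t / 8 := by nlinarith
    nlinarith
  calc (1 - t)⁻¹ ^ 4 ≤ (1 + 2 * t) ^ 4 :=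
        pow_le_pow_left₀ (inv_nonneg.2 (by linarith)) h1 4
    _ ≤ 1 + 30 * t := h3
    _ = 1 + 30 / p := by rw [ht, mul_one_div]

/-- The fourth power of `M / φ(M)` is bounded on average: it is at most `∏_{p ∣ M} (1 + 30 / p)`, and
expanding this product gives the bound `y ∏_p (1 + 30 / p ^ 2)` for the sum over `M ≤ y`. -/
theorem exists_sum_totientRatio_le :
    ∃ C : ℝ, 0 < C ∧ ∀ y : ℕ, ∑ M ∈ Ioc 0 y, totientRatio M ^ 4 ≤ C * y := by
  have hsummable : Summable fun n : ℕ => 1 / (n : ℝ) ^ 2 :=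
    Real.summable_one_div_nat_pow.2 one_lt_two
  refine ⟨Real.exp (30 * ∑' n : ℕ, 1 / (n : ℝ) ^ 2), Real.exp_pos _, fun y => ?_⟩
  set R := {p ∈ Ioc 0 y | p.Prime} with hR
  have hsub : ∀ M ∈ Ioc 0 y, M.primeFactors ⊆ R := by
    intro M hM p hp
    obtain ⟨hpp, hpM, -⟩ := Nat.mem_primeFactors.1 hp
    rw [mem_Ioc] at hM
    simp only [hR, mem_filter, mem_Ioc]
    exact ⟨⟨hpp.pos, (Nat.le_of_dvd hM.1 hpM).trans hM.2⟩, hpp⟩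
  have hcount : ∀ T ∈ R.powerset, (#{M ∈ Ioc 0 y | T ⊆ M.primeFactors} : ℝ) ≤
      y * ∏ p ∈ T, 1 / (p : ℝ) := by
    intro T hT
    have hTp : ∀ p ∈ T, p.Prime := fun p hp => (mem_filter.1 (mem_powerset.1 hT hp)).2
    have h1 : #{M ∈ Ioc 0 y | T ⊆ M.primeFactors} ≤ y / ∏ p ∈ T, p := by
      rw [← Nat.Ioc_filter_dvd_card_eq_div]
      refine card_le_card fun M hM => ?_
      rw [mem_filter] at hM ⊢
      exact ⟨hM.1, prod_primes_dvd M (fun p hp => (hTp p hp).prime)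
        fun p hp => Nat.dvd_of_mem_primeFactors (hM.2 hp)⟩
    calc (#{M ∈ Ioc 0 y | T ⊆ M.primeFactors} : ℝ) ≤ ((y / ∏ p ∈ T, p : ℕ) : ℝ) := by
          exact_mod_cast h1
      _ ≤ (y : ℝ) / ((∏ p ∈ T, p : ℕ) : ℝ) := Nat.cast_div_le
      _ = _ := by
          rw [Nat.cast_prod, div_eq_mul_inv, ← prod_inv_distrib]
          simp only [one_div]
  calc ∑ M ∈ Ioc 0 y, totientRatio M ^ 4
      ≤ ∑ M ∈ Ioc 0 y, ∑ T ∈ R.powerset,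
          if T ⊆ M.primeFactors then ∏ p ∈ T, 30 / (p : ℝ) else 0 := by
        refine sum_le_sum fun M hM => (totientRatio_pow_four_le M).trans (le_of_eq ?_)
        rw [prod_one_add, ← sum_filter]
        refine sum_congr ?_ fun _ _ => rfl
        ext T
        simp only [mem_powerset, mem_filter]
        exact ⟨fun h => ⟨h.trans (hsub M hM), h⟩, fun h => h.2⟩
    _ = ∑ T ∈ R.powerset, #{M ∈ Ioc 0 y | T ⊆ M.primeFactors} * ∏ p ∈ T, 30 / (p : ℝ) := by
        rw [sum_comm]
        refine sum_congr rfl fun T _ => ?_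
        rw [← sum_filter, sum_const, nsmul_eq_mul]
    _ ≤ ∑ T ∈ R.powerset, (y * ∏ p ∈ T, 1 / (p : ℝ)) * ∏ p ∈ T, 30 / (p : ℝ) := by
        refine sum_le_sum fun T hT => ?_
        exact mul_le_mul_of_nonneg_right (hcount T hT) (prod_nonneg fun p _ => by positivity)
    _ = y * ∏ p ∈ R, (1 + 30 * (1 / (p : ℝ) ^ 2)) := by
        rw [prod_one_add, mul_sum]
        refine sum_congr rfl fun T _ => ?_
        rw [mul_assoc, ← prod_mul_distrib]
        congr 1
        refine prod_congr rfl fun p _ => ?_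
        rw [div_mul_div_comm, sq, mul_one_div, one_mul]
    _ ≤ y * Real.exp (∑ p ∈ R, 30 * (1 / (p : ℝ) ^ 2)) := by
        gcongr
        rw [Real.exp_sum]
        refine prod_le_prod (fun p _ => by positivity) fun p _ => ?_
        rw [add_comm]; exact Real.add_one_le_exp _
    _ ≤ y * Real.exp (30 * ∑' n : ℕ, 1 / (n : ℝ) ^ 2) := by
        rw [← mul_sum]
        gcongr
        exact hsummable.sum_le_tsum _ fun _ _ => by positivity
    _ = _ := mul_comm _ _

/-! ### Density of the sums of two primes -/

/-- The primes `n ≤ N` such that `N - n` is prime; they parametrize the ordered representations of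
`N` as a sum of two primes. -/
def primePairs (N : ℕ) : Finset ℕ := {n ∈ range (N + 1) | n.Prime ∧ (N - n).Prime}

theorem mem_primePairs_add {p q : ℕ} (hp : p.Prime) (hq : q.Prime) : p ∈ primePairs (p + q) := by
  simp only [primePairs, mem_filter, mem_range]
  exact ⟨by omega, hp, by simpa using hq⟩

/-- The sieve bound for the number of representations, with sieving level `D = A ^ 2`. If both `n` and
`N - n` are primes exceeding `D`, then `n` is not `0` or `N` modulo any prime up to `D`; the other
representations number at most `2 (D + 1)`. -/
theorem card_primePairs_le {N x A : ℕ} (hN : 0 < N) (hNx : N ≤ x) (hA : 2 ≤ A) :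
    (#(primePairs N) : ℝ) ≤
      totientRatio (2 * N) ^ 2 * ((x + 1) / Real.log A ^ 2 + 6 * (A : ℝ) ^ 12) := by
  set P := {p ∈ Icc 1 (A ^ 2) | p.Prime ∧ ¬ p ∣ 2 * N} with hPdef
  have hP : ∀ p ∈ P, p.Prime ∧ 3 ≤ p ∧ ¬ p ∣ N := by
    intro p hp
    obtain ⟨-, hpp, hpN⟩ := mem_filter.1 hp
    refine ⟨hpp, ?_, fun h => hpN (h.mul_left 2)⟩
    have := hpp.two_le
    by_contra h
    have : p = 2 := by omega
    subst this; exact hpN (dvd_mul_right _ _)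
  have hD : 1 ≤ A ^ 2 := Nat.one_le_pow _ _ (by omega)
  set S := {n ∈ range (x + 1) | ∀ p ∈ P, ¬ (n % p = 0 ∨ n % p = N % p)} with hS
  have hsub : primePairs N ⊆ S ∪ (range (A ^ 2 + 1) ∪ (range (A ^ 2 + 1)).image (N - ·)) := by
    intro n hn
    obtain ⟨hnN, hn1, hn2⟩ := mem_filter.1 hn
    rw [mem_range] at hnN
    by_cases h1 : n ≤ A ^ 2
    · exact mem_union_right _ (mem_union_left _ (mem_range.2 (by omega)))
    by_cases h2 : N - n ≤ A ^ 2
    · refine mem_union_right _ (mem_union_right _ (mem_image.2 ⟨N - n, ?_, by omega⟩))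
      exact mem_range.2 (by omega)
    refine mem_union_left _ (mem_filter.2 ⟨mem_range.2 (by omega), fun p hp => ?_⟩)
    obtain ⟨hpI, hpp, -⟩ := mem_filter.1 hp
    rw [mem_Icc] at hpI
    rintro (h | h)
    · have := (Nat.prime_dvd_prime_iff_eq hpp hn1).1 (Nat.dvd_of_mod_eq_zero h)
      omega
    · have hd : p ∣ N - n := (Nat.modEq_iff_dvd' (by omega)).1 h
      have := (Nat.prime_dvd_prime_iff_eq hpp hn2).1 hd
      omega
  have hcard : #(primePairs N) ≤ #S + (A ^ 2 + 1 + (A ^ 2 + 1)) := by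
    refine (card_le_card hsub).trans ((card_union_le _ _).trans ?_)
    gcongr
    refine (card_union_le _ _).trans ?_
    gcongr
    · simp
    · exact card_image_le.trans (by simp)
  have hcard' : (#(primePairs N) : ℝ) ≤ #S + 2 * ((A : ℝ) ^ 2 + 1) := by
    have : (#(primePairs N) : ℝ) ≤ ((#S + (A ^ 2 + 1 + (A ^ 2 + 1)) : ℕ) : ℝ) := by
      exact_mod_cast hcard
    push_cast at this
    linarith
  have hsieve := selberg_sieve hP hD (x + 1)
  have hlog := log_sq_le_sieveMass (M := 2 * N) (A := A) (by omega) (dvd_mul_right _ _)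
  have hG : 1 ≤ sieveMass P (A ^ 2) := one_le_sieveMass (fun p hp => (hP p hp).2.1) hD
  have hK := one_le_totientRatio (2 * N)
  set G := sieveMass P (A ^ 2)
  set K := totientRatio (2 * N)
  have hA' : (2 : ℝ) ≤ A := by exact_mod_cast hA
  have hL : 0 < Real.log A := Real.log_pos (by linarith)
  have hmain : ((x + 1 : ℕ) : ℝ) / G ≤ K ^ 2 * ((x + 1) / Real.log A ^ 2) := by
    push_cast
    rw [← mul_div_assoc, div_le_div_iff₀ (by linarith) (by positivity)]
    calc ((x : ℝ) + 1) * Real.log A ^ 2 ≤ (x + 1) * (K ^ 2 * G) := by gcongr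
      _ = _ := by ring
  have hA12 : 2 * ((A ^ 2 : ℕ) : ℝ) ^ 6 + 2 * ((A : ℝ) ^ 2 + 1) ≤ 6 * (A : ℝ) ^ 12 := by
    have h1 : (A : ℝ) ^ 2 ≤ (A : ℝ) ^ 12 := pow_le_pow_right₀ (by linarith) (by norm_num)
    have h2 : (1 : ℝ) ≤ (A : ℝ) ^ 12 := one_le_pow₀ (by linarith)
    have h3 : ((A ^ 2 : ℕ) : ℝ) ^ 6 = (A : ℝ) ^ 12 := by push_cast; ring
    rw [h3]
    linarith
  have hK2 : 6 * (A : ℝ) ^ 12 ≤ K ^ 2 * (6 * (A : ℝ) ^ 12) :=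
    le_mul_of_one_le_left (by positivity) (one_le_pow₀ hK)
  rw [mul_add]
  linarith

theorem log_le_mul_log_of_lt_pow {A x : ℕ} (hA : 2 ≤ A) (hx : (0 : ℝ) < x)
    (h : x < (A + 1) ^ 24) : Real.log x ≤ 48 * Real.log A := by
  have hA' : (2 : ℝ) ≤ A := by exact_mod_cast hA
  have h1 : (x : ℝ) ≤ (((A + 1) ^ 24 : ℕ) : ℝ) := Nat.cast_le.2 h.le
  rw [Nat.cast_pow, Nat.cast_add, Nat.cast_one] at h1
  have h2 : Real.log ((A : ℝ) + 1) ≤ 2 * Real.log A := by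
    rw [← Real.log_rpow (by linarith)]
    refine Real.log_le_log (by linarith) ?_
    rw [Real.rpow_two]
    clear h1 h
    nlinarith
  have h3 := Real.log_le_log hx h1
  rw [Real.log_pow] at h3
  norm_num at h3
  linarith

/-- The bound `card_primePairs_le` with `A` the integer part of `x ^ (1 / 24)`. -/
theorem card_primePairs_le_div_log {N x : ℕ} (hx : 2 ^ 24 ≤ x) (hN : 0 < N) (hNx : N ≤ x) :
    (#(primePairs N) : ℝ) ≤
      18432 * x / Real.log x ^ 2 * totientRatio (2 * N) ^ 2 := by
  obtain ⟨A, hA2, hAx, hxA⟩ : ∃ A : ℕ, 2 ≤ A ∧ A ^ 24 ≤ x ∧ x < (A + 1) ^ 24 := by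
    refine ⟨Nat.findGreatest (fun a => a ^ 24 ≤ x) x,
      Nat.le_findGreatest (le_trans (by norm_num) hx) hx,
      Nat.findGreatest_spec (P := fun a => a ^ 24 ≤ x) (le_trans (by norm_num) hx) hx, ?_⟩
    by_contra! h
    have h1 : Nat.findGreatest (fun a => a ^ 24 ≤ x) x + 1 ≤ x :=
      (Nat.le_self_pow (by norm_num) _).trans h
    have := Nat.le_findGreatest (P := fun a => a ^ 24 ≤ x) h1 h
    omega
  refine (card_primePairs_le hN hNx hA2).trans ?_
  rw [mul_comm]
  gcongr
  have hA : (2 : ℝ) ≤ A := by exact_mod_cast hA2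
  have hAx' : (A : ℝ) ^ 24 ≤ x := by exact_mod_cast hAx
  have hx1 : (1 : ℝ) < x := by
    have : 1 < x := lt_of_lt_of_le (by norm_num) hx
    exact_mod_cast this
  have hLx : 0 < Real.log x := Real.log_pos hx1
  have hLA : 0 < Real.log A := Real.log_pos (by linarith)
  have hlog : Real.log x ≤ 48 * Real.log A :=
    log_le_mul_log_of_lt_pow hA2 (by linarith) hxA
  have hlog2 : Real.log x ^ 2 ≤ 2304 * Real.log A ^ 2 := by
    calc Real.log x ^ 2 ≤ (48 * Real.log A) ^ 2 := by gcongr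
      _ = _ := by ring
  have hlogA : Real.log A ≤ A := Real.log_le_self (by linarith)
  have h1 : ((x : ℝ) + 1) / Real.log A ^ 2 ≤ 4608 * x / Real.log x ^ 2 := by
    rw [div_le_div_iff₀ (by positivity) (by positivity)]
    calc ((x : ℝ) + 1) * Real.log x ^ 2 ≤ (2 * x) * (2304 * Real.log A ^ 2) := by
          gcongr; linarith
      _ = _ := by ring
  have h2 : 6 * (A : ℝ) ^ 12 ≤ 13824 * x / Real.log x ^ 2 := by
    rw [le_div_iff₀ (by positivity)]
    calc 6 * (A : ℝ) ^ 12 * Real.log x ^ 2 ≤ 6 * (A : ℝ) ^ 12 * (2304 * (A : ℝ) ^ 2) := by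
          gcongr
          exact hlog2.trans (by gcongr)
      _ = 13824 * (A : ℝ) ^ 14 := by ring
      _ ≤ 13824 * (A : ℝ) ^ 24 := by
          gcongr
          · linarith
          · norm_num
      _ ≤ 13824 * x := by gcongr
  calc _ ≤ 4608 * x / Real.log x ^ 2 + 13824 * x / Real.log x ^ 2 := add_le_add h1 h2
    _ = _ := by ring

theorem eventually_primeCounting_half_ge :
    ∀ᶠ x : ℕ in Filter.atTop, (x : ℝ) / (6 * Real.log x) ≤ Nat.primeCounting (x / 2) := by
  have hlog : ∀ᶠ y : ℝ in Filter.atTop, Real.log y ≤ 1 / 20 * y := by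
    have h := Real.isLittleO_log_id_atTop.def (show (0 : ℝ) < 1 / 20 by norm_num)
    filter_upwards [h, Filter.eventually_ge_atTop 0] with y hy hy0
    have := (le_abs_self _).trans hy
    simpa [abs_of_nonneg hy0] using this
  have hlog' := tendsto_natCast_atTop_atTop (R := ℝ) |>.eventually hlog
  filter_upwards [hlog', Filter.eventually_ge_atTop 10] with x hx hx10
  set n := x / 2 with hn
  have hn3 : (x : ℝ) / 3 ≤ n := by
    have : x ≤ 3 * n := by omega
    have : (x : ℝ) ≤ 3 * n := by exact_mod_cast this
    linarith
  have hn5 : (5 : ℝ) ≤ n := by exact_mod_cast (by omega : 5 ≤ n)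
  have hnx : (n : ℝ) + 1 ≤ x := by exact_mod_cast (by omega : n + 1 ≤ x)
  have hln : Real.log (n + 1) ≤ Real.log x := Real.log_le_log (by linarith) hnx
  have hln' : Real.log n ≤ Real.log x := Real.log_le_log (by linarith) (by linarith)
  have hlpos : 0 < Real.log n := Real.log_pos (by linarith)
  have h2 := Real.log_two_gt_d9
  refine le_trans ?_ (Chebyshev.pi_ge n)
  calc (x : ℝ) / (6 * Real.log x) = (x / 6) / Real.log x := by rw [div_div]
    _ ≤ (x / 6) / Real.log n := by gcongr
    _ ≤ _ := by
      gcongr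
      nlinarith

/-- Each pair of primes up to `x / 2` represents an integer up to `x`. -/
theorem primeCounting_sq_le (x : ℕ) :
    Nat.primeCounting (x / 2) ^ 2 ≤
      ∑ N ∈ Ioc 0 x with (primePairs N).Nonempty, #(primePairs N) := by
  classical
  set R := {p ∈ range (x / 2 + 1) | p.Prime} with hR
  have hcount : Nat.primeCounting (x / 2) = #R := by
    rw [Nat.primeCounting, Nat.primeCounting', Nat.count_eq_card_filter_range]
  have hR' : ∀ p ∈ R, p.Prime ∧ p ≤ x / 2 := fun p hp =>
    ⟨(mem_filter.1 hp).2, Nat.lt_succ_iff.1 (mem_range.1 (mem_filter.1 hp).1)⟩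
  rw [hcount, sq, ← card_product]
  rw [card_eq_sum_card_fiberwise (f := fun y : ℕ × ℕ => y.1 + y.2)
    (t := {N ∈ Ioc 0 x | (primePairs N).Nonempty})]
  · refine sum_le_sum fun N _ => card_le_card_of_injOn Prod.fst ?_ ?_
    · intro y hy
      simp only [coe_filter, mem_product, Set.mem_ofPred_eq] at hy
      obtain ⟨⟨h1, h2⟩, rfl⟩ := hy
      exact mem_primePairs_add (hR' _ h1).1 (hR' _ h2).1
    · intro y hy z hz h
      simp only [coe_filter, mem_product, Set.mem_ofPred_eq] at hy hz
      exact Prod.ext h (by omega)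
  · intro y hy
    simp only [coe_product, Set.mem_prod, mem_coe] at hy
    obtain ⟨h1, h1'⟩ := hR' _ hy.1
    obtain ⟨h2, h2'⟩ := hR' _ hy.2
    simp only [coe_filter, mem_Ioc, Set.mem_ofPred_eq]
    exact ⟨⟨by have := h1.pos; omega, by omega⟩, _, mem_primePairs_add h1 h2⟩

theorem exists_density_prime_add_prime :
    ∃ c : ℝ, 0 < c ∧ ∀ᶠ x : ℕ in Filter.atTop,
      c * x ≤ #{N ∈ Ioc 0 x | (primePairs N).Nonempty} := by
  obtain ⟨C, hC, hmoment⟩ := exists_sum_totientRatio_le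
  refine ⟨1 / (663552 ^ 2 * C * 2), by positivity, ?_⟩
  filter_upwards [eventually_primeCounting_half_ge, Filter.eventually_ge_atTop (2 ^ 24)]
    with x hpi hx
  set B := {N ∈ Ioc 0 x | (primePairs N).Nonempty} with hB
  have hx1 : (1 : ℝ) < x := by
    have : 1 < x := lt_of_lt_of_le (by norm_num) hx
    exact_mod_cast this
  have hLx : 0 < Real.log x := Real.log_pos hx1
  have hsq : (Nat.primeCounting (x / 2) : ℝ) ^ 2 ≤ ∑ N ∈ B, (#(primePairs N) : ℝ) := by
    exact_mod_cast primeCounting_sq_le x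
  have hlin : (x : ℝ) ≤ 663552 * ∑ N ∈ B, totientRatio (2 * N) ^ 2 := by
    have h1 : ((x : ℝ) / (6 * Real.log x)) ^ 2 ≤
        18432 * x / Real.log x ^ 2 * ∑ N ∈ B, totientRatio (2 * N) ^ 2 := by
      refine (pow_le_pow_left₀ (by positivity) hpi 2).trans (hsq.trans ?_)
      rw [mul_sum]
      refine sum_le_sum fun N hN => ?_
      have := mem_Ioc.1 (mem_filter.1 hN).1
      exact card_primePairs_le_div_log hx this.1 this.2
    have h2 : (x : ℝ) * x / (36 * Real.log x ^ 2) ≤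
        x * (663552 * ∑ N ∈ B, totientRatio (2 * N) ^ 2) / (36 * Real.log x ^ 2) := by
      calc _ = ((x : ℝ) / (6 * Real.log x)) ^ 2 := by rw [div_pow]; ring
        _ ≤ _ := h1
        _ = _ := by field_simp; ring
    rw [div_le_div_iff_of_pos_right (by positivity)] at h2
    exact le_of_mul_le_mul_left h2 (by linarith)
  have hcs : (∑ N ∈ B, totientRatio (2 * N) ^ 2) ^ 2 ≤
      #B * ∑ N ∈ B, (totientRatio (2 * N) ^ 2) ^ 2 := sq_sum_le_card_mul_sum_sq
  have hmom : ∑ N ∈ B, (totientRatio (2 * N) ^ 2) ^ 2 ≤ C * (2 * x) := by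
    have h := hmoment (2 * x)
    push_cast at h
    refine le_trans ?_ h
    simp only [← pow_mul]
    rw [← sum_image (g := fun N => 2 * N) (f := fun M => totientRatio M ^ (2 * 2))
      (fun a _ b _ hab => Nat.eq_of_mul_eq_mul_left two_pos hab)]
    refine sum_le_sum_of_subset_of_nonneg ?_ fun M _ _ => by
      rw [pow_mul]; exact sq_nonneg _
    intro M hM
    obtain ⟨N, hN, rfl⟩ := mem_image.1 hM
    have := mem_Ioc.1 (mem_filter.1 hN).1
    exact mem_Ioc.2 (by omega)
  have hfinal : (x : ℝ) * x ≤ x * (663552 ^ 2 * C * 2 * #B) := by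
    calc (x : ℝ) * x = x ^ 2 := by ring
      _ ≤ (663552 * ∑ N ∈ B, totientRatio (2 * N) ^ 2) ^ 2 := by gcongr
      _ = 663552 ^ 2 * (∑ N ∈ B, totientRatio (2 * N) ^ 2) ^ 2 := by ring
      _ ≤ 663552 ^ 2 * (#B * (C * (2 * x))) := by
          gcongr
          exact hcs.trans (by gcongr)
      _ = _ := by ring
  rw [div_mul_eq_mul_div, one_mul, div_le_iff₀ (by positivity)]
  have := le_of_mul_le_mul_left hfinal (by linarith)
  linarith

/-! ### From density to a basis -/

/-- The set of all sums of two primes, with `0` and `1` adjoined. Adjoining `1` makes the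
Schnirelmann density positive as soon as the lower asymptotic density is. -/
def shnirelmanSet : Set ℕ := {N | N = 0 ∨ N = 1 ∨ (primePairs N).Nonempty}

open scoped Classical in
theorem schnirelmannDensity_shnirelmanSet_pos : 0 < schnirelmannDensity shnirelmanSet := by
  obtain ⟨c, hc, h⟩ := exists_density_prime_add_prime
  obtain ⟨x₀, hx₀⟩ := Filter.eventually_atTop.1 h
  have hpos : (0 : ℝ) < 1 / (x₀ + 1) := by positivity
  refine lt_of_lt_of_le (lt_min hc hpos) (le_schnirelmannDensity_iff.2 fun n hn => ?_)
  have hn' : (0 : ℝ) < n := by exact_mod_cast hn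
  rw [le_div_iff₀ hn']
  rcases le_or_gt x₀ n with hx | hx
  · calc min c (1 / ((x₀ : ℝ) + 1)) * n ≤ c * n := by gcongr; exact min_le_left _ _
      _ ≤ _ := hx₀ n hx
      _ ≤ _ := by
        gcongr with N
        exact fun h => Or.inr (Or.inr h)
  · have h1 : 1 ≤ #{a ∈ Ioc 0 n | a ∈ shnirelmanSet} :=
      card_pos.2 ⟨1, mem_filter.2 ⟨mem_Ioc.2 ⟨one_pos, hn⟩, Or.inr (Or.inl rfl)⟩⟩
    have h1' : (1 : ℝ) ≤ #{a ∈ Ioc 0 n | a ∈ shnirelmanSet} := by exact_mod_cast h1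
    refine le_trans ?_ h1'
    have hxn : (n : ℝ) ≤ x₀ + 1 := by exact_mod_cast (by omega : n ≤ x₀ + 1)
    calc min c (1 / ((x₀ : ℝ) + 1)) * n ≤ 1 / ((x₀ : ℝ) + 1) * (x₀ + 1) := by
          gcongr; exact min_le_right _ _
      _ = 1 := by field_simp

theorem exists_list_of_mem_nsmul {k t : ℕ} (ht : t ∈ k • shnirelmanSet) :
    ∃ (l : List ℕ) (i : ℕ), (∀ p ∈ l, p.Prime) ∧ l.length ≤ 2 * k ∧ i ≤ k ∧ t = l.sum + i := by
  induction k generalizing t with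
  | zero => exact ⟨[], 0, by simp, by simp, le_rfl, by simpa using ht⟩
  | succ k ih =>
    rw [succ_nsmul] at ht
    obtain ⟨a, ha, b, hb, rfl⟩ := Set.mem_add.1 ht
    obtain ⟨l, i, hl, hlen, hi, rfl⟩ := ih ha
    rcases hb with rfl | rfl | ⟨p, hp⟩
    · exact ⟨l, i, hl, by omega, by omega, rfl⟩
    · exact ⟨l, i + 1, hl, by omega, by omega, by omega⟩
    · simp only [primePairs, mem_filter, mem_range] at hp
      refine ⟨p :: (b - p) :: l, i, ?_, ?_, by omega, ?_⟩
      · simp only [List.mem_cons, forall_eq_or_imp]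
        exact ⟨hp.2.1, hp.2.2, hl⟩
      · simp only [List.length_cons]; omega
      · simp only [List.sum_cons]; omega

/-- There is a positive integer `s` such that every sufficiently large integer `n` can
be written as `p₁ + ⋯ + p_s + 2^(m₁²) + ⋯ + 2^(m_{2s}²)` with all `pᵢ` prime and
`mⱼ` natural numbers. -/
theorem exists_shnirelman_basis :
    ∃ s : ℕ, 0 < s ∧ ∃ N : ℕ, ∀ n : ℕ, N ≤ n →
      ∃ (p : Fin s → ℕ) (m : Fin (2 * s) → ℕ),
        (∀ i, (p i).Prime) ∧ n = (∑ i, p i) + ∑ j, 2 ^ (m j ^ 2) := by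
  obtain ⟨k, hk⟩ := exists_nsmul_eq_univ (A := shnirelmanSet) (Or.inl rfl)
    schnirelmannDensity_shnirelmanSet_pos
  -- The powers are all taken to be `2 ^ (1 ^ 2) = 2`, contributing `4 * s` in total; a further
  -- `14 * (k + 1)` is set aside, to be filled up by primes `2` and `3`.
  refine ⟨7 * (k + 1), by omega, 42 * (k + 1), fun n hn => ?_⟩
  obtain ⟨l, i, hl, hlen, hi, hsum⟩ := exists_list_of_mem_nsmul (k := k)
    (t := n - 42 * (k + 1)) (hk ▸ Set.mem_univ _)
  -- `j` primes are still missing; `u` of them are `3` and the others are `2`.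
  obtain ⟨j, hj⟩ : ∃ j, l.length + j = 7 * (k + 1) := ⟨7 * (k + 1) - l.length, by omega⟩
  obtain ⟨u, hu⟩ : ∃ u, 2 * j + u = 14 * (k + 1) + i := ⟨14 * (k + 1) + i - 2 * j, by omega⟩
  obtain ⟨v, hv⟩ : ∃ v, u + v = j := ⟨j - u, by omega⟩
  obtain ⟨L, hLp, hLlen, hLsum⟩ : ∃ L : List ℕ, (∀ p ∈ L, p.Prime) ∧
      L.length = 7 * (k + 1) ∧ L.sum = n - 28 * (k + 1) := by
    refine ⟨l ++ (List.replicate u 3 ++ List.replicate v 2), ?_, ?_, ?_⟩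
    · intro p hp
      simp only [List.mem_append, List.mem_replicate] at hp
      rcases hp with h | ⟨-, rfl⟩ | ⟨-, rfl⟩
      · exact hl p h
      · exact Nat.prime_three
      · exact Nat.prime_two
    · simp only [List.length_append, List.length_replicate]; omega
    · simp only [List.sum_append, List.sum_replicate, smul_eq_mul]; omega
  refine ⟨fun i => L.get (i.cast hLlen.symm), fun _ => 1, fun i => hLp _ (List.get_mem _ _), ?_⟩
  have hget : ∀ (s : ℕ) (h : L.length = s), ∑ i : Fin s, L.get (i.cast h.symm) = L.sum := by
    rintro _ rfl
    exact Fin.sum_univ_getElem L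
  rw [hget _ hLlen, hLsum]
  simp only [one_pow, pow_one, sum_const, card_univ, Fintype.card_fin, smul_eq_mul]
  omega
end

section
/- For every positive integer m and every integer a, the number of residue classes z modulo m satisfying the congruence z² ≡ a (mod m) is at most 4√m. -/
/-!
Write `N(m, a)` for the number of solutions. The Chinese remainder theorem makes `N(·, a)`
submultiplicative on coprime moduli (`card_sqSol_mul_le`), so it is enough to bound `N(p ^ k, a)`:
`N(p ^ k, a)² ≤ p ^ k` for primes `p ≥ 5`, and `N(p ^ k, a)² ≤ 4 p ^ k` for `p ∈ {2, 3}`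
(`card_sqSol_prime_pow`). Multiplying these gives `N(m, a)² ≤ 16 m`.

For prime powers, if `p ∤ a` then any two solutions `z, w` satisfy `p ^ k ∣ (z - w) (z + w)`, and
essentially all of `p ^ k` divides one of the two factors, so there are at most two solutions for
odd `p` and at most four for `p = 2`. If `p ∣ a` and `k ≥ 2`, every solution is `z = p y`, hence
`p² ∣ a`, and `y` solves the congruence for `a / p²` modulo `p ^ (k - 2)`; this gives
`N(p ^ k, a) ≤ p N(p ^ (k - 2), a / p²)`, and the bound follows by induction on `k`.
-/

/-- The solutions of `z² ≡ a (mod m)`, as representatives in `[0, m)`. -/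
def sqSol (m : ℕ) (a : ℤ) : Finset ℕ :=
  (Finset.range m).filter (fun z : ℕ => (m : ℤ) ∣ (z : ℤ) ^ 2 - a)

lemma mem_sqSol {m : ℕ} {a : ℤ} {z : ℕ} :
    z ∈ sqSol m a ↔ z < m ∧ (m : ℤ) ∣ (z : ℤ) ^ 2 - a := by
  simp [sqSol]

lemma mod_mem_sqSol {m : ℕ} (hm : 0 < m) {a : ℤ} {z : ℕ} (h : (m : ℤ) ∣ (z : ℤ) ^ 2 - a) :
    z % m ∈ sqSol m a := by
  refine mem_sqSol.2 ⟨Nat.mod_lt _ hm, ?_⟩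
  have h1 : ((z % m : ℕ) : ℤ) ≡ z [ZMOD m] := by
    push_cast
    exact Int.mod_modEq _ _
  have h2 := (h1.pow 2).symm.dvd
  have h3 := dvd_add h2 h
  rwa [sub_add_sub_cancel] at h3

/-- Submultiplicativity on coprime moduli: a solution modulo `m n` is determined by its
reductions modulo `m` and `n`. -/
lemma card_sqSol_mul_le {m n : ℕ} (hm : 0 < m) (hn : 0 < n) (h : m.Coprime n) (a : ℤ) :
    (sqSol (m * n) a).card ≤ (sqSol m a).card * (sqSol n a).card := by
  rw [← Finset.card_product]
  refine Finset.card_le_card_of_injOn (fun z => (z % m, z % n)) ?_ ?_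
  · intro z hz
    obtain ⟨-, hd⟩ := mem_sqSol.1 hz
    push_cast at hd
    exact Finset.mem_product.2 ⟨mod_mem_sqSol hm ((Dvd.intro _ rfl).trans hd),
      mod_mem_sqSol hn ((Dvd.intro_left _ rfl).trans hd)⟩
  · intro z hz w hw hzw
    simp only [Prod.mk.injEq] at hzw
    have := (Nat.modEq_and_modEq_iff_modEq_mul h).1 hzw
    exact Nat.ModEq.eq_of_lt_of_lt this (mem_sqSol.1 hz).1 (mem_sqSol.1 hw).1

/-- Descent when `p² ∣ a`: dividing a solution by `p` leaves `p` lifts of a solution modulo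
`p ^ k`. -/
lemma card_sqSol_descent {p : ℕ} (hp : p.Prime) (k : ℕ) (b : ℤ) :
    (sqSol (p ^ (k + 2)) (p ^ 2 * b)).card ≤ p * (sqSol (p ^ k) b).card := by
  have hq : 0 < p ^ k := pow_pos hp.pos k
  have hdiv : ∀ z ∈ sqSol (p ^ (k + 2)) (p ^ 2 * b), p ∣ z := by
    intro z hz
    obtain ⟨-, hd⟩ := mem_sqSol.1 hz
    have h1 : (p : ℤ) ∣ (z : ℤ) ^ 2 - p ^ 2 * b :=
      (by push_cast; exact dvd_pow_self _ (by omega) : (p : ℤ) ∣ ((p ^ (k + 2) : ℕ) : ℤ)).trans hd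
    have h2 : (p : ℤ) ∣ (z : ℤ) ^ 2 :=
      (dvd_sub_left (Dvd.dvd.mul_right (dvd_pow_self _ two_ne_zero) b)).1 h1
    exact hp.dvd_of_dvd_pow (n := 2) (by exact_mod_cast h2)
  suffices h : (sqSol (p ^ (k + 2)) (p ^ 2 * b)).card ≤
      (Finset.range p ×ˢ sqSol (p ^ k) b).card by
    rwa [Finset.card_product, Finset.card_range] at h
  refine Finset.card_le_card_of_injOn (fun z => ((z / p) / p ^ k, (z / p) % p ^ k)) ?_ ?_
  · intro z hz
    obtain ⟨y, rfl⟩ := hdiv z hz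
    obtain ⟨hlt, hd⟩ := mem_sqSol.1 hz
    simp only [Nat.mul_div_cancel_left y hp.pos]
    refine Finset.mem_product.2 ⟨?_, mod_mem_sqSol hq ?_⟩
    · simp only [Finset.mem_range]
      rw [Nat.div_lt_iff_lt_mul hq]
      refine lt_of_mul_lt_mul_left (a := p) ?_ (Nat.zero_le _)
      calc p * y < p ^ (k + 2) := hlt
        _ = p * (p * p ^ k) := by ring
    · have hp2 : (p : ℤ) ^ 2 ≠ 0 := pow_ne_zero _ (by exact_mod_cast hp.ne_zero)
      refine (mul_dvd_mul_iff_left hp2).1 ?_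
      have e : (p : ℤ) ^ 2 * ((p ^ k : ℕ) : ℤ) = ((p ^ (k + 2) : ℕ) : ℤ) := by
        push_cast
        ring
      have e' : (p : ℤ) ^ 2 * ((y : ℤ) ^ 2 - b) = ((p * y : ℕ) : ℤ) ^ 2 - p ^ 2 * b := by
        push_cast
        ring
      rw [e, e']
      exact hd
  · intro z hz w hw hzw
    obtain ⟨y, rfl⟩ := hdiv z hz
    obtain ⟨x, rfl⟩ := hdiv w hw
    simp only [Nat.mul_div_cancel_left _ hp.pos, Prod.mk.injEq] at hzw
    rw [← Nat.div_add_mod y (p ^ k), ← Nat.div_add_mod x (p ^ k), hzw.1, hzw.2]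

lemma not_dvd_of_mem_sqSol {p k : ℕ} {a : ℤ} (hk : k ≠ 0) (ha : ¬ (p : ℤ) ∣ a)
    {z : ℕ} (hz : z ∈ sqSol (p ^ k) a) : ¬ (p : ℤ) ∣ z := by
  intro h
  obtain ⟨-, hd⟩ := mem_sqSol.1 hz
  have h1 : (p : ℤ) ∣ (z : ℤ) ^ 2 - a :=
    (by push_cast; exact dvd_pow_self _ hk : (p : ℤ) ∣ ((p ^ k : ℕ) : ℤ)).trans hd
  exact ha ((dvd_sub_right (dvd_pow h two_ne_zero)).1 h1)

lemma dvd_mul_of_mem_sqSol {m : ℕ} {a : ℤ} {z w : ℕ} (hz : z ∈ sqSol m a) (hw : w ∈ sqSol m a) :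
    (m : ℤ) ∣ ((z : ℤ) - w) * (z + w) := by
  have := dvd_sub (mem_sqSol.1 hz).2 (mem_sqSol.1 hw).2
  rwa [show (z : ℤ) ^ 2 - a - ((w : ℤ) ^ 2 - a) = (z - w) * (z + w) by ring] at this

/-- For odd `p ∤ a`, the only solutions are `± w`. -/
lemma card_sqSol_odd {p k : ℕ} (hp : p.Prime) (h2 : p ≠ 2) (hk : k ≠ 0) {a : ℤ}
    (ha : ¬ (p : ℤ) ∣ a) : (sqSol (p ^ k) a).card ≤ 2 := by
  rcases (sqSol (p ^ k) a).eq_empty_or_nonempty with h0 | ⟨w, hw⟩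
  · simp [h0]
  refine (Finset.card_le_card (t := {w, p ^ k - w}) ?_).trans Finset.card_le_two
  intro z hz
  have hwp := not_dvd_of_mem_sqSol hk ha hw
  have hpi : Prime (p : ℤ) := Nat.prime_iff_prime_int.1 hp
  have hmul := dvd_mul_of_mem_sqSol hz hw
  have hzl := (mem_sqSol.1 hz).1
  have hwl := (mem_sqSol.1 hw).1
  have hw0 : w ≠ 0 := by
    rintro rfl
    simp at hwp
  rw [Finset.mem_insert, Finset.mem_singleton]
  by_cases hs : (p : ℤ) ∣ z + w
  · -- `p` cannot also divide `z - w`, since it does not divide `2 w`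
    have hd : ¬ (p : ℤ) ∣ z - w := by
      intro hd
      have h3 : (p : ℤ) ∣ 2 * w := by
        have h := dvd_sub hs hd
        rwa [show (z : ℤ) + w - (z - w) = 2 * w by ring] at h
      rcases hpi.dvd_or_dvd h3 with h | h
      · exact h2 ((Nat.prime_dvd_prime_iff_eq hp Nat.prime_two).1 (by exact_mod_cast h))
      · exact hwp h
    have hc : IsCoprime ((p ^ k : ℕ) : ℤ) (z - w) := by
      push_cast
      exact ((hpi.coprime_iff_not_dvd).2 hd).pow_left
    have h4 := hc.dvd_of_dvd_mul_left hmul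
    obtain ⟨c, hc⟩ : p ^ k ∣ z + w := by exact_mod_cast h4
    have : c = 1 := by
      have h5 : c < 2 := by
        by_contra hcon
        have : p ^ k * 2 ≤ p ^ k * c := Nat.mul_le_mul_left _ (by omega)
        omega
      have h6 : c ≠ 0 := by
        rintro rfl
        omega
      omega
    subst this
    right
    omega
  · have hc : IsCoprime ((p ^ k : ℕ) : ℤ) (z + w) := by
      push_cast
      exact ((hpi.coprime_iff_not_dvd).2 hs).pow_left
    have h4 := hc.dvd_of_dvd_mul_right hmul
    left
    exact (Nat.ModEq.eq_of_lt_of_lt ((Nat.modEq_iff_dvd).2 h4) hwl hzl).symm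

/-- For odd `a`, every solution modulo `2 ^ (k + 1)` is congruent to `± w` modulo `2 ^ k`. -/
lemma card_sqSol_two {k : ℕ} {a : ℤ} (ha : ¬ (2 : ℤ) ∣ a) :
    (sqSol (2 ^ (k + 1)) a).card ≤ 4 := by
  rcases (sqSol (2 ^ (k + 1)) a).eq_empty_or_nonempty with h0 | ⟨w, hw⟩
  · simp [h0]
  set q : ℤ := 2 ^ k with hq
  have hq0 : 0 < q := by positivity
  have hsub : (sqSol (2 ^ (k + 1)) a).image (fun z : ℕ => (z : ℤ)) ⊆
      {(w : ℤ) % q, (w : ℤ) % q + q, (-(w : ℤ)) % q, (-(w : ℤ)) % q + q} := by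
    intro z' hz'
    obtain ⟨z, hz, rfl⟩ := Finset.mem_image.1 hz'
    have hwp : ¬ (2 : ℤ) ∣ w := not_dvd_of_mem_sqSol (p := 2) (Nat.succ_ne_zero k) ha hw
    have hzp : ¬ (2 : ℤ) ∣ z := not_dvd_of_mem_sqSol (p := 2) (Nat.succ_ne_zero k) ha hz
    have hmul := dvd_mul_of_mem_sqSol hz hw
    have hpi : Prime (2 : ℤ) := Int.prime_two
    have hcast : ((2 ^ (k + 1) : ℕ) : ℤ) = 2 * q := by
      push_cast
      rw [hq]
      ring
    have hzl : (z : ℤ) < 2 * q := by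
      rw [← hcast]
      exact_mod_cast (mem_sqSol.1 hz).1
    rw [hcast] at hmul
    -- `z - w` and `z + w` are even and exactly one of them is divisible by `4`
    have key : q ∣ z - w ∨ q ∣ z + w := by
      by_cases h4 : (4 : ℤ) ∣ z - w
      · left
        obtain ⟨c, hc⟩ : (2 : ℤ) ∣ z + w := by omega
        have hco : ¬ (2 : ℤ) ∣ c := by omega
        rw [hc, show ((z : ℤ) - w) * (2 * c) = 2 * ((z - w) * c) by ring] at hmul
        have := (mul_dvd_mul_iff_left (two_ne_zero)).1 hmul
        exact (((hpi.coprime_iff_not_dvd).2 hco).pow_left).dvd_of_dvd_mul_right this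
      · right
        obtain ⟨c, hc⟩ : (2 : ℤ) ∣ z - w := by omega
        have hco : ¬ (2 : ℤ) ∣ c := by omega
        rw [hc, mul_assoc] at hmul
        have := (mul_dvd_mul_iff_left (two_ne_zero)).1 hmul
        exact (((hpi.coprime_iff_not_dvd).2 hco).pow_left).dvd_of_dvd_mul_left this
    have hz01 : (z : ℤ) = z % q ∨ (z : ℤ) = z % q + q := by
      rcases lt_or_ge (z : ℤ) q with h | h
      · left
        exact (Int.emod_eq_of_lt (by positivity) h).symm
      · right
        have : ((z : ℤ) - q) % q = z - q := Int.emod_eq_of_lt (by linarith) (by linarith)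
        rw [Int.sub_emod_right] at this
        linarith
    simp only [Finset.mem_insert, Finset.mem_singleton]
    rcases key with h | h
    · have : (z : ℤ) % q = w % q := Int.emod_eq_emod_iff_emod_sub_eq_zero.2
        (Int.emod_eq_zero_of_dvd h)
      rw [this] at hz01
      tauto
    · have : (z : ℤ) % q = (-w) % q := Int.emod_eq_emod_iff_emod_sub_eq_zero.2
        (Int.emod_eq_zero_of_dvd (by simpa using h))
      rw [this] at hz01
      tauto
  rw [← Finset.card_image_of_injective _ (Nat.cast_injective (R := ℤ))]
  exact (Finset.card_le_card hsub).trans Finset.card_le_four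

lemma card_sqSol_le (m : ℕ) (a : ℤ) : (sqSol m a).card ≤ m := by
  simpa [sqSol] using Finset.card_filter_le (Finset.range m) _

/-- When `p ∣ a`, the only possible solution modulo `p` is `0`. -/
lemma card_sqSol_prime_of_dvd {p : ℕ} (hp : p.Prime) {a : ℤ} (ha : (p : ℤ) ∣ a) :
    (sqSol p a).card ≤ 1 := by
  refine Finset.card_le_one_iff_subset_singleton.2 ⟨0, fun z hz => ?_⟩
  obtain ⟨hl, hd⟩ := mem_sqSol.1 hz
  have h2 : (p : ℤ) ∣ (z : ℤ) ^ 2 := (dvd_sub_left ha).1 hd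
  have : p ∣ z := hp.dvd_of_dvd_pow (n := 2) (by exact_mod_cast h2)
  simpa using Nat.eq_zero_of_dvd_of_lt this hl

/-- The unit case `p ∤ a` of the bound at prime powers. -/
lemma card_sqSol_unit {p : ℕ} (hp : p.Prime) {k : ℕ} (hk : k ≠ 0) {a : ℤ} (ha : ¬ (p : ℤ) ∣ a) :
    (sqSol (p ^ k) a).card ^ 2 ≤ (if p < 5 then 4 else 1) * p ^ k := by
  by_cases h2 : p = 2
  · subst h2
    obtain ⟨j, rfl⟩ := Nat.exists_eq_succ_of_ne_zero hk
    simp only [show (2 : ℕ) < 5 by norm_num, if_true]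
    rcases j with _ | j
    · have := card_sqSol_le (2 ^ (0 + 1)) a
      simp only [Nat.succ_eq_add_one, zero_add, pow_one] at this ⊢
      nlinarith
    · have h := card_sqSol_two (k := j + 1) ha
      have h1 : 1 ≤ 2 ^ j := Nat.one_le_two_pow
      calc (sqSol (2 ^ (j + 1 + 1)) a).card ^ 2 ≤ 4 ^ 2 := Nat.pow_le_pow_left h 2
        _ ≤ 4 * 2 ^ (j + 1 + 1) := by
          rw [pow_succ, pow_succ]
          omega
  · have h := card_sqSol_odd hp h2 hk ha
    have h1 : p ≤ p ^ k := Nat.le_self_pow hk p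
    have h3 := hp.pos
    refine (Nat.pow_le_pow_left h 2).trans ?_
    split_ifs <;> omega

lemma card_sqSol_prime_pow {p : ℕ} (hp : p.Prime) (k : ℕ) (a : ℤ) :
    (sqSol (p ^ k) a).card ^ 2 ≤ (if p < 5 then 4 else 1) * p ^ k := by
  have hC : 1 ≤ (if p < 5 then 4 else 1 : ℕ) := by split_ifs <;> norm_num
  induction k using Nat.strong_induction_on generalizing a with
  | _ k ih =>
    rcases k with _ | k
    · have := card_sqSol_le (p ^ 0) a
      simp only [pow_zero] at this ⊢
      nlinarith
    by_cases ha : (p : ℤ) ∣ a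
    · rcases k with _ | k
      · have := card_sqSol_prime_of_dvd hp ha
        have hp1 := hp.pos
        simp only [zero_add, pow_one]
        calc (sqSol p a).card ^ 2 ≤ 1 ^ 2 := Nat.pow_le_pow_left this 2
          _ = 1 * 1 := by norm_num
          _ ≤ _ := Nat.mul_le_mul hC hp1
      · rcases (sqSol (p ^ (k + 2)) a).eq_empty_or_nonempty with h0 | ⟨w, hw⟩
        · simp [h0]
        have hw2 := (mem_sqSol.1 hw).2
        have hpow : (p : ℤ) ^ 2 ∣ ((p ^ (k + 2) : ℕ) : ℤ) := by
          push_cast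
          exact pow_dvd_pow _ (by omega)
        have hpw : (p : ℤ) ∣ w := by
          have h1 : (p : ℤ) ∣ (w : ℤ) ^ 2 - a :=
            ((dvd_pow_self _ two_ne_zero).trans hpow).trans hw2
          exact (Nat.prime_iff_prime_int.1 hp).dvd_of_dvd_pow ((dvd_sub_left ha).1 h1)
        obtain ⟨b, rfl⟩ : (p : ℤ) ^ 2 ∣ a :=
          (dvd_sub_right (pow_dvd_pow_of_dvd hpw 2)).1 (hpow.trans hw2)
        calc (sqSol (p ^ (k + 2)) (p ^ 2 * b)).card ^ 2
            ≤ (p * (sqSol (p ^ k) b).card) ^ 2 :=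
              Nat.pow_le_pow_left (card_sqSol_descent hp k b) 2
          _ = p ^ 2 * (sqSol (p ^ k) b).card ^ 2 := by ring
          _ ≤ p ^ 2 * ((if p < 5 then 4 else 1) * p ^ k) :=
              Nat.mul_le_mul_left _ (ih k (by omega) b)
          _ = _ := by ring
    · exact card_sqSol_unit hp (Nat.succ_ne_zero k) ha

/-- The global bound, with one factor `4` for each of the primes `2` and `3` dividing `m`. -/
lemma card_sqSol_sq_le (m : ℕ) (hm : 0 < m) (a : ℤ) :
    (sqSol m a).card ^ 2 ≤
      (if 2 ∣ m then 4 else 1) * (if 3 ∣ m then 4 else 1) * m := by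
  induction m using Nat.recOnPosPrimePosCoprime with
  | zero => omega
  | one => simpa using card_sqSol_le 1 a
  | prime_pow p n hp hn =>
    refine (card_sqSol_prime_pow hp n a).trans (Nat.mul_le_mul_right _ ?_)
    by_cases h5 : p < 5
    · have h2 := hp.two_le
      interval_cases p
      · simp only [dvd_pow_self 2 hn.ne']
        split_ifs <;> norm_num
      · simp only [dvd_pow_self 3 hn.ne']
        split_ifs <;> norm_num
      · exact absurd hp (by norm_num)
    · simp only [h5, if_false]
      split_ifs <;> norm_num
  | coprime x y hx hy hxy ihx ihy =>
    have hx0 : 0 < x := by omega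
    have hy0 : 0 < y := by omega
    have hfac : ∀ q : ℕ, q.Prime → (if q ∣ x then 4 else 1 : ℕ) * (if q ∣ y then 4 else 1) =
        if q ∣ x * y then 4 else 1 := by
      intro q hq
      have hnot : ¬ (q ∣ x ∧ q ∣ y) := fun h => Nat.not_coprime_of_dvd_of_dvd hq.one_lt h.1 h.2 hxy
      simp only [hq.dvd_mul]
      by_cases h1 : q ∣ x <;> by_cases h2 : q ∣ y <;> simp_all
    rw [← hfac 2 Nat.prime_two, ← hfac 3 Nat.prime_three]
    calc (sqSol (x * y) a).card ^ 2
        ≤ ((sqSol x a).card * (sqSol y a).card) ^ 2 :=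
          Nat.pow_le_pow_left (card_sqSol_mul_le hx0 hy0 hxy a) 2
      _ = (sqSol x a).card ^ 2 * (sqSol y a).card ^ 2 := by ring
      _ ≤ _ := Nat.mul_le_mul (ihx hx0) (ihy hy0)
      _ = _ := by ring

/-- For every positive integer `m` and every integer `a`, the number of residues
`z` modulo `m` with `z² ≡ a (mod m)` is at most `4√m`. -/
theorem sq_congruence_solutions_le (m : ℕ) (hm : 0 < m) (a : ℤ) :
    (((Finset.range m).filter (fun z : ℕ => (m : ℤ) ∣ (z : ℤ) ^ 2 - a)).card : ℝ) ≤
      4 * Real.sqrt m := by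
  have h : (sqSol m a).card ^ 2 ≤ 16 * m := by
    refine (card_sqSol_sq_le m hm a).trans (Nat.mul_le_mul_right _ ?_)
    split_ifs <;> norm_num
  change ((sqSol m a).card : ℝ) ≤ _
  have h' : ((sqSol m a).card : ℝ) ^ 2 ≤ 16 * m := by exact_mod_cast h
  refine abs_le_of_sq_le_sq' ?_ (by positivity) |>.2
  rw [mul_pow, Real.sq_sqrt (Nat.cast_nonneg m)]
  linarith
end

section
/- There is an absolute constant C such that the following holds: for all integers m and a and every real number y with 2 ≤ y ≤ m, the number N(y, m; a) of integers z with 1 ≤ z ≤ y satisfying z² ≡ a (mod m) is at most C·y^(2/3). -/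
/-!
Let `S` be the set of solutions in `[1, Y]` with `Y ≤ m`, and let `H` be a gap threshold. Call a
solution isolated if no `z + h` with `1 ≤ h ≤ H` is a solution. Isolated solutions are more than `H`
apart, so there are at most `Y / (H + 1) + 1` of them (`card_isolated_le`).

If `z` and `z + h` are both solutions, then `m` divides `(z + h)² - z² = h (2 z + h)`. The second
factor is at most `2 Y ≤ 2 m`, so the quotient `h (2 z + h) / m` lies in `[0, 2 h]`; as it determines
`z`, each `h` accounts for at most `2 h + 1` solutions (`card_pair_le`). Summing over `h ≤ H` gives
`|S| ≤ Y / (H + 1) + 1 + 3 H²`, and `H = ⌈y^(1/3)⌉` balances the two terms.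
-/

/-- The solutions `z ∈ [1, Y]` of `z² ≡ a (mod m)`. -/
def solSet (m : ℕ) (a : ℤ) (Y : ℕ) : Finset ℕ :=
  (Finset.Icc 1 Y).filter (fun z : ℕ => (m : ℤ) ∣ (z : ℤ) ^ 2 - a)

lemma card_isolated_le (S : Finset ℕ) (Y H : ℕ) (hS : ∀ z ∈ S, z ≤ Y) :
    (S.filter (fun z => ∀ h ∈ Finset.Icc 1 H, z + h ∉ S)).card ≤ Y / (H + 1) + 1 := by
  rw [← Finset.card_range (Y / (H + 1) + 1)]
  -- Each block of `H + 1` consecutive integers contains at most one isolated solution.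
  apply Finset.card_le_card_of_injOn (fun z => z / (H + 1))
  · intro z hz
    simp only [Finset.coe_filter, Set.mem_ofPred_eq] at hz
    simp only [Finset.coe_range, Set.mem_Iio]
    exact Nat.lt_succ_of_le (Nat.div_le_div_right (hS z hz.1))
  · have key : ∀ u v : ℕ, (∀ h ∈ Finset.Icc 1 H, u + h ∉ S) → v ∈ S →
        u / (H + 1) = v / (H + 1) → v ≤ u := by
      intro u v hu hv huv
      by_contra! hlt
      have h1 := Nat.div_add_mod u (H + 1)
      have h2 := Nat.div_add_mod v (H + 1)
      have h3 : v % (H + 1) < H + 1 := Nat.mod_lt v (Nat.succ_pos H)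
      rw [huv] at h1
      refine hu (v - u) (Finset.mem_Icc.2 ⟨by omega, by omega⟩) ?_
      rwa [Nat.add_sub_cancel' hlt.le]
    intro u hu v hv huv
    simp only [Finset.coe_filter, Set.mem_ofPred_eq] at hu hv
    exact le_antisymm (key v u hv.2 hu.1 huv.symm) (key u v hu.2 hv.1 huv)

lemma card_pair_le (m : ℕ) (a : ℤ) (Y h : ℕ) (hY : Y ≤ m) (hh : 0 < h) :
    ((solSet m a Y).filter (fun z => z + h ∈ solSet m a Y)).card ≤ 2 * h + 1 := by
  have hdvd : ∀ z ∈ (solSet m a Y).filter (fun z => z + h ∈ solSet m a Y),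
      m ∣ h * (2 * z + h) ∧ z + h ≤ Y := by
    intro z hz
    simp only [solSet, Finset.mem_filter, Finset.mem_Icc] at hz
    refine ⟨?_, hz.2.1.2⟩
    have := dvd_sub hz.2.2 hz.1.2
    have e : ((z + h : ℕ) : ℤ) ^ 2 - a - ((z : ℤ) ^ 2 - a) = ((h * (2 * z + h) : ℕ) : ℤ) := by
      push_cast
      ring
    rw [e] at this
    exact_mod_cast this
  rw [← Finset.card_range (2 * h + 1)]
  apply Finset.card_le_card_of_injOn (fun z => h * (2 * z + h) / m)
  · intro z hz
    obtain ⟨-, h2⟩ := hdvd z hz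
    simp only [Finset.coe_range, Set.mem_Iio]
    apply Nat.lt_succ_of_le
    apply Nat.div_le_of_le_mul
    calc h * (2 * z + h) ≤ h * (2 * m) := Nat.mul_le_mul_left _ (by omega)
      _ = m * (2 * h) := by ring
  · intro u hu v hv huv
    have e := (Nat.div_left_inj (hdvd u hu).1 (hdvd v hv).1).1 huv
    have := Nat.eq_of_mul_eq_mul_left hh e
    omega

lemma card_solSet_le (m : ℕ) (a : ℤ) (Y H : ℕ) (hY : Y ≤ m) :
    (solSet m a Y).card ≤ Y / (H + 1) + 1 + 3 * H ^ 2 := by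
  classical
  set S := solSet m a Y with hSdef
  have hcover : S ⊆ S.filter (fun z => ∀ h ∈ Finset.Icc 1 H, z + h ∉ S) ∪
      (Finset.Icc 1 H).biUnion (fun h => S.filter (fun z => z + h ∈ S)) := by
    intro z hz
    simp only [Finset.mem_union, Finset.mem_filter, Finset.mem_biUnion]
    by_cases hc : ∀ h ∈ Finset.Icc 1 H, z + h ∉ S
    · exact Or.inl ⟨hz, hc⟩
    · push Not at hc
      obtain ⟨h, h1, h2⟩ := hc
      exact Or.inr ⟨h, h1, hz, h2⟩
  have hclose : ((Finset.Icc 1 H).biUnion (fun h => S.filter (fun z => z + h ∈ S))).card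
      ≤ H * (3 * H) := by
    have := Finset.card_biUnion_le_card_mul (Finset.Icc 1 H)
      (fun h => S.filter (fun z => z + h ∈ S)) (3 * H) (by
        intro h hh
        rw [Finset.mem_Icc] at hh
        exact (card_pair_le m a Y h hY hh.1).trans (by omega))
    simpa using this
  have hiso := card_isolated_le S Y H (by
    intro z hz
    simp only [hSdef, solSet, Finset.mem_filter, Finset.mem_Icc] at hz
    exact hz.1.2)
  calc S.card ≤ _ := Finset.card_le_card hcover
    _ ≤ _ := Finset.card_union_le _ _
    _ ≤ Y / (H + 1) + 1 + H * (3 * H) := add_le_add hiso hclose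
    _ = Y / (H + 1) + 1 + 3 * H ^ 2 := by ring

/-- There is an absolute constant `C` such that for every modulus `m`, every integer `a`
and every real `2 ≤ y ≤ m`, the number of integers `1 ≤ z ≤ y` with `z² ≡ a (mod m)` is
at most `C·y^(2/3)`. -/
theorem sq_congruence_short_interval :
    ∃ C : ℝ, ∀ (m : ℕ) (a : ℤ) (y : ℝ), 2 ≤ y → y ≤ m →
      (((Finset.Icc 1 ⌊y⌋₊).filter (fun z : ℕ => (m : ℤ) ∣ (z : ℤ) ^ 2 - a)).card : ℝ) ≤
        C * y ^ ((2 : ℝ) / 3) := by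
  refine ⟨14, fun m a y hy hym => ?_⟩
  have hy0 : 0 ≤ y := by linarith
  have hY : ⌊y⌋₊ ≤ m := Nat.floor_le_of_le hym
  set x : ℝ := y ^ ((1 : ℝ) / 3) with hx
  have hx1 : 1 ≤ x := Real.one_le_rpow (by linarith) (by norm_num)
  have hx3 : x ^ 3 = y := by
    rw [hx, ← Real.rpow_natCast, ← Real.rpow_mul hy0]
    norm_num
  have hx2 : y ^ ((2 : ℝ) / 3) = x ^ 2 := by
    rw [hx, ← Real.rpow_natCast, ← Real.rpow_mul hy0]
    norm_num
  have hmain := card_solSet_le m a ⌊y⌋₊ ⌈x⌉₊ hY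
  have hHlo : x ≤ (⌈x⌉₊ : ℝ) := Nat.le_ceil x
  have hHhi : (⌈x⌉₊ : ℝ) ≤ 2 * x := by
    have := Nat.ceil_lt_add_one (show 0 ≤ x by linarith)
    linarith
  have hdiv : ((⌊y⌋₊ / (⌈x⌉₊ + 1) : ℕ) : ℝ) ≤ x ^ 2 := by
    refine Nat.cast_div_le.trans ?_
    push_cast
    rw [div_le_iff₀ (by positivity)]
    have h1 := Nat.floor_le hy0
    nlinarith [mul_le_mul_of_nonneg_left hHlo (sq_nonneg x), sq_nonneg x]
  have hcast : ((solSet m a ⌊y⌋₊).card : ℝ) ≤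
      ((⌊y⌋₊ / (⌈x⌉₊ + 1) : ℕ) : ℝ) + 1 + 3 * (⌈x⌉₊ : ℝ) ^ 2 := by
    exact_mod_cast hmain
  have hsq : (⌈x⌉₊ : ℝ) ^ 2 ≤ (2 * x) ^ 2 := pow_le_pow_left₀ (by positivity) hHhi 2
  rw [hx2]
  change ((solSet m a ⌊y⌋₊).card : ℝ) ≤ _
  nlinarith
end
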